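/- (Extrapolation: I_α controlled by M_α in mixed weak norm) Let 0<α<mn and q = n/(mn−α). Let u_1,…,u_m and v be weights on ℝ^n with u⃗^{mq} = (u_1^{mq},…,u_m^{mq}) ∈ A_{(1,…,1)} and v^q ∈ A_∞, and write ν = ∏_{i=1}^m u_i^q. Then there exists a constant C such that for all f_1,…,f_m bounded with compact support, ‖I_α(f⃗)/v‖_{L^{q,∞}(ν v^q)} ≤ C ‖M_α(f⃗)/v‖_{L^{q,∞}(ν v^q)}. -/

import Mathlib

open MeasureTheory ENNReal Set

noncomputable section

/-- Euclidean space `ℝ^n`. -/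
abbrev ESp (n : ℕ) := EuclideanSpace ℝ (Fin n)

/-- An axis-parallel cube with positive finite side length. -/
def IsCube {n : ℕ} (Q : Set (ESp n)) : Prop :=
  ∃ (c : Fin n → ℝ) (h : ℝ), 0 < h ∧ Q = {x : ESp n | ∀ i, c i ≤ x i ∧ x i ≤ c i + h}

/-- The measure `w(E) = ∫_E w` associated to a weight `w`. -/
def wMeas {n : ℕ} (w : ESp n → ℝ) (E : Set (ESp n)) : ℝ≥0∞ :=
  ∫⁻ x in E, ENNReal.ofReal (w x)

/-- A weight: a nonnegative locally integrable function, positive (and finite) a.e. -/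
def IsWeight {n : ℕ} (w : ESp n → ℝ) : Prop :=
  Measurable w ∧ (∀ x, 0 ≤ w x) ∧ (∀ᵐ x ∂(volume : Measure (ESp n)), 0 < w x) ∧
    ∀ Q : Set (ESp n), IsCube Q → wMeas w Q < ⊤

/-- `C` is an admissible `A₁` constant for `w`. -/
def A1Const {n : ℕ} (w : ESp n → ℝ) (C : ℝ≥0∞) : Prop :=
  ∀ Q : Set (ESp n), IsCube Q →
    (volume Q)⁻¹ * wMeas w Q ≤ C * essInf (fun x => ENNReal.ofReal (w x)) (volume.restrict Q)

/-- The Muckenhoupt class `A₁`. -/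
def IsA1 {n : ℕ} (w : ESp n → ℝ) : Prop := ∃ C : ℝ≥0∞, C < ⊤ ∧ A1Const w C

/-- The Muckenhoupt class `A_p`, `1 < p < ∞`. -/
def IsAp {n : ℕ} (w : ESp n → ℝ) (p : ℝ) : Prop :=
  ∃ C : ℝ≥0∞, C < ⊤ ∧ ∀ Q : Set (ESp n), IsCube Q →
    ((volume Q)⁻¹ * wMeas w Q) *
      ((volume Q)⁻¹ * ∫⁻ x in Q, ENNReal.ofReal (w x) ^ (1 - p / (p - 1))) ^ (p - 1) ≤ C

/-- The class `A_∞ = ⋃_{p ≥ 1} A_p`. -/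
def IsAinfty {n : ℕ} (w : ESp n → ℝ) : Prop :=
  IsA1 w ∨ ∃ p : ℝ, 1 < p ∧ IsAp w p

/-- The Hardy–Littlewood maximal function (over cubes). -/
def maxFn {n : ℕ} (f : ESp n → ℝ) (x : ESp n) : ℝ≥0∞ :=
  ⨆ (Q : Set (ESp n)) (_ : IsCube Q) (_ : x ∈ Q),
    (volume Q)⁻¹ * ∫⁻ y in Q, ENNReal.ofReal |f y|

/-- The Fujii–Wilson `A_∞` constant. -/
def FW {n : ℕ} (w : ESp n → ℝ) : ℝ≥0∞ :=
  ⨆ (Q : Set (ESp n)) (_ : IsCube Q),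
    (wMeas w Q)⁻¹ * ∫⁻ x in Q, maxFn (Q.indicator w) x

/-- The weighted weak `L^{q,∞}(w)` quasinorm of `g`. -/
def wnorm {n : ℕ} (g : ESp n → ℝ≥0∞) (q : ℝ) (w : ESp n → ℝ) : ℝ≥0∞ :=
  ⨆ (t : ℝ) (_ : 0 < t), ENNReal.ofReal t * (wMeas w {x | ENNReal.ofReal t < g x}) ^ (1 / q)

/-- The weighted `L¹(w)` norm. -/
def L1norm {n : ℕ} (f : ESp n → ℝ) (w : ESp n → ℝ) : ℝ≥0∞ :=
  ∫⁻ x, ENNReal.ofReal (|f x| * w x)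

/-- The fractional maximal operator `M_α`. -/
def fracM {n : ℕ} (α : ℝ) (f : ESp n → ℝ) (x : ESp n) : ℝ≥0∞ :=
  ⨆ (Q : Set (ESp n)) (_ : IsCube Q) (_ : x ∈ Q),
    ((volume Q) ^ (1 - α / (n : ℝ)))⁻¹ * ∫⁻ y in Q, ENNReal.ofReal |f y|

/-- The fractional integral (Riesz potential) `I_α`. -/
def fracI {n : ℕ} (α : ℝ) (f : ESp n → ℝ) (x : ESp n) : ℝ :=
  ∫ y, f y / dist x y ^ ((n : ℝ) - α)

/-- The multi(sub)linear maximal function `𝓜`. -/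
def multiM {n m : ℕ} (f : Fin m → ESp n → ℝ) (x : ESp n) : ℝ≥0∞ :=
  ⨆ (Q : Set (ESp n)) (_ : IsCube Q) (_ : x ∈ Q),
    ∏ i, (volume Q)⁻¹ * ∫⁻ y in Q, ENNReal.ofReal |f i y|

/-- The multi(sub)linear fractional maximal operator `𝓜_α`. -/
def multiMα {n m : ℕ} (α : ℝ) (f : Fin m → ESp n → ℝ) (x : ESp n) : ℝ≥0∞ :=
  ⨆ (Q : Set (ESp n)) (_ : IsCube Q) (_ : x ∈ Q),
    ∏ i, ((volume Q) ^ (1 - α / ((m : ℝ) * (n : ℝ))))⁻¹ * ∫⁻ y in Q, ENNReal.ofReal |f i y|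

/-- The multilinear fractional integral `𝓘_α`. -/
def multiIα {n m : ℕ} (α : ℝ) (f : Fin m → ESp n → ℝ) (x : ESp n) : ℝ :=
  ∫ y : Fin m → ESp n, (∏ i, f i (y i)) / (∑ i, dist x (y i)) ^ ((m : ℝ) * (n : ℝ) - α)

/-- The multilinear class `A_{(1,…,1)}`. -/
def A11 {n m : ℕ} (w : Fin m → ESp n → ℝ) : Prop :=
  ∃ C : ℝ≥0∞, C < ⊤ ∧ ∀ Q : Set (ESp n), IsCube Q →
    ((volume Q)⁻¹ * ∫⁻ x in Q, ENNReal.ofReal (∏ i, w i x ^ ((m : ℝ)⁻¹))) ^ (m : ℝ) *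
      ∏ i, (essInf (fun x => ENNReal.ofReal (w i x)) (volume.restrict Q))⁻¹ ≤ C

/-!
Cutting the kernel of `𝓘_α` according to the dyadic scale of `∑ᵢ |x - yᵢ|` bounds `𝓘_α(f⃗)` by a sum
`∑_I a_I 1_I` over dyadic cubes, whereas `sup_I a_I 1_I` is at most a multiple of `𝓜_α(f⃗)`.
In an average sense, the part of the sum carried by the subcubes of `I` is no larger than `a_I`;
hence a good-`λ` inequality bounds `∫ (∑_I a_I 1_I)^p W` by `∫ (sup_I a_I 1_I)^p W` for every
dyadic `A_∞` weight `W`.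

To pass to the weak norm, write `V = v^q` and let `E` be a level set of the sum. By a reverse Hölder
inequality, some power `u` of the maximal function of a power of `1_E ν` satisfies
`ν 1_E ≤ u ≤ C ν` and `∫ u^P ν^{1-P} V ≤ C ∫_E ν V`, with `P > 1`, while `u V^{1-δ}` is a dyadic
`A_∞` weight for small `1 - δ > 0`. Applied with `W = u V^{1-δ}` and `p = qδ`, the good-`λ` bound
controls `ν V(E)` by `∫ ((sup_I a_I 1_I)^q / V)^δ u V`, and Kolmogorov's inequality bounds this
integral by the weak norm of `sup_I a_I 1_I`.
-/

/-! ### Dyadic cubes -/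

/-- An index for the dyadic cube `∏ᵢ [2ʲ kᵢ, 2ʲ (kᵢ + 1))` of `ℝⁿ`, where `j` is the scale and `k`
the index.  Cubes are manipulated through their indices, so that sums and suprema over dyadic cubes
run over a countable type. -/
@[ext]
structure DyadicCube (n : ℕ) where
  /-- The exponent `j` of the side length `2ʲ`. -/
  scale : ℤ
  /-- The position `k` of the cube in the grid of its scale. -/
  index : Fin n → ℤ

namespace DyadicCube

variable {n : ℕ} {I J : DyadicCube n} {x : Fin n → ℝ}

instance : Countable (DyadicCube n) :=
  Function.Injective.countable (f := fun I : DyadicCube n ↦ (I.scale, I.index)) fun _ _ h ↦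
    DyadicCube.ext (congrArg Prod.fst h) (congrArg Prod.snd h)

/-- The half-open cube with the given index, as a set of points. -/
def toSet (I : DyadicCube n) : Set (Fin n → ℝ) :=
  {x | ∀ i, ⌊x i / (2 : ℝ) ^ I.scale⌋ = I.index i}

/-- The dyadic cube of scale `j` that contains `x`. -/
@[simps]
def containing (j : ℤ) (x : Fin n → ℝ) : DyadicCube n where
  scale := j
  index i := ⌊x i / (2 : ℝ) ^ j⌋

lemma mem_containing (j : ℤ) (x : Fin n → ℝ) : x ∈ (containing j x).toSet := fun _ ↦ rfl

lemma mem_toSet_iff : x ∈ I.toSet ↔ containing I.scale x = I :=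
  ⟨fun h ↦ DyadicCube.ext rfl (funext h), fun h ↦ h ▸ mem_containing _ _⟩

lemma floor_div_two_zpow (a : ℝ) {j k : ℤ} (hjk : j ≤ k) :
    ⌊a / (2 : ℝ) ^ k⌋ = ⌊a / (2 : ℝ) ^ j⌋ / (2 ^ (k - j).toNat : ℕ) := by
  have hpow : (2 : ℝ) ^ k = 2 ^ j * 2 ^ (k - j).toNat := by
    rw [← zpow_natCast, Int.toNat_of_nonneg (by omega), ← zpow_add₀ two_ne_zero]
    congr 1
    ring
  rw [← Int.floor_div_natCast, hpow, ← div_div]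
  norm_cast

lemma eq_of_inter_nonempty (h : (I.toSet ∩ J.toSet).Nonempty) (hIJ : I.scale = J.scale) :
    I = J := by
  obtain ⟨x, hxI, hxJ⟩ := h
  rw [← mem_toSet_iff.1 hxI, ← mem_toSet_iff.1 hxJ, hIJ]

lemma toSet_eq_pi (I : DyadicCube n) :
    I.toSet = Set.pi univ fun i ↦
      Ico (I.index i * 2 ^ I.scale : ℝ) (I.index i * 2 ^ I.scale + 2 ^ I.scale) := by
  have hpos : (0 : ℝ) < 2 ^ I.scale := by positivity
  ext x
  simp only [toSet, mem_ofPred_eq, Set.mem_pi, mem_univ, true_implies, mem_Ico, Int.floor_eq_iff,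
    le_div_iff₀ hpos, div_lt_iff₀ hpos, add_one_mul]

lemma measurableSet_toSet (I : DyadicCube n) : MeasurableSet I.toSet := by
  rw [toSet_eq_pi]
  exact MeasurableSet.univ_pi fun _ ↦ measurableSet_Ico

lemma toSet_nonempty (I : DyadicCube n) : I.toSet.Nonempty := by
  rw [toSet_eq_pi, univ_pi_nonempty_iff]
  exact fun i ↦ nonempty_Ico.2 (lt_add_of_pos_right _ (by positivity))

/-- Cubes are ordered by inclusion; the condition on the scales only matters in dimension `0`. -/
instance : PartialOrder (DyadicCube n) where
  le I J := I.scale ≤ J.scale ∧ I.toSet ⊆ J.toSet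
  le_refl _ := ⟨le_rfl, Subset.rfl⟩
  le_trans _ _ _ hIJ hJK := ⟨hIJ.1.trans hJK.1, hIJ.2.trans hJK.2⟩
  le_antisymm I _ hIJ hJI := by
    obtain ⟨x, hx⟩ := I.toSet_nonempty
    exact eq_of_inter_nonempty ⟨x, hx, hIJ.2 hx⟩ (hIJ.1.antisymm hJI.1)

lemma le_of_inter_nonempty (h : (I.toSet ∩ J.toSet).Nonempty) (hIJ : I.scale ≤ J.scale) :
    I ≤ J := by
  obtain ⟨x, hxI, hxJ⟩ := h
  refine ⟨hIJ, fun y hy i ↦ ?_⟩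
  rw [← hxJ i, floor_div_two_zpow (y i) hIJ, floor_div_two_zpow (x i) hIJ, hy i, hxI i]

lemma toSet_ae_eq_Icc (I : DyadicCube n) :
    I.toSet =ᵐ[volume] Icc (fun i ↦ (I.index i * 2 ^ I.scale : ℝ))
      (fun i ↦ I.index i * 2 ^ I.scale + 2 ^ I.scale) := by
  rw [toSet_eq_pi]
  exact Measure.univ_pi_Ico_ae_eq_Icc

lemma toSet_subset_Icc (I : DyadicCube n) :
    I.toSet ⊆ Icc (fun i ↦ (I.index i * 2 ^ I.scale : ℝ))
      (fun i ↦ I.index i * 2 ^ I.scale + 2 ^ I.scale) := by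
  rw [toSet_eq_pi, ← pi_univ_Icc]
  exact pi_mono fun _ _ ↦ Ico_subset_Icc_self

/-- The centre of a dyadic cube. In the sup norm of `Fin n → ℝ`, the closed cube is the closed
ball around it. -/
def center (I : DyadicCube n) : Fin n → ℝ :=
  fun i ↦ I.index i * 2 ^ I.scale + 2 ^ I.scale / 2

lemma Icc_eq_closedBall (I : DyadicCube n) :
    Icc (fun i ↦ (I.index i * 2 ^ I.scale : ℝ)) (fun i ↦ I.index i * 2 ^ I.scale + 2 ^ I.scale) =
      Metric.closedBall I.center (2 ^ I.scale / 2) := by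
  ext x
  rw [Metric.mem_closedBall, dist_pi_le_iff (by positivity)]
  simp only [mem_Icc, Pi.le_def, Real.dist_eq, abs_le, ← forall_and, center]
  refine forall_congr' fun i ↦ and_congr ?_ ?_ <;> constructor <;> intro h <;> linarith

lemma toSet_ae_eq_closedBall (I : DyadicCube n) :
    I.toSet =ᵐ[volume] Metric.closedBall I.center (2 ^ I.scale / 2) :=
  I.Icc_eq_closedBall ▸ I.toSet_ae_eq_Icc

lemma toSet_subset_closedBall (I : DyadicCube n) :
    I.toSet ⊆ Metric.closedBall I.center (2 ^ I.scale / 2) :=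
  I.Icc_eq_closedBall ▸ I.toSet_subset_Icc

lemma ofReal_two_zpow (j : ℤ) : ENNReal.ofReal ((2 : ℝ) ^ j) = 2 ^ j := by
  rw [← Real.rpow_intCast, ← ENNReal.ofReal_rpow_of_pos two_pos, ENNReal.rpow_intCast]
  simp

lemma two_zpow_ne_top (k : ℤ) : (2 : ℝ≥0∞) ^ k ≠ ⊤ :=
  (ENNReal.zpow_lt_top two_ne_zero ofNat_ne_top k).ne

lemma two_zpow_ne_zero (k : ℤ) : (2 : ℝ≥0∞) ^ k ≠ 0 :=
  (ENNReal.zpow_pos two_ne_zero ofNat_ne_top k).ne'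

lemma volume_toSet (I : DyadicCube n) : volume I.toSet = ((2 : ℝ≥0∞) ^ I.scale) ^ n := by
  rw [measure_congr I.toSet_ae_eq_Icc, Real.volume_Icc_pi]
  simp [ofReal_two_zpow]

lemma volume_toSet_ne_zero (I : DyadicCube n) : volume I.toSet ≠ 0 := by
  rw [volume_toSet]
  exact pow_ne_zero _ (two_zpow_ne_zero _)

lemma volume_toSet_ne_top (I : DyadicCube n) : volume I.toSet ≠ ⊤ := by
  rw [volume_toSet]
  exact ENNReal.pow_ne_top (two_zpow_ne_top _)

/-- The uniform probability measure on a dyadic cube. -/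
def unif (I : DyadicCube n) : Measure (Fin n → ℝ) :=
  (volume I.toSet)⁻¹ • volume.restrict I.toSet

/-- The average of `f` over a dyadic cube. -/
abbrev avg (I : DyadicCube n) (f : (Fin n → ℝ) → ℝ≥0∞) : ℝ≥0∞ := ∫⁻ x, f x ∂I.unif

instance : IsProbabilityMeasure I.unif where
  measure_univ := by
    simp [unif, ENNReal.inv_mul_cancel I.volume_toSet_ne_zero I.volume_toSet_ne_top]

lemma avg_eq (I : DyadicCube n) (f : (Fin n → ℝ) → ℝ≥0∞) :
    I.avg f = (volume I.toSet)⁻¹ * ∫⁻ x in I.toSet, f x := by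
  rw [avg, unif, lintegral_smul_measure, smul_eq_mul]

lemma volume_mul_avg (I : DyadicCube n) (f : (Fin n → ℝ) → ℝ≥0∞) :
    volume I.toSet * I.avg f = ∫⁻ x in I.toSet, f x := by
  rw [avg_eq, ← mul_assoc, ENNReal.mul_inv_cancel I.volume_toSet_ne_zero I.volume_toSet_ne_top,
    one_mul]

lemma ae_unif_iff {p : (Fin n → ℝ) → Prop} :
    (∀ᵐ x ∂I.unif, p x) ↔ ∀ᵐ x ∂volume.restrict I.toSet, p x := by
  rw [unif, Measure.ae_ennreal_smul_measure_iff (ENNReal.inv_ne_zero.2 I.volume_toSet_ne_top)]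

lemma ae_mem_unif (I : DyadicCube n) : ∀ᵐ x ∂I.unif, x ∈ I.toSet :=
  ae_unif_iff.2 (ae_restrict_mem I.measurableSet_toSet)

lemma unif_absolutelyContinuous (I : DyadicCube n) : I.unif ≪ volume :=
  Measure.smul_absolutelyContinuous.trans Measure.restrict_le_self.absolutelyContinuous

/-! ### Covering by maximal cubes -/

variable {G : Set (DyadicCube n)} {B : ℤ}

lemma exists_maximal_mem (hB : ∀ I ∈ G, I.scale ≤ B) (hI : I ∈ G) (hx : x ∈ I.toSet) :
    ∃ J, Maximal (· ∈ G) J ∧ x ∈ J.toSet := by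
  obtain ⟨j, hj, hmax⟩ := Int.exists_greatest_of_bdd (P := fun j ↦ containing j x ∈ G)
    ⟨B, fun j hj ↦ hB _ hj⟩ ⟨I.scale, by rwa [mem_toSet_iff.1 hx]⟩
  refine ⟨containing j x, ⟨hj, fun J hJ hle ↦ ?_⟩, mem_containing j x⟩
  have hxJ : x ∈ J.toSet := hle.2 (mem_containing j x)
  exact le_of_inter_nonempty ⟨x, hxJ, mem_containing j x⟩
    (hmax J.scale (by rwa [mem_toSet_iff.1 hxJ]))

lemma pairwiseDisjoint_maximal : {I | Maximal (· ∈ G) I}.PairwiseDisjoint toSet := by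
  intro I hI J hJ hne
  by_contra hmeet
  rw [Function.onFun, Set.not_disjoint_iff_nonempty_inter] at hmeet
  rcases le_total I.scale J.scale with hle | hle
  · exact hne (hI.eq_of_le hJ.1 (le_of_inter_nonempty hmeet hle))
  · exact hne (hJ.eq_of_le hI.1 (le_of_inter_nonempty (inter_comm _ _ ▸ hmeet) hle)).symm

lemma biUnion_maximal (hB : ∀ I ∈ G, I.scale ≤ B) :
    ⋃ I ∈ {I | Maximal (· ∈ G) I}, I.toSet = ⋃ I ∈ G, I.toSet := by
  refine (biUnion_subset_biUnion_left fun I hI ↦ hI.1).antisymm fun x hx ↦ ?_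
  simp only [mem_iUnion, exists_prop] at hx ⊢
  obtain ⟨I, hI, hx⟩ := hx
  exact exists_maximal_mem hB hI hx

lemma measure_biUnion_le_of_maximal (hB : ∀ I ∈ G, I.scale ≤ B) {σ τ : Measure (Fin n → ℝ)}
    (h : ∀ I, Maximal (· ∈ G) I → σ I.toSet ≤ τ I.toSet) :
    σ (⋃ I ∈ G, I.toSet) ≤ τ (⋃ I ∈ G, I.toSet) := by
  have hsum (μ : Measure (Fin n → ℝ)) : μ (⋃ I ∈ G, I.toSet) =
      ∑' I : {I | Maximal (· ∈ G) I}, μ (I : DyadicCube n).toSet := by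
    rw [← biUnion_maximal hB, measure_biUnion (to_countable _) pairwiseDisjoint_maximal
      fun I _ ↦ I.measurableSet_toSet]
  rw [hsum σ, hsum τ]
  exact ENNReal.tsum_le_tsum fun I ↦ h I I.2

end DyadicCube

open DyadicCube

/-! ### A discrete layer-cake formula -/

/-- The constant `(1 - 2⁻ᵖ)⁻¹ = ∑ₖ 2⁻ᵏᵖ`, the sum of the geometric series of ratio `2⁻ᵖ`. -/
def geomConst (p : ℝ) : ℝ≥0∞ := (1 - (2 : ℝ≥0∞) ^ (-p))⁻¹

lemma geomConst_lt_top {p : ℝ} (hp : 0 < p) : geomConst p < ⊤ := by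
  rw [geomConst, ENNReal.inv_lt_top, tsub_pos_iff_lt]
  exact ENNReal.rpow_lt_one_of_one_lt_of_neg one_lt_two (neg_lt_zero.2 hp)

lemma geomConst_ne_zero (p : ℝ) : geomConst p ≠ 0 := by
  simp [geomConst, ENNReal.sub_eq_top_iff]

lemma tsum_ite_le_two_zpow_rpow (p : ℝ) (K : ℤ) :
    ∑' k : ℤ, (if k ≤ K then ((2 : ℝ≥0∞) ^ k) ^ p else 0) = geomConst p * (2 ^ K) ^ p := by
  have hinj : Function.Injective fun j : ℕ ↦ K - (j : ℤ) := fun a b h ↦ by simpa using h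
  have hsupp : Function.support (fun k : ℤ ↦ if k ≤ K then ((2 : ℝ≥0∞) ^ k) ^ p else 0) ⊆
      range fun j : ℕ ↦ K - (j : ℤ) := by
    intro k hk
    have hkK : k ≤ K := by
      by_contra hkK
      simp [hkK] at hk
    exact ⟨(K - k).toNat, by simp only; omega⟩
  have hterm (j : ℕ) : (if K - (j : ℤ) ≤ K then ((2 : ℝ≥0∞) ^ (K - (j : ℤ))) ^ p else 0) =
      ((2 : ℝ≥0∞) ^ (-p)) ^ j * (2 ^ K) ^ p := by
    rw [if_pos (by omega), ← ENNReal.rpow_natCast]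
    simp only [← ENNReal.rpow_intCast, ← ENNReal.rpow_mul]
    rw [← ENNReal.rpow_add _ _ two_ne_zero ofNat_ne_top]
    congr 1
    push_cast
    ring
  rw [← hinj.tsum_eq hsupp, tsum_congr hterm, ENNReal.tsum_mul_right, ENNReal.tsum_geometric,
    geomConst]

lemma tsum_le_geomConst_add {t : ℤ → ℝ≥0∞} {a b : ℝ} {B : ℝ≥0∞}
    (hneg : ∀ k ≤ 0, t k ≤ B * (2 ^ k) ^ a) (hpos : ∀ k, 0 ≤ k → t k ≤ B * (2 ^ k) ^ (-b)) :
    ∑' k, t k ≤ B * (geomConst a + geomConst b) := by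
  have hsplit (k : ℤ) : t k ≤ B * ((if k ≤ 0 then ((2 : ℝ≥0∞) ^ k) ^ a else 0) +
      if -k ≤ 0 then ((2 : ℝ≥0∞) ^ (-k)) ^ b else 0) := by
    rcases le_total k 0 with hk | hk
    · rw [if_pos hk]
      exact (hneg k hk).trans (by gcongr; exact le_self_add)
    · rw [if_pos (neg_nonpos.2 hk)]
      refine (hpos k hk).trans (mul_le_mul_right (le_add_left (le_of_eq ?_)) B)
      rw [ENNReal.rpow_neg, ← ENNReal.inv_rpow, ENNReal.zpow_neg]
  have hreflect : ∑' k : ℤ, (if -k ≤ 0 then ((2 : ℝ≥0∞) ^ (-k)) ^ b else 0) =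
      ∑' k : ℤ, if k ≤ 0 then ((2 : ℝ≥0∞) ^ k) ^ b else 0 :=
    (Equiv.neg ℤ).tsum_eq fun k : ℤ ↦ if k ≤ 0 then ((2 : ℝ≥0∞) ^ k) ^ b else 0
  calc ∑' k, t k ≤ ∑' k : ℤ, B * ((if k ≤ 0 then ((2 : ℝ≥0∞) ^ k) ^ a else 0) +
        if -k ≤ 0 then ((2 : ℝ≥0∞) ^ (-k)) ^ b else 0) := ENNReal.tsum_le_tsum hsplit
    _ = B * (geomConst a + geomConst b) := by
      rw [ENNReal.tsum_mul_left, ENNReal.tsum_add, hreflect]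
      simp only [tsum_ite_le_two_zpow_rpow]
      simp

/-- The discretisation `∑ₖ 2ᵏᵖ 1[2ᵏ < x]` of `xᵖ`. -/
def layerSum (p : ℝ) (x : ℝ≥0∞) : ℝ≥0∞ :=
  ∑' k : ℤ, if (2 : ℝ≥0∞) ^ k < x then ((2 : ℝ≥0∞) ^ k) ^ p else 0

lemma measurable_layerSum (p : ℝ) : Measurable (layerSum p) :=
  Measurable.tsum fun _ ↦ Measurable.ite measurableSet_Ioi measurable_const measurable_const

lemma layerSum_top {p : ℝ} (hp : 0 ≤ p) : layerSum p ⊤ = ⊤ := by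
  rw [eq_top_iff]
  calc (⊤ : ℝ≥0∞) = ∑' k : ℕ, 1 := by simp
    _ ≤ ∑' k : ℕ, (fun k : ℤ ↦ if (2 : ℝ≥0∞) ^ k < ⊤ then ((2 : ℝ≥0∞) ^ k) ^ p else 0) k := by
      refine ENNReal.tsum_le_tsum fun k ↦ ?_
      beta_reduce
      rw [if_pos (two_zpow_ne_top k).lt_top, zpow_natCast]
      exact (ENNReal.one_rpow p).symm.le.trans
        (ENNReal.rpow_le_rpow (one_le_pow₀ one_le_two) hp)
    _ ≤ layerSum p ⊤ := ENNReal.tsum_comp_le_tsum_of_injective Nat.cast_injective _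

lemma rpow_le_layerSum {p : ℝ} (hp : 0 < p) (x : ℝ≥0∞) : x ^ p ≤ 2 ^ p * layerSum p x := by
  rcases eq_or_ne x 0 with rfl | hx0
  · simp [hp]
  rcases eq_or_ne x ⊤ with rfl | hxt
  · simp [layerSum_top hp.le]
  obtain ⟨k, hkx, hxk⟩ := ENNReal.exists_mem_Ioc_zpow hx0 hxt one_lt_two ofNat_ne_top
  calc x ^ p ≤ (2 ^ (k + 1)) ^ p := by gcongr
    _ = 2 ^ p * (2 ^ k) ^ p := by
      rw [← ENNReal.mul_rpow_of_nonneg _ _ hp.le, ENNReal.zpow_add two_ne_zero ofNat_ne_top,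
        zpow_one, mul_comm]
    _ ≤ 2 ^ p * layerSum p x := by
      gcongr
      simpa [layerSum, hkx] using ENNReal.le_tsum
        (f := fun k : ℤ ↦ if (2 : ℝ≥0∞) ^ k < x then ((2 : ℝ≥0∞) ^ k) ^ p else 0) k

lemma layerSum_le_rpow {p : ℝ} (hp : 0 < p) (x : ℝ≥0∞) : layerSum p x ≤ geomConst p * x ^ p := by
  rcases eq_or_ne x 0 with rfl | hx0
  · simp [layerSum]
  rcases eq_or_ne x ⊤ with rfl | hxt
  · simp [ENNReal.top_rpow_of_pos hp, ENNReal.mul_top (geomConst_ne_zero p)]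
  obtain ⟨k, hkx, hxk⟩ := ENNReal.exists_mem_Ioc_zpow hx0 hxt one_lt_two ofNat_ne_top
  have hle (j : ℤ) (hj : (2 : ℝ≥0∞) ^ j < x) : j ≤ k := by
    by_contra! hkj
    exact (hj.trans_le hxk).not_ge (ENNReal.zpow_le_of_le one_le_two hkj)
  calc layerSum p x ≤ ∑' j : ℤ, (if j ≤ k then ((2 : ℝ≥0∞) ^ j) ^ p else 0) := by
        refine ENNReal.tsum_le_tsum fun j ↦ ?_
        by_cases hj : (2 : ℝ≥0∞) ^ j < x <;> simp [hj, hle j]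
    _ = geomConst p * (2 ^ k) ^ p := tsum_ite_le_two_zpow_rpow p k
    _ ≤ geomConst p * x ^ p := by gcongr

lemma layerSum_mul_rpow_le {p r : ℝ} (hp : 0 ≤ p) (hpr : p < r) (x : ℝ≥0∞) :
    layerSum (r - p) x * x ^ p ≤ geomConst (r - p) * x ^ r :=
  calc layerSum (r - p) x * x ^ p ≤ geomConst (r - p) * x ^ (r - p) * x ^ p :=
        mul_le_mul_left (layerSum_le_rpow (sub_pos.2 hpr) x) _
    _ = geomConst (r - p) * x ^ r := by
        rw [mul_assoc, ← ENNReal.rpow_add_of_nonneg _ _ (sub_pos.2 hpr).le hp, sub_add_cancel]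

section LayerCake

variable {X : Type*} [MeasurableSpace X] (μ : Measure X) {g : X → ℝ≥0∞} {p : ℝ}

lemma lintegral_layerSum (p : ℝ) (hg : Measurable g) :
    ∫⁻ x, layerSum p (g x) ∂μ = ∑' k : ℤ, ((2 : ℝ≥0∞) ^ k) ^ p * μ {x | 2 ^ k < g x} := by
  have hlevel (k : ℤ) : MeasurableSet {x | (2 : ℝ≥0∞) ^ k < g x} :=
    measurableSet_lt measurable_const hg
  simp only [layerSum]
  rw [lintegral_tsum fun k ↦
    (Measurable.ite (hlevel k) measurable_const measurable_const).aemeasurable]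
  refine tsum_congr fun k ↦ ?_
  rw [← lintegral_indicator_const (hlevel k)]
  simp only [indicator_apply, mem_ofPred_eq]

lemma lintegral_rpow_le_tsum (hp : 0 < p) (hg : Measurable g) :
    ∫⁻ x, g x ^ p ∂μ ≤ 2 ^ p * ∑' k : ℤ, ((2 : ℝ≥0∞) ^ k) ^ p * μ {x | 2 ^ k < g x} := by
  have hlayer : Measurable fun x ↦ layerSum p (g x) := (measurable_layerSum p).comp hg
  rw [← lintegral_layerSum μ p hg, ← lintegral_const_mul _ hlayer]
  exact lintegral_mono fun x ↦ rpow_le_layerSum hp _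

lemma tsum_le_lintegral_rpow (hp : 0 < p) (hg : Measurable g) :
    ∑' k : ℤ, ((2 : ℝ≥0∞) ^ k) ^ p * μ {x | 2 ^ k < g x} ≤ geomConst p * ∫⁻ x, g x ^ p ∂μ := by
  rw [← lintegral_layerSum μ p hg, ← lintegral_const_mul _ (hg.pow_const p)]
  exact lintegral_mono fun x ↦ layerSum_le_rpow hp _

end LayerCake

/-! ### Dyadic maximal functions -/

section DyadicMaximal

variable {n : ℕ} {S : Set (DyadicCube n)} {a : DyadicCube n → ℝ≥0∞} {x : Fin n → ℝ} {l : ℝ≥0∞}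

/-- The maximal function `sup_{I ∈ S} a_I 1_I` of a family of coefficients attached to cubes. For
`a_I` the average of `f` over `I` it is a dyadic Hardy–Littlewood maximal function of `f`. -/
def dyadicSup (S : Set (DyadicCube n)) (a : DyadicCube n → ℝ≥0∞) (x : Fin n → ℝ) : ℝ≥0∞ :=
  ⨆ I ∈ S, I.toSet.indicator (fun _ ↦ a I) x

lemma measurable_dyadicSup (S : Set (DyadicCube n)) (a : DyadicCube n → ℝ≥0∞) :
    Measurable (dyadicSup S a) :=
  Measurable.biSup S (to_countable S) fun I _ ↦ measurable_const.indicator I.measurableSet_toSet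

lemma le_dyadicSup {I : DyadicCube n} (hI : I ∈ S) (hx : x ∈ I.toSet) : a I ≤ dyadicSup S a x :=
  le_iSup₂_of_le I hI (indicator_of_mem hx (fun _ ↦ a I)).ge

lemma lt_dyadicSup_iff : l < dyadicSup S a x ↔ ∃ I ∈ S, l < a I ∧ x ∈ I.toSet := by
  simp only [dyadicSup, lt_iSup_iff, exists_prop]
  refine exists_congr fun I ↦ and_congr_right fun _ ↦ ?_
  by_cases hx : x ∈ I.toSet <;> simp [hx]

lemma dyadicSup_le (h : ∀ I ∈ S, x ∈ I.toSet → a I ≤ l) : dyadicSup S a x ≤ l := by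
  by_contra! hlt
  obtain ⟨I, hI, hl, hx⟩ := lt_dyadicSup_iff.1 hlt
  exact hl.not_ge (h I hI hx)

lemma setOf_lt_dyadicSup :
    {x | l < dyadicSup S a x} = ⋃ I ∈ {I | I ∈ S ∧ l < a I}, I.toSet := by
  ext x
  simp [lt_dyadicSup_iff, and_assoc]

lemma measure_lt_dyadicSup_le {B : ℤ} (hB : ∀ I ∈ S, I.scale ≤ B)
    {σ τ : Measure (Fin n → ℝ)}
    (h : ∀ I, Maximal (fun J ↦ J ∈ S ∧ l < a J) I → σ I.toSet ≤ τ I.toSet) :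
    σ {x | l < dyadicSup S a x} ≤ τ {x | l < dyadicSup S a x} := by
  rw [setOf_lt_dyadicSup]
  exact measure_biUnion_le_of_maximal (fun I hI ↦ hB I hI.1) h

lemma ae_tendsto_avg_containing {f : (Fin n → ℝ) → ℝ≥0∞} (hf : AEMeasurable f)
    (hfin : ∫⁻ x, f x ≠ ⊤) :
    ∀ᵐ x, Filter.Tendsto (fun j : ℕ ↦ ((containing (-j) x).avg f).toReal) Filter.atTop
      (nhds (f x).toReal) := by
  have hloc : LocallyIntegrable fun x ↦ (f x).toReal :=
    (integrable_toReal_of_lintegral_ne_top hf hfin).locallyIntegrable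
  have hlim : Filter.Tendsto (fun j : ℕ ↦ (2 : ℝ) ^ (-(j : ℤ)) / 2) Filter.atTop
      (nhdsWithin 0 (Ioi 0)) := by
    refine tendsto_nhdsWithin_iff.2 ⟨?_, .of_forall fun j ↦ by simp only [mem_Ioi]; positivity⟩
    simpa using (tendsto_pow_atTop_nhds_zero_of_lt_one (r := (2 : ℝ)⁻¹)
      (by norm_num) (by norm_num)).div_const 2
  filter_upwards [IsUnifLocDoublingMeasure.ae_tendsto_average volume hloc 1] with x hx
  refine (hx (fun j : ℕ ↦ (containing (-j) x).center) _ hlim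
    (.of_forall fun j ↦ ?_)).congr fun j ↦ ?_
  · rw [one_mul]
    exact (containing (-j) x).toSet_subset_closedBall (mem_containing _ x)
  · have hball := (containing (-j) x).toSet_ae_eq_closedBall
    rw [containing_scale] at hball
    have hfin' : ∀ᵐ y ∂volume.restrict (containing (-j) x).toSet, f y < ⊤ :=
      ae_restrict_of_ae (ae_lt_top' hf hfin)
    rw [setAverage_congr hball.symm, setAverage_eq, integral_toReal hf.restrict hfin', avg_eq,
      ENNReal.toReal_mul, ENNReal.toReal_inv, measureReal_def, smul_eq_mul]

lemma ae_le_dyadicSup_avg {f : (Fin n → ℝ) → ℝ≥0∞} (hf : Measurable f) (I : DyadicCube n) :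
    ∀ᵐ x ∂volume.restrict I.toSet, f x ≤ dyadicSup (Iic I) (fun J ↦ J.avg f) x := by
  by_cases hfin : ∫⁻ x in I.toSet, f x = ⊤
  · filter_upwards [ae_restrict_mem I.measurableSet_toSet] with x hx
    have htop : I.avg f = ⊤ := by
      rw [avg_eq, hfin, ENNReal.mul_top (ENNReal.inv_ne_zero.2 I.volume_toSet_ne_top)]
    exact le_top.trans (htop.ge.trans (le_dyadicSup self_mem_Iic hx))
  have hfin' : ∫⁻ x, I.toSet.indicator f x ≠ ⊤ := by
    rwa [lintegral_indicator I.measurableSet_toSet]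
  have hind := hf.indicator I.measurableSet_toSet
  filter_upwards [ae_restrict_mem I.measurableSet_toSet,
    ae_restrict_of_ae (ae_tendsto_avg_containing hind.aemeasurable hfin'),
    ae_restrict_of_ae (ae_lt_top hind hfin')] with x hxI hlim hx
  rw [indicator_of_mem hxI] at hlim hx
  by_cases htop : dyadicSup (Iic I) (fun J ↦ J.avg f) x = ⊤
  · exact htop ▸ le_top
  refine (ENNReal.toReal_le_toReal hx.ne htop).1 (le_of_tendsto hlim ?_)
  filter_upwards [Filter.eventually_ge_atTop (-I.scale).toNat] with j hj
  have hle : containing (-j) x ≤ I :=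
    le_of_inter_nonempty ⟨x, mem_containing _ x, hxI⟩ (by simp only [containing_scale]; omega)
  refine ENNReal.toReal_mono htop (le_trans ?_ (le_dyadicSup hle (mem_containing _ x)))
  exact lintegral_mono (indicator_le_self _ _)

end DyadicMaximal

/-! ### Reverse Hölder inequality for dyadic `A₁` weights -/

section ReverseHolder

variable {n : ℕ} {f : (Fin n → ℝ) → ℝ≥0∞} {C l : ℝ≥0∞} {I J : DyadicCube n}

/-- The dyadic `A₁` condition with constant `C`. -/
def DyadicA1 (f : (Fin n → ℝ) → ℝ≥0∞) (C : ℝ≥0∞) : Prop :=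
  ∀ I : DyadicCube n, ∀ᵐ x ∂volume.restrict I.toSet, I.avg f ≤ C * f x

lemma withDensity_toSet (f : (Fin n → ℝ) → ℝ≥0∞) (I : DyadicCube n) :
    volume.withDensity f I.toSet = volume I.toSet * I.avg f := by
  rw [withDensity_apply _ I.measurableSet_toSet, volume_mul_avg]

lemma avg_le_two_pow_mul_of_maximal (hI : I.avg f ≤ l)
    (hJ : Maximal (fun J ↦ J ∈ Iic I ∧ l < J.avg f) J) : J.avg f ≤ 2 ^ n * l := by
  obtain ⟨x, hx⟩ := J.toSet_nonempty
  have hJI : J.scale < I.scale := by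
    refine hJ.1.1.1.lt_of_ne fun h ↦ hJ.1.2.not_ge ?_
    rwa [eq_of_inter_nonempty ⟨x, hx, hJ.1.1.2 hx⟩ h]
  set P := containing (J.scale + 1) x with hP
  have hxP : x ∈ P.toSet := mem_containing _ x
  have hJP : J ≤ P := le_of_inter_nonempty ⟨x, hx, hxP⟩ (by simp [hP])
  have hPl : P.avg f ≤ l := by
    by_contra! hlt
    have hPI : P ≤ I := le_of_inter_nonempty ⟨x, hxP, hJ.1.1.2 hx⟩ (by simpa [hP] using hJI)
    have hPJ : P.scale ≤ J.scale := (hJ.2 ⟨hPI, hlt⟩ hJP).1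
    simp [hP] at hPJ
  have hvol : volume P.toSet = 2 ^ n * volume J.toSet := by
    rw [volume_toSet, volume_toSet, ← mul_pow, hP, containing_scale,
      ENNReal.zpow_add two_ne_zero ofNat_ne_top, zpow_one, mul_comm]
  rw [← ENNReal.mul_le_mul_iff_right J.volume_toSet_ne_zero J.volume_toSet_ne_top]
  calc volume J.toSet * J.avg f = ∫⁻ x in J.toSet, f x := volume_mul_avg J f
    _ ≤ ∫⁻ x in P.toSet, f x := lintegral_mono_set hJP.2
    _ = volume P.toSet * P.avg f := (volume_mul_avg P f).symm
    _ ≤ volume P.toSet * l := by gcongr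
    _ = volume J.toSet * (2 ^ n * l) := by rw [hvol]; ring

lemma mul_volume_lt_dyadicSup_le {S : Set (DyadicCube n)} {B : ℤ} (hB : ∀ I ∈ S, I.scale ≤ B) :
    l * volume {x | l < dyadicSup S (fun J ↦ J.avg f) x} ≤
      volume.withDensity f {x | l < dyadicSup S (fun J ↦ J.avg f) x} := by
  rw [← smul_eq_mul, ← Measure.smul_apply]
  refine measure_lt_dyadicSup_le hB fun J hJ ↦ ?_
  rw [Measure.smul_apply, smul_eq_mul, withDensity_toSet, mul_comm]
  gcongr
  exact hJ.1.2.le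

lemma volume_lt_dyadicSup_le_half (hl0 : l ≠ 0) (hl : l ≠ ⊤) (hI : 2 * I.avg f ≤ l) :
    volume {x | l < dyadicSup (Iic I) (fun J ↦ J.avg f) x} ≤ 2⁻¹ * volume I.toSet := by
  set E := {x | l < dyadicSup (Iic I) (fun J ↦ J.avg f) x}
  have hEI : E ⊆ I.toSet := fun x hx ↦ by
    obtain ⟨J, hJI, -, hxJ⟩ := lt_dyadicSup_iff.1 hx
    exact hJI.2 hxJ
  have hweak : volume E ≤ l⁻¹ * volume.withDensity f E := by
    rw [← ENNReal.div_eq_inv_mul, ENNReal.le_div_iff_mul_le (.inl hl0) (.inl hl), mul_comm]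
    exact mul_volume_lt_dyadicSup_le fun J hJ ↦ hJ.1
  calc volume E ≤ l⁻¹ * volume.withDensity f E := hweak
    _ ≤ l⁻¹ * volume.withDensity f I.toSet := by gcongr
    _ = l⁻¹ * (2 * I.avg f) * (2⁻¹ * volume I.toSet) := by
      rw [withDensity_toSet, mul_assoc, mul_mul_mul_comm 2,
        ENNReal.mul_inv_cancel two_ne_zero ofNat_ne_top, one_mul, mul_comm (volume _)]
    _ ≤ l⁻¹ * l * (2⁻¹ * volume I.toSet) := by gcongr
    _ = 2⁻¹ * volume I.toSet := by rw [ENNReal.inv_mul_cancel hl0 hl, one_mul]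

lemma DyadicA1.withDensity_inter_le (hA : DyadicA1 f C) (hf : Measurable f) (hI : I.avg f ≠ ⊤)
    {E : Set (Fin n → ℝ)} (hE : MeasurableSet E)
    (hhalf : volume (I.toSet ∩ E) ≤ 2⁻¹ * volume I.toSet) :
    volume.withDensity f (I.toSet ∩ E) ≤ (1 - (2 * C)⁻¹) * volume.withDensity f I.toSet := by
  set N := volume.withDensity f with hN
  have hNI : N I.toSet ≠ ⊤ := by
    rw [hN, withDensity_toSet]
    exact mul_ne_top I.volume_toSet_ne_top hI
  have hrest : 2⁻¹ * volume I.toSet ≤ volume (I.toSet \ E) := by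
    have hfin : 2⁻¹ * volume I.toSet ≠ ⊤ := mul_ne_top (by simp) I.volume_toSet_ne_top
    refine (ENNReal.add_le_add_iff_left hfin).1 ?_
    calc 2⁻¹ * volume I.toSet + 2⁻¹ * volume I.toSet = volume I.toSet := by
          rw [← add_mul, ENNReal.inv_two_add_inv_two, one_mul]
      _ = volume (I.toSet ∩ E) + volume (I.toSet \ E) := (measure_inter_add_sdiff _ hE).symm
      _ ≤ 2⁻¹ * volume I.toSet + volume (I.toSet \ E) := by gcongr
  have hA1 : I.avg f * volume (I.toSet \ E) ≤ C * N (I.toSet \ E) := by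
    rw [hN, withDensity_apply _ (I.measurableSet_toSet.diff hE), ← lintegral_const_mul _ hf,
      ← setLIntegral_const]
    exact lintegral_mono_ae (ae_restrict_of_ae_restrict_of_subset sdiff_subset (hA I))
  have hlow : (2 * C)⁻¹ * N I.toSet ≤ N (I.toSet \ E) :=
    calc (2 * C)⁻¹ * N I.toSet = C⁻¹ * (I.avg f * (2⁻¹ * volume I.toSet)) := by
          rw [hN, withDensity_toSet, ENNReal.mul_inv (by simp) (by simp)]
          ring
      _ ≤ C⁻¹ * (I.avg f * volume (I.toSet \ E)) := by gcongr
      _ ≤ C⁻¹ * (C * N (I.toSet \ E)) := by gcongr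
      _ ≤ N (I.toSet \ E) := by
          rw [← mul_assoc]
          exact mul_le_of_le_one_left' (ENNReal.inv_mul_le_one C)
  rw [ENNReal.sub_mul fun _ _ ↦ hNI, one_mul]
  refine ENNReal.le_sub_of_add_le_right (ne_top_of_le_ne_top hNI
    (hlow.trans (measure_mono sdiff_subset))) ?_
  calc N (I.toSet ∩ E) + (2 * C)⁻¹ * N I.toSet ≤ N (I.toSet ∩ E) + N (I.toSet \ E) := by gcongr
    _ = N I.toSet := measure_inter_add_sdiff _ hE

lemma DyadicA1.withDensity_lt_dyadicSup_le (hA : DyadicA1 f C) (hf : Measurable f)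
    (hl0 : l ≠ 0) (hl : l ≠ ⊤) (hI : I.avg f ≤ l) :
    volume.withDensity f {x | 2 * 2 ^ n * l < dyadicSup (Iic I) (fun J ↦ J.avg f) x} ≤
      (1 - (2 * C)⁻¹) *
        volume.withDensity f {x | l < dyadicSup (Iic I) (fun J ↦ J.avg f) x} := by
  set M := dyadicSup (Iic I) (fun J ↦ J.avg f)
  set N := volume.withDensity f
  have hll : l ≤ 2 * 2 ^ n * l := le_mul_of_one_le_left' (by
    exact_mod_cast Nat.one_le_iff_ne_zero.2 (by positivity))
  have hmeas : MeasurableSet {x | 2 * 2 ^ n * l < M x} :=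
    measurableSet_lt measurable_const (measurable_dyadicSup _ _)
  suffices h : N.restrict {x | 2 * 2 ^ n * l < M x} {x | l < M x} ≤
      ((1 - (2 * C)⁻¹) • N) {x | l < M x} by
    have hsub : {x | 2 * 2 ^ n * l < M x} ⊆ {x | l < M x} := fun x hx ↦ hll.trans_lt hx
    rwa [Measure.restrict_apply' hmeas, inter_eq_right.2 hsub] at h
  refine measure_lt_dyadicSup_le (fun J hJ ↦ hJ.1) fun J hJ ↦ ?_
  have hlocal : J.toSet ∩ {x | 2 * 2 ^ n * l < M x} ⊆
      {x | 2 * 2 ^ n * l < dyadicSup (Iic J) (fun J ↦ J.avg f) x} := by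
    rintro x ⟨hxJ, hx⟩
    obtain ⟨K, hKI, hK, hxK⟩ := lt_dyadicSup_iff.1 hx
    refine lt_dyadicSup_iff.2 ⟨K, ?_, hK, hxK⟩
    rcases le_total K.scale J.scale with h | h
    · exact le_of_inter_nonempty ⟨x, hxK, hxJ⟩ h
    · exact hJ.2 ⟨hKI, hll.trans_lt hK⟩ (le_of_inter_nonempty ⟨x, hxJ, hxK⟩ h)
  have hJl : J.avg f ≤ 2 ^ n * l := avg_le_two_pow_mul_of_maximal hI hJ
  rw [Measure.restrict_apply' hmeas, Measure.smul_apply, smul_eq_mul]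
  refine hA.withDensity_inter_le hf (ne_top_of_le_ne_top ?_ hJl) hmeas
    ((measure_mono hlocal).trans (volume_lt_dyadicSup_le_half ?_ ?_ ?_))
  · exact mul_ne_top (by simp) hl
  · exact mul_ne_zero (by simp) hl0
  · exact mul_ne_top (mul_ne_top (by simp) (by simp)) hl
  · rw [mul_assoc]
    gcongr

lemma DyadicA1.withDensity_pow_mul_lt_le (hA : DyadicA1 f C) (hf : Measurable f)
    (hI0 : I.avg f ≠ 0) (hI : I.avg f ≠ ⊤) (k : ℕ) :
    (volume.withDensity f).restrict I.toSet {x | (2 * 2 ^ n) ^ k * I.avg f < f x} ≤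
      (1 - (2 * C)⁻¹) ^ k * volume.withDensity f I.toSet := by
  set M := dyadicSup (Iic I) (fun J ↦ J.avg f)
  set N := volume.withDensity f
  have hmax : N {x | (2 * 2 ^ n) ^ k * I.avg f < M x} ≤ (1 - (2 * C)⁻¹) ^ k * N I.toSet := by
    induction k with
    | zero =>
      rw [pow_zero, pow_zero, one_mul, one_mul]
      refine measure_mono fun x hx ↦ ?_
      obtain ⟨J, hJI, -, hxJ⟩ := lt_dyadicSup_iff.1 hx
      exact hJI.2 hxJ
    | succ k ih =>
      have hpow : (1 : ℝ≥0∞) ≤ (2 * 2 ^ n) ^ k := by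
        exact_mod_cast Nat.one_le_iff_ne_zero.2 (by positivity)
      have hstep := hA.withDensity_lt_dyadicSup_le hf (mul_ne_zero (one_pos.trans_le hpow).ne' hI0)
        (mul_ne_top (by finiteness) hI) (le_mul_of_one_le_left' hpow)
      rw [← mul_assoc, ← pow_succ'] at hstep
      rw [pow_succ' (1 - (2 * C)⁻¹), mul_assoc]
      exact hstep.trans (by gcongr)
  refine le_trans (measure_mono_ae ?_) ((Measure.restrict_apply_le _ _).trans hmax)
  have hac : N.restrict I.toSet ≪ volume.restrict I.toSet :=
    (withDensity_absolutelyContinuous _ _).restrict _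
  filter_upwards [hac.ae_le (ae_le_dyadicSup_avg hf I)] with x hx hlt using lt_of_lt_of_le hlt hx

lemma exists_rpow_mul_lt_one {a θ : ℝ≥0∞} (ha0 : a ≠ 0) (ha : a ≠ ⊤) (hθ : θ < 1) :
    ∃ e : ℝ, 0 < e ∧ a ^ e * θ < 1 := by
  have hpos : 0 < a.toReal := ENNReal.toReal_pos ha0 ha
  have hcont : Continuous fun e : ℝ ↦ a ^ e * θ := by
    have heq (e : ℝ) : a ^ e = ENNReal.ofReal (a.toReal ^ e) := by
      rw [← ENNReal.ofReal_rpow_of_pos hpos, ENNReal.ofReal_toReal ha]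
    simp only [heq]
    exact (ENNReal.continuous_mul_const hθ.ne_top).comp
      (ENNReal.continuous_ofReal.comp (Real.continuous_const_rpow hpos.ne'))
  have hlim := (hcont.tendsto 0).mono_left (nhdsWithin_le_nhds (s := Ioi 0))
  have hev := hlim.eventually_lt_const (u := 1) (by simpa using hθ)
  obtain ⟨e, he, he0⟩ := (hev.and self_mem_nhdsWithin).exists
  exact ⟨e, he0, he⟩

lemma rpow_le_add_tsum_of_lt {a l x : ℝ≥0∞} {e : ℝ} (he : 0 < e) (ha : 2 ≤ a) (hl : l ≠ 0)
    (hx : x ≠ ⊤) :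
    x ^ e ≤ l ^ e + ∑' k : ℕ, (a ^ (k + 1) * l) ^ e * (if a ^ k * l < x then 1 else 0) := by
  classical
  rcases le_or_gt x l with hxl | hlx
  · exact (ENNReal.rpow_le_rpow hxl he.le).trans le_self_add
  have hex : ∃ k : ℕ, x ≤ a ^ k * l := by
    obtain ⟨k, hk⟩ := ENNReal.exists_nat_mul_gt hl hx
    have hkpow : (k : ℝ≥0∞) ≤ 2 ^ k := mod_cast k.lt_two_pow_self.le
    exact ⟨k, hk.le.trans (by gcongr; exact hkpow.trans (by gcongr))⟩
  obtain ⟨k, hk⟩ : ∃ k, Nat.find hex = k + 1 :=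
    Nat.exists_eq_succ_of_ne_zero fun h ↦ hlx.not_ge (by simpa [h] using Nat.find_spec hex)
  have hupper : x ≤ a ^ (k + 1) * l := hk ▸ Nat.find_spec hex
  have hlower : a ^ k * l < x := not_le.1 (Nat.find_min hex (by omega))
  calc x ^ e ≤ (a ^ (k + 1) * l) ^ e * (if a ^ k * l < x then 1 else 0) := by
        rw [if_pos hlower, mul_one]
        gcongr
    _ ≤ ∑' k : ℕ, (a ^ (k + 1) * l) ^ e * (if a ^ k * l < x then 1 else 0) :=
        ENNReal.le_tsum
          (f := fun k : ℕ ↦ (a ^ (k + 1) * l) ^ e * (if a ^ k * l < x then 1 else 0)) k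
    _ ≤ _ := le_add_self

lemma lintegral_rpow_le_of_measure_le_pow {X : Type*} [MeasurableSpace X] {μ : Measure X}
    {g : X → ℝ≥0∞} (hg : Measurable g) (hfin : ∀ᵐ x ∂μ, g x ≠ ⊤) {a θ l : ℝ≥0∞} {e : ℝ}
    (he : 0 < e) (ha : 2 ≤ a) (hl : l ≠ 0)
    (hdecay : ∀ k : ℕ, μ {x | a ^ k * l < g x} ≤ θ ^ k * μ univ) :
    ∫⁻ x, g x ^ e ∂μ ≤ (1 + a ^ e * (1 - a ^ e * θ)⁻¹) * (l ^ e * μ univ) := by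
  have hlevel (k : ℕ) : MeasurableSet {x | a ^ k * l < g x} :=
    measurableSet_lt measurable_const hg
  have hmeas (k : ℕ) : Measurable fun x ↦ if a ^ k * l < g x then (1 : ℝ≥0∞) else 0 :=
    Measurable.ite (hlevel k) measurable_const measurable_const
  have hint (k : ℕ) : ∫⁻ x, (if a ^ k * l < g x then 1 else 0) ∂μ = μ {x | a ^ k * l < g x} := by
    rw [← lintegral_indicator_one (hlevel k)]
    simp only [indicator_apply, mem_ofPred_eq, Pi.one_apply]
  calc ∫⁻ x, g x ^ e ∂μ
    _ ≤ ∫⁻ x, l ^ e + ∑' k : ℕ, (a ^ (k + 1) * l) ^ e *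
          (if a ^ k * l < g x then 1 else 0) ∂μ := by
        refine lintegral_mono_ae ?_
        filter_upwards [hfin] with x hx using rpow_le_add_tsum_of_lt he ha hl hx
    _ = l ^ e * μ univ + ∑' k : ℕ, (a ^ (k + 1) * l) ^ e * μ {x | a ^ k * l < g x} := by
        rw [lintegral_add_left measurable_const, lintegral_const,
          lintegral_tsum fun k ↦ ((hmeas k).const_mul _).aemeasurable]
        simp only [lintegral_const_mul _ (hmeas _), hint]
    _ ≤ l ^ e * μ univ + ∑' k : ℕ, (a ^ (k + 1) * l) ^ e * (θ ^ k * μ univ) := by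
        gcongr with k
        exact hdecay k
    _ = l ^ e * μ univ + ∑' k : ℕ, (a ^ e * θ) ^ k * (a ^ e * (l ^ e * μ univ)) := by
        congr! 3 with k
        rw [ENNReal.mul_rpow_of_nonneg _ _ he.le, ← ENNReal.rpow_natCast_mul, mul_comm _ e,
          ENNReal.rpow_mul, ENNReal.rpow_natCast, pow_succ, mul_pow]
        ring
    _ = (1 + a ^ e * (1 - a ^ e * θ)⁻¹) * (l ^ e * μ univ) := by
        rw [ENNReal.tsum_mul_right, ENNReal.tsum_geometric]
        ring

theorem DyadicA1.exists_avg_rpow_le (hC : C ≠ ⊤) (hA : DyadicA1 f C) (hf : Measurable f) :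
    ∃ s : ℝ, 1 < s ∧ ∃ K : ℝ≥0∞, K < ⊤ ∧
      ∀ I : DyadicCube n, I.avg (fun x ↦ f x ^ s) ≤ K * I.avg f ^ s := by
  set a : ℝ≥0∞ := 2 * 2 ^ n with ha
  set θ : ℝ≥0∞ := 1 - (2 * C)⁻¹
  have hθ1 : θ < 1 := ENNReal.sub_lt_self one_ne_top one_ne_zero
    (ENNReal.inv_ne_zero.2 (mul_ne_top ofNat_ne_top hC))
  have hat : a ≠ ⊤ := mul_ne_top (by simp) (by simp)
  obtain ⟨e, he, hlt⟩ := exists_rpow_mul_lt_one (a := a) (by simp [ha]) hat hθ1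
  refine ⟨1 + e, by linarith, 1 + a ^ e * (1 - a ^ e * θ)⁻¹, ?_, fun I ↦ ?_⟩
  · refine ENNReal.add_lt_top.2 ⟨one_lt_top, ENNReal.mul_lt_top
      (rpow_lt_top_of_nonneg he.le hat) (ENNReal.inv_lt_top.2 (tsub_pos_iff_lt.2 hlt))⟩
  by_cases hItop : I.avg f = ⊤
  · simp [hItop, ENNReal.top_rpow_of_pos (show 0 < 1 + e by linarith)]
  by_cases hI0 : I.avg f = 0
  · have hzero : ∀ᵐ x ∂I.unif, f x ^ (1 + e) = 0 := by
      filter_upwards [(lintegral_eq_zero_iff hf).1 hI0] with x hx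
      simp [hx, show 0 < 1 + e by linarith]
    rw [avg, lintegral_congr_ae hzero, lintegral_zero]
    exact zero_le
  set N := volume.withDensity f with hN
  have hftop : ∀ᵐ x ∂N.restrict I.toSet, f x ≠ ⊤ := by
    have hac : N.restrict I.toSet ≪ volume.restrict I.toSet :=
      (withDensity_absolutelyContinuous _ _).restrict _
    filter_upwards [hac.ae_le (ae_unif_iff.1 (ae_lt_top hf hItop))] with x hx using hx.ne
  have hint := lintegral_rpow_le_of_measure_le_pow hf hftop he
    (le_mul_of_one_le_right' (one_le_pow₀ one_le_two)) hI0 fun k ↦ by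
      rw [Measure.restrict_apply_univ]
      exact hA.withDensity_pow_mul_lt_le hf hI0 hItop k
  have hdens : ∫⁻ x in I.toSet, f x ^ (1 + e) = ∫⁻ x, f x ^ e ∂N.restrict I.toSet := by
    rw [hN, restrict_withDensity I.measurableSet_toSet,
      lintegral_withDensity_eq_lintegral_mul _ hf (hf.pow_const e)]
    simp [ENNReal.rpow_add_of_nonneg _ _ zero_le_one he.le]
  rw [Measure.restrict_apply_univ, hN, withDensity_toSet, ← hN, ← hdens, ← volume_mul_avg] at hint
  refine (ENNReal.mul_le_mul_iff_right I.volume_toSet_ne_zero I.volume_toSet_ne_top).1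
    (hint.trans_eq ?_)
  rw [ENNReal.rpow_add_of_nonneg _ _ zero_le_one he.le, ENNReal.rpow_one]
  ring

end ReverseHolder

/-! ### Averages of dyadic maximal functions -/

section Averages

variable {n : ℕ} {f φ : (Fin n → ℝ) → ℝ≥0∞} {I : DyadicCube n} {S : Set (DyadicCube n)}

lemma rpow_mul_rpow_neg {x : ℝ≥0∞} (h0 : x ≠ 0) (ht : x ≠ ⊤) (a : ℝ) : x ^ a * x ^ (-a) = 1 := by
  rw [← ENNReal.rpow_add _ _ h0 ht, add_neg_cancel, ENNReal.rpow_zero]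

lemma lintegral_rpow_mul_rpow_mul_rpow_le {X : Type*} [MeasurableSpace X] {μ : Measure X}
    [IsProbabilityMeasure μ] {f g h : X → ℝ≥0∞} (hf : AEMeasurable f μ) (hg : AEMeasurable g μ)
    (hh : AEMeasurable h μ) {a b c : ℝ} (ha : 0 ≤ a) (hb : 0 ≤ b) (hc : 0 ≤ c)
    (habc : a + b + c ≤ 1) :
    ∫⁻ x, f x ^ a * g x ^ b * h x ^ c ∂μ ≤
      (∫⁻ x, f x ∂μ) ^ a * (∫⁻ x, g x ∂μ) ^ b * (∫⁻ x, h x ∂μ) ^ c := by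
  have hd : 0 ≤ 1 - a - b - c := by linarith
  have hholder := ENNReal.lintegral_prod_norm_pow_le (μ := μ) (Finset.univ : Finset (Fin 4))
    (f := ![f, g, h, fun _ ↦ 1]) (p := ![a, b, c, 1 - a - b - c])
    (by simp [Fin.forall_fin_succ, hf, hg, hh]) (by simp [Fin.sum_univ_four])
    (by simp [Fin.forall_fin_succ, ha, hb, hc, hd])
  simpa [Fin.prod_univ_four] using hholder

lemma lintegral_rpow_le_rpow_lintegral {X : Type*} [MeasurableSpace X] {μ : Measure X}
    [IsProbabilityMeasure μ] {f : X → ℝ≥0∞} (hf : AEMeasurable f μ) {a : ℝ} (ha : 0 ≤ a)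
    (ha1 : a ≤ 1) : ∫⁻ x, f x ^ a ∂μ ≤ (∫⁻ x, f x ∂μ) ^ a := by
  simpa using lintegral_rpow_mul_rpow_mul_rpow_le hf hf hf ha le_rfl le_rfl (by linarith)

namespace DyadicCube

lemma avg_ne_zero (hf : Measurable f) (h0 : ∀ᵐ x, f x ≠ 0) (I : DyadicCube n) : I.avg f ≠ 0 := by
  intro hzero
  have hfalse : ∀ᵐ _x ∂I.unif, False := by
    filter_upwards [(lintegral_eq_zero_iff hf).1 hzero, I.unif_absolutelyContinuous.ae_le h0]
      with x hx hx' using hx' hx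
  exact IsProbabilityMeasure.ne_zero I.unif
    (ae_eq_bot.1 (Filter.eventually_false_iff_eq_bot.1 hfalse))

lemma avg_eq_zero_of_le {J : DyadicCube n} (hJI : J ≤ I) (h : I.avg f = 0) : J.avg f = 0 := by
  have hI := volume_mul_avg I f
  rw [h, mul_zero] at hI
  rw [avg_eq, mul_eq_zero]
  exact .inr (le_zero_iff.1 ((lintegral_mono_set hJI.2).trans_eq hI.symm))

end DyadicCube

lemma unif_lt_dyadicSup_le (hS : S ⊆ Iic I) (h0 : I.avg φ ≠ 0) (hfin : I.avg φ ≠ ⊤)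
    {l : ℝ≥0∞} (hl0 : l ≠ 0) (hl : l ≠ ⊤) :
    I.unif {x | l < dyadicSup S (fun J ↦ J.avg φ) x / I.avg φ} ≤ l⁻¹ := by
  set E := {x | l < dyadicSup S (fun J ↦ J.avg φ) x / I.avg φ}
  have hE : E = {x | l * I.avg φ < dyadicSup S (fun J ↦ J.avg φ) x} := by
    ext x
    exact ENNReal.lt_div_iff_mul_lt (.inl h0) (.inl hfin)
  have hEI : E ⊆ I.toSet := fun x hx ↦ by
    rw [hE] at hx
    obtain ⟨J, hJ, -, hxJ⟩ := lt_dyadicSup_iff.1 hx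
    exact (hS hJ).2 hxJ
  have hweak : l * I.avg φ * volume E ≤ volume I.toSet * I.avg φ := by
    rw [← withDensity_toSet]
    refine le_trans ?_ (measure_mono hEI)
    rw [hE]
    exact mul_volume_lt_dyadicSup_le fun J hJ ↦ (hS hJ).1
  have hcancel : volume E * l ≤ volume I.toSet := by
    refine (ENNReal.mul_le_mul_iff_left h0 hfin).1 (le_of_eq_of_le ?_ hweak)
    ring
  calc I.unif E ≤ (volume I.toSet)⁻¹ * volume E := by
        rw [unif, Measure.smul_apply, smul_eq_mul]
        gcongr
        exact Measure.restrict_le_self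
    _ ≤ (volume I.toSet)⁻¹ * (volume I.toSet * l⁻¹) := by
        gcongr
        rwa [← div_eq_mul_inv, ENNReal.le_div_iff_mul_le (.inl hl0) (.inl hl)]
    _ = l⁻¹ := by
        rw [← mul_assoc, ENNReal.inv_mul_cancel I.volume_toSet_ne_zero I.volume_toSet_ne_top,
          one_mul]

/-- Kolmogorov's inequality; the constant is infinite for `δ ≥ 1`. -/
lemma avg_dyadicSup_rpow_le (hS : S ⊆ Iic I) {δ : ℝ} (hδ : 0 < δ) :
    I.avg (fun x ↦ dyadicSup S (fun J ↦ J.avg φ) x ^ δ) ≤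
      2 ^ δ * (geomConst δ + geomConst (1 - δ)) * I.avg φ ^ δ := by
  set M := dyadicSup S (fun J ↦ J.avg φ) with hMdef
  have hM : Measurable M := measurable_dyadicSup _ _
  rcases eq_or_ne (I.avg φ) 0 with h0 | h0
  · have hM0 (x) : M x = 0 := by
      simp only [hMdef, dyadicSup, ENNReal.iSup_eq_zero]
      intro J hJ
      rw [avg_eq_zero_of_le (hS hJ) h0, indicator_zero]
    simp [avg, hM0, hδ]
  rcases eq_or_ne (I.avg φ) ⊤ with htop | hfin
  · simp [htop, hδ, ENNReal.mul_top, geomConst_ne_zero]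
  have hscale (x) : M x ^ δ = I.avg φ ^ δ * (M x / I.avg φ) ^ δ := by
    rw [← ENNReal.mul_rpow_of_nonneg _ _ hδ.le, ENNReal.mul_div_cancel h0 hfin]
  calc I.avg (fun x ↦ M x ^ δ)
    _ = I.avg φ ^ δ * ∫⁻ x, (M x / I.avg φ) ^ δ ∂I.unif := by
        rw [← lintegral_const_mul _ ((hM.div_const _).pow_const δ)]
        exact lintegral_congr hscale
    _ ≤ I.avg φ ^ δ * (2 ^ δ * (1 * (geomConst δ + geomConst (1 - δ)))) := by
        refine mul_le_mul_right ((lintegral_rpow_le_tsum _ hδ (hM.div_const _)).trans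
          (mul_le_mul_right (tsum_le_geomConst_add (fun k _ ↦ ?_) fun k _ ↦ ?_) _)) _
        · rw [one_mul]
          exact mul_le_of_le_one_right' prob_le_one
        · rw [one_mul, neg_sub, ENNReal.rpow_sub _ _ (two_zpow_ne_zero k) (two_zpow_ne_top k),
            ENNReal.rpow_one, ENNReal.div_eq_inv_mul, mul_comm]
          gcongr
          exact unif_lt_dyadicSup_le hS h0 hfin (two_zpow_ne_zero k) (two_zpow_ne_top k)
    _ = 2 ^ δ * (geomConst δ + geomConst (1 - δ)) * I.avg φ ^ δ := by ring

lemma rpow_mul_measure_lt_dyadicSup_le {φ : (Fin n → ℝ) → ℝ≥0∞} (hφ : Measurable φ)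
    {τ : Measure (Fin n → ℝ)} {C : ℝ≥0∞} {p : ℝ} (hp : 0 < p)
    (hweak : ∀ ψ : (Fin n → ℝ) → ℝ≥0∞, Measurable ψ → ∀ I : DyadicCube n,
      I.avg ψ ^ p * τ I.toSet ≤ C * ∫⁻ x in I.toSet, ψ x ^ p ∂τ)
    {B : ℤ} (hB : ∀ I ∈ S, I.scale ≤ B) (l : ℝ≥0∞) :
    l ^ p * τ {x | 2 * l < dyadicSup S (fun J ↦ J.avg φ) x} ≤
      C * ∫⁻ x, {x | l < φ x}.indicator (fun x ↦ φ x ^ p) x ∂τ := by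
  have hlevel : MeasurableSet {x | l < φ x} := measurableSet_lt measurable_const hφ
  set ψ := {x | l < φ x}.indicator φ with hψ
  have hψm : Measurable ψ := hφ.indicator hlevel
  have hψp : {x | l < φ x}.indicator (fun x ↦ φ x ^ p) = fun x ↦ ψ x ^ p := by
    funext x
    by_cases hx : l < φ x <;> simp [hψ, hx, hp]
  have hcut (x) : φ x ≤ ψ x + l := by
    by_cases hx : l < φ x
    · simp [hψ, hx]
    · simpa only [hψ, indicator_of_notMem (show x ∉ {x | l < φ x} from hx), zero_add] using
        not_lt.1 hx
  have hcover : (l ^ p • τ) {x | 2 * l < dyadicSup S (fun J ↦ J.avg φ) x} ≤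
      (C • τ.withDensity fun x ↦ ψ x ^ p) {x | 2 * l < dyadicSup S (fun J ↦ J.avg φ) x} := by
    refine measure_lt_dyadicSup_le hB fun J hJ ↦ ?_
    have havg : J.avg φ ≤ J.avg ψ + l := by
      refine (lintegral_mono hcut).trans_eq ?_
      rw [lintegral_add_left hψm, lintegral_const, measure_univ, mul_one]
    have hl : l < J.avg ψ := by
      have hlt := hJ.1.2.trans_le havg
      rw [two_mul] at hlt
      exact lt_of_add_lt_add_right hlt
    rw [Measure.smul_apply, Measure.smul_apply, withDensity_apply _ J.measurableSet_toSet,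
      smul_eq_mul, smul_eq_mul]
    exact le_trans (mul_le_mul_left (ENNReal.rpow_le_rpow hl.le hp.le) _) (hweak ψ hψm J)
  rw [hψp, ← setLIntegral_univ, ← withDensity_apply _ MeasurableSet.univ]
  exact hcover.trans (mul_le_mul_right (measure_mono (subset_univ _)) C)

lemma two_mul_rpow_mul_measure_lt_dyadicSup_le {φ : (Fin n → ℝ) → ℝ≥0∞} (hφ : Measurable φ)
    {τ : Measure (Fin n → ℝ)} {C : ℝ≥0∞} {p r : ℝ} (hp : 0 < p) (hpr : p < r)
    (hweak : ∀ ψ : (Fin n → ℝ) → ℝ≥0∞, Measurable ψ → ∀ I : DyadicCube n,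
      I.avg ψ ^ p * τ I.toSet ≤ C * ∫⁻ x in I.toSet, ψ x ^ p ∂τ)
    {B : ℤ} (hB : ∀ I ∈ S, I.scale ≤ B) {l : ℝ≥0∞} (hl0 : l ≠ 0) (hl : l ≠ ⊤) :
    (2 * l) ^ r * τ {x | 2 * l < dyadicSup S (fun J ↦ J.avg φ) x} ≤
      2 ^ r * C * ∫⁻ x, (if l < φ x then l ^ (r - p) else 0) * φ x ^ p ∂τ := by
  have hlevel : MeasurableSet {x | l < φ x} := measurableSet_lt measurable_const hφ
  calc (2 * l) ^ r * τ {x | 2 * l < dyadicSup S (fun J ↦ J.avg φ) x}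
    _ = 2 ^ r * l ^ (r - p) * (l ^ p * τ {x | 2 * l < dyadicSup S (fun J ↦ J.avg φ) x}) := by
        conv_lhs => rw [ENNReal.mul_rpow_of_nonneg _ _ (hp.trans hpr).le, ← sub_add_cancel r p,
          ENNReal.rpow_add _ _ hl0 hl, sub_add_cancel]
        ring
    _ ≤ 2 ^ r * l ^ (r - p) *
          (C * ∫⁻ x, {x | l < φ x}.indicator (fun x ↦ φ x ^ p) x ∂τ) :=
        mul_le_mul_right (rpow_mul_measure_lt_dyadicSup_le hφ hp hweak hB l) _
    _ = 2 ^ r * C * ∫⁻ x, (if l < φ x then l ^ (r - p) else 0) * φ x ^ p ∂τ := by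
        rw [mul_mul_mul_comm, ← lintegral_const_mul _ ((hφ.pow_const p).indicator hlevel)]
        simp only [indicator_apply, mem_ofPred_eq, mul_ite, mul_zero, ite_mul, zero_mul]

lemma lintegral_dyadicSup_rpow_le {φ : (Fin n → ℝ) → ℝ≥0∞} (hφ : Measurable φ)
    {τ : Measure (Fin n → ℝ)} {C : ℝ≥0∞} {p r : ℝ} (hp : 0 < p) (hpr : p < r)
    (hweak : ∀ ψ : (Fin n → ℝ) → ℝ≥0∞, Measurable ψ → ∀ I : DyadicCube n,
      I.avg ψ ^ p * τ I.toSet ≤ C * ∫⁻ x in I.toSet, ψ x ^ p ∂τ)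
    {B : ℤ} (hB : ∀ I ∈ S, I.scale ≤ B) :
    ∫⁻ x, dyadicSup S (fun J ↦ J.avg φ) x ^ r ∂τ ≤
      2 ^ r * 2 ^ r * C * geomConst (r - p) * ∫⁻ x, φ x ^ r ∂τ := by
  set M := dyadicSup S (fun J ↦ J.avg φ)
  have hM : Measurable M := measurable_dyadicSup _ _
  have hlevel (k : ℤ) : MeasurableSet {x | (2 : ℝ≥0∞) ^ k < φ x} :=
    measurableSet_lt measurable_const hφ
  have hmeas (k : ℤ) : Measurable fun x ↦
      (if 2 ^ k < φ x then ((2 : ℝ≥0∞) ^ k) ^ (r - p) else 0) * φ x ^ p :=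
    (Measurable.ite (hlevel k) measurable_const measurable_const).mul (hφ.pow_const p)
  have hterm (k : ℤ) : ((2 : ℝ≥0∞) ^ (k + 1)) ^ r * τ {x | 2 ^ (k + 1) < M x} ≤
      2 ^ r * C * ∫⁻ x, (if 2 ^ k < φ x then ((2 : ℝ≥0∞) ^ k) ^ (r - p) else 0) * φ x ^ p ∂τ := by
    rw [ENNReal.zpow_add two_ne_zero ofNat_ne_top, zpow_one, mul_comm (2 ^ k) 2]
    exact two_mul_rpow_mul_measure_lt_dyadicSup_le hφ hp hpr hweak hB (two_zpow_ne_zero k)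
      (two_zpow_ne_top k)
  calc ∫⁻ x, M x ^ r ∂τ
    _ ≤ 2 ^ r * ∑' k : ℤ, ((2 : ℝ≥0∞) ^ k) ^ r * τ {x | 2 ^ k < M x} :=
        lintegral_rpow_le_tsum τ (hp.trans hpr) hM
    _ = 2 ^ r * ∑' k : ℤ, ((2 : ℝ≥0∞) ^ (k + 1)) ^ r * τ {x | 2 ^ (k + 1) < M x} := by
        rw [← (Equiv.addRight (1 : ℤ)).tsum_eq]
        rfl
    _ ≤ 2 ^ r * ∑' k : ℤ, 2 ^ r * C *
          ∫⁻ x, (if 2 ^ k < φ x then ((2 : ℝ≥0∞) ^ k) ^ (r - p) else 0) * φ x ^ p ∂τ :=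
        mul_le_mul_right (ENNReal.tsum_le_tsum hterm) _
    _ = 2 ^ r * (2 ^ r * C * ∫⁻ x, layerSum (r - p) (φ x) * φ x ^ p ∂τ) := by
        rw [ENNReal.tsum_mul_left, ← lintegral_tsum fun k ↦ (hmeas k).aemeasurable]
        simp only [layerSum, ENNReal.tsum_mul_right]
    _ ≤ 2 ^ r * (2 ^ r * C * ∫⁻ x, geomConst (r - p) * φ x ^ r ∂τ) :=
        mul_le_mul_right (mul_le_mul_right
          (lintegral_mono fun x ↦ layerSum_mul_rpow_le hp.le hpr _) _) _
    _ = 2 ^ r * 2 ^ r * C * geomConst (r - p) * ∫⁻ x, φ x ^ r ∂τ := by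
        rw [lintegral_const_mul _ (hφ.pow_const r)]
        ring

end Averages

/-! ### Pairs of weights and majorants -/

section WeightPairs

variable {n : ℕ} {ν V : (Fin n → ℝ) → ℝ≥0∞} {C : ℝ≥0∞} {s κ : ℝ}

/-- Finite a.e. positive functions `ν` and `V` on `ℝ^n` such that `ν` is a dyadic `A₁` weight
obeying a reverse Hölder inequality with exponent `s`, and `V` is a dyadic `A_p` weight with
`p = 1 + 1 / κ`, all with constant `C`. -/
structure DyadicWeightPair (ν V : (Fin n → ℝ) → ℝ≥0∞) (C : ℝ≥0∞) (s κ : ℝ) : Prop where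
  measurable_left : Measurable ν
  measurable_right : Measurable V
  left_ne_top : ∀ x, ν x ≠ ⊤
  right_ne_top : ∀ x, V x ≠ ⊤
  left_ne_zero : ∀ᵐ x, ν x ≠ 0
  right_ne_zero : ∀ᵐ x, V x ≠ 0
  dyadicA1 : DyadicA1 ν C
  one_lt : 1 < s
  avg_rpow_le : ∀ I : DyadicCube n, I.avg (fun x ↦ ν x ^ s) ≤ C * I.avg ν ^ s
  pos : 0 < κ
  avg_mul_avg_le : ∀ I : DyadicCube n,
    I.avg V * I.avg (fun x ↦ V x ^ (-κ)) ^ (1 / κ) ≤ C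
  const_ne_top : C ≠ ⊤

lemma rpow_mul_rpow_mul_rpow_cancel {x y z : ℝ≥0∞} (hy0 : y ≠ 0) (hy : y ≠ ⊤) (hz0 : z ≠ 0)
    (hz : z ≠ ⊤) {p P : ℝ} (hp : 0 < p) (hs : s ≠ 0) (hκ : κ ≠ 0) :
    (x ^ p * (y ^ (1 - P) * z)) ^ (1 / p) * (y ^ s) ^ ((P - 1) / s / p) *
      (z ^ (-κ)) ^ (1 / κ / p) = x := by
  have hexp₁ : s * ((P - 1) / s / p) = -((1 - P) * (1 / p)) := by field_simp; ring
  have hexp₂ : -κ * (1 / κ / p) = -(1 / p) := by field_simp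
  rw [ENNReal.mul_rpow_of_nonneg _ _ (by positivity),
    ENNReal.mul_rpow_of_nonneg _ _ (by positivity), ← ENNReal.rpow_mul, ← ENNReal.rpow_mul,
    ← ENNReal.rpow_mul, ← ENNReal.rpow_mul, mul_one_div_cancel hp.ne', ENNReal.rpow_one,
    hexp₁, hexp₂]
  calc x * (y ^ ((1 - P) * (1 / p)) * z ^ (1 / p)) * y ^ (-((1 - P) * (1 / p))) * z ^ (-(1 / p))
    _ = x * (y ^ ((1 - P) * (1 / p)) * y ^ (-((1 - P) * (1 / p)))) *
          (z ^ (1 / p) * z ^ (-(1 / p))) := by ring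
    _ = x := by rw [rpow_mul_rpow_neg hy0 hy, rpow_mul_rpow_neg hz0 hz, mul_one, mul_one]

namespace DyadicWeightPair

lemma avg_right_ne_top (h : DyadicWeightPair ν V C s κ) (I : DyadicCube n) : I.avg V ≠ ⊤ := by
  intro htop
  have hdual : I.avg (fun x ↦ V x ^ (-κ)) ≠ 0 := by
    refine I.avg_ne_zero (h.measurable_right.pow_const _) (.of_forall fun x ↦ ?_)
    simp [ENNReal.rpow_eq_zero_iff, h.right_ne_top x, h.pos.le]
  have hle := h.avg_mul_avg_le I
  rw [htop, ENNReal.top_mul fun h0 ↦ hdual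
    ((ENNReal.rpow_eq_zero_iff_of_pos (one_div_pos.2 h.pos)).1 h0)] at hle
  exact h.const_ne_top (top_le_iff.1 hle)

lemma avg_rpow_le_mul (h : DyadicWeightPair ν V C s κ) {P p : ℝ} (hP : 1 < P)
    (hp : (P - 1) / s + 1 / κ + 1 ≤ p) {φ : (Fin n → ℝ) → ℝ≥0∞} (hφ : Measurable φ)
    (I : DyadicCube n) :
    I.avg φ ^ p ≤ I.avg (fun x ↦ φ x ^ p * (ν x ^ (1 - P) * V x)) *
      I.avg (fun x ↦ ν x ^ s) ^ ((P - 1) / s) * I.avg (fun x ↦ V x ^ (-κ)) ^ (1 / κ) := by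
  have hν := h.measurable_left
  have hV := h.measurable_right
  have hs : 0 < s := zero_lt_one.trans h.one_lt
  have hκ := h.pos
  have hb : 0 < (P - 1) / s := div_pos (sub_pos.2 hP) hs
  have hc : 0 < 1 / κ := one_div_pos.2 hκ
  have hp0 : 0 < p := by linarith
  have hsum : 1 / p + (P - 1) / s / p + 1 / κ / p ≤ 1 := by
    rw [← add_div, ← add_div, div_le_one hp0]
    linarith
  have hholder := lintegral_rpow_mul_rpow_mul_rpow_le (μ := I.unif)
    (f := fun x ↦ φ x ^ p * (ν x ^ (1 - P) * V x)) (g := fun x ↦ ν x ^ s)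
    (h := fun x ↦ V x ^ (-κ)) (by fun_prop) (by fun_prop) (by fun_prop)
    (by positivity) (by positivity) (by positivity) hsum
  have hpt : ∀ᵐ x ∂I.unif, φ x = (φ x ^ p * (ν x ^ (1 - P) * V x)) ^ (1 / p) *
      (ν x ^ s) ^ ((P - 1) / s / p) * (V x ^ (-κ)) ^ (1 / κ / p) := by
    filter_upwards [I.unif_absolutelyContinuous.ae_le h.left_ne_zero,
      I.unif_absolutelyContinuous.ae_le h.right_ne_zero] with x hνx hVx
    rw [rpow_mul_rpow_mul_rpow_cancel hνx (h.left_ne_top x) hVx (h.right_ne_top x) hp0 hs.ne'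
      hκ.ne']
  rw [avg, lintegral_congr_ae hpt]
  refine (ENNReal.rpow_le_rpow hholder hp0.le).trans_eq ?_
  rw [ENNReal.mul_rpow_of_nonneg _ _ hp0.le, ENNReal.mul_rpow_of_nonneg _ _ hp0.le,
    ← ENNReal.rpow_mul, ← ENNReal.rpow_mul, ← ENNReal.rpow_mul, div_mul_cancel₀ _ hp0.ne',
    div_mul_cancel₀ _ hp0.ne', div_mul_cancel₀ _ hp0.ne', ENNReal.rpow_one]

lemma rpow_mul_avg_le (h : DyadicWeightPair ν V C s κ) {P : ℝ} (hP : 1 < P) (I : DyadicCube n) :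
    I.avg ν ^ (P - 1) * I.avg (fun x ↦ ν x ^ (1 - P) * V x) ≤ C ^ (P - 1) * I.avg V := by
  have hν := h.measurable_left
  have hV := h.measurable_right
  rw [avg, avg, avg, ← lintegral_const_mul _ (by fun_prop), ← lintegral_const_mul _ hV]
  refine lintegral_mono_ae ?_
  filter_upwards [I.unif_absolutelyContinuous.ae_le h.left_ne_zero,
    ae_unif_iff.2 (h.dyadicA1 I)] with x hνx hA
  rw [← mul_assoc]
  refine mul_le_mul_left ?_ _
  calc I.avg ν ^ (P - 1) * ν x ^ (1 - P)
    _ ≤ (C * ν x) ^ (P - 1) * ν x ^ (1 - P) := by gcongr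
    _ = C ^ (P - 1) * (ν x ^ (P - 1) * ν x ^ (-(P - 1))) := by
        rw [ENNReal.mul_rpow_of_nonneg _ _ (sub_pos.2 hP).le, mul_assoc, neg_sub]
    _ = C ^ (P - 1) := by rw [rpow_mul_rpow_neg hνx (h.left_ne_top x), mul_one]

lemma avg_rpow_mul_avg_le (h : DyadicWeightPair ν V C s κ) {P p : ℝ} (hP : 1 < P)
    (hp : (P - 1) / s + 1 / κ + 1 ≤ p) {φ : (Fin n → ℝ) → ℝ≥0∞} (hφ : Measurable φ)
    (I : DyadicCube n) :
    I.avg φ ^ p * I.avg (fun x ↦ ν x ^ (1 - P) * V x) ≤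
      C ^ ((P - 1) / s) * C ^ (P - 1) * C *
        I.avg (fun x ↦ φ x ^ p * (ν x ^ (1 - P) * V x)) := by
  have hs : 0 < s := zero_lt_one.trans h.one_lt
  have hb : 0 ≤ (P - 1) / s := (div_pos (sub_pos.2 hP) hs).le
  have hrev : I.avg (fun x ↦ ν x ^ s) ^ ((P - 1) / s) ≤
      C ^ ((P - 1) / s) * I.avg ν ^ (P - 1) := by
    refine (ENNReal.rpow_le_rpow (h.avg_rpow_le I) hb).trans_eq ?_
    rw [ENNReal.mul_rpow_of_nonneg _ _ hb, ← ENNReal.rpow_mul, mul_div_cancel₀ _ hs.ne']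
  set A := I.avg fun x ↦ φ x ^ p * (ν x ^ (1 - P) * V x)
  set B := I.avg (fun x ↦ V x ^ (-κ)) ^ (1 / κ)
  set T := I.avg fun x ↦ ν x ^ (1 - P) * V x
  calc I.avg φ ^ p * T
    _ ≤ A * (C ^ ((P - 1) / s) * I.avg ν ^ (P - 1)) * B * T := by
        refine mul_le_mul_left ((h.avg_rpow_le_mul hP hp hφ I).trans ?_) T
        exact mul_le_mul_left (mul_le_mul_right hrev A) B
    _ = A * C ^ ((P - 1) / s) * B * (I.avg ν ^ (P - 1) * T) := by ring
    _ ≤ A * C ^ ((P - 1) / s) * B * (C ^ (P - 1) * I.avg V) :=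
        mul_le_mul_right (h.rpow_mul_avg_le hP I) _
    _ = A * C ^ ((P - 1) / s) * C ^ (P - 1) * (I.avg V * B) := by ring
    _ ≤ A * C ^ ((P - 1) / s) * C ^ (P - 1) * C := mul_le_mul_right (h.avg_mul_avg_le I) _
    _ = C ^ ((P - 1) / s) * C ^ (P - 1) * C * A := by ring

lemma exists_lintegral_dyadicSup_rpow_mul_le (h : DyadicWeightPair ν V C s κ) {P p r : ℝ}
    (hP : 1 < P) (hp : (P - 1) / s + 1 / κ + 1 ≤ p) (hpr : p < r) :
    ∃ K ≠ ⊤, ∀ φ : (Fin n → ℝ) → ℝ≥0∞, Measurable φ →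
      ∀ (S : Set (DyadicCube n)) (B : ℤ), (∀ I ∈ S, I.scale ≤ B) →
        ∫⁻ x, dyadicSup S (fun J ↦ J.avg φ) x ^ r * (ν x ^ (1 - P) * V x) ≤
          K * ∫⁻ x, φ x ^ r * (ν x ^ (1 - P) * V x) := by
  have hν := h.measurable_left
  have hV := h.measurable_right
  have hb := div_pos (sub_pos.2 hP) (zero_lt_one.trans h.one_lt)
  have hc := one_div_pos.2 h.pos
  have hp0 : 0 < p := by linarith
  have hC (a : ℝ) (ha : 0 ≤ a) : C ^ a ≠ ⊤ := ENNReal.rpow_ne_top_of_nonneg ha h.const_ne_top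
  have htwo := ENNReal.rpow_ne_top_of_nonneg (hp0.trans hpr).le ofNat_ne_top (x := 2)
  refine ⟨2 ^ r * 2 ^ r * (C ^ ((P - 1) / s) * C ^ (P - 1) * C) * geomConst (r - p),
    ENNReal.mul_ne_top (ENNReal.mul_ne_top (ENNReal.mul_ne_top htwo htwo) (ENNReal.mul_ne_top
      (ENNReal.mul_ne_top (hC _ hb.le) (hC _ (sub_pos.2 hP).le)) h.const_ne_top))
      (geomConst_lt_top (sub_pos.2 hpr)).ne, fun φ hφ S B hB ↦ ?_⟩
  set σ : (Fin n → ℝ) → ℝ≥0∞ := fun x ↦ ν x ^ (1 - P) * V x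
  have hσ : Measurable σ := by fun_prop
  have hconv {g : (Fin n → ℝ) → ℝ≥0∞} (hg : Measurable g) (A : Set (Fin n → ℝ))
      (hA : MeasurableSet A) : ∫⁻ x in A, g x ∂volume.withDensity σ = ∫⁻ x in A, g x * σ x := by
    rw [restrict_withDensity hA, lintegral_withDensity_eq_lintegral_mul _ hσ hg]
    simp only [Pi.mul_apply, mul_comm]
  have hconv' {g : (Fin n → ℝ) → ℝ≥0∞} (hg : Measurable g) :
      ∫⁻ x, g x ∂volume.withDensity σ = ∫⁻ x, g x * σ x := by
    simpa only [setLIntegral_univ] using hconv hg univ .univ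
  have hS := measurable_dyadicSup S fun J ↦ J.avg φ
  rw [← hconv' (hS.pow_const r), ← hconv' (hφ.pow_const r)]
  refine lintegral_dyadicSup_rpow_le hφ hp0 hpr (fun ψ hψ I ↦ ?_) hB
  rw [withDensity_toSet, hconv (hψ.pow_const p) _ I.measurableSet_toSet, ← volume_mul_avg,
    mul_left_comm, mul_left_comm _ (volume I.toSet)]
  exact mul_le_mul_right (h.avg_rpow_mul_avg_le hP hp hψ I) _

lemma rpow_avg_right_le (h : DyadicWeightPair ν V C s κ) {ε : ℝ} (hε : 0 < ε)
    (I : DyadicCube n) : I.avg V ^ ε ≤ C ^ ε * I.avg fun x ↦ V x ^ ε := by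
  have hκ := h.pos
  have hV := h.measurable_right
  set t := κ / (κ + ε) with ht
  have ht0 : 0 < t := by positivity
  have ht1 : 1 - t = ε / (κ + ε) := by rw [ht]; field_simp; ring
  have hexp : (1 - t) * (1 / t) = 1 / κ * ε := by rw [ht1, ht]; field_simp
  set D := I.avg fun x ↦ V x ^ (-κ)
  have hone : 1 ≤ I.avg (fun x ↦ V x ^ ε) ^ t * D ^ (1 - t) := by
    have hholder := lintegral_rpow_mul_rpow_mul_rpow_le (μ := I.unif) (f := fun x ↦ V x ^ ε)
      (g := fun x ↦ V x ^ (-κ)) (h := fun _ ↦ 1) (by fun_prop) (by fun_prop) (by fun_prop)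
      ht0.le (b := 1 - t) (by rw [ht1]; positivity) le_rfl (by linarith)
    simp only [ENNReal.rpow_zero, mul_one] at hholder
    refine le_trans ?_ hholder
    rw [← measure_univ (μ := I.unif), ← lintegral_one]
    refine lintegral_mono_ae ?_
    filter_upwards [I.unif_absolutelyContinuous.ae_le h.right_ne_zero] with x hx
    have hneg : -κ * (ε / (κ + ε)) = -(ε * (κ / (κ + ε))) := by ring
    rw [← ENNReal.rpow_mul, ← ENNReal.rpow_mul, ht1, ht, hneg,
      rpow_mul_rpow_neg hx (h.right_ne_top x)]
  have hone' : 1 ≤ I.avg (fun x ↦ V x ^ ε) * D ^ (1 / κ * ε) := by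
    have hrpow := ENNReal.rpow_le_rpow hone (one_div_pos.2 ht0).le
    rwa [ENNReal.one_rpow, ENNReal.mul_rpow_of_nonneg _ _ (one_div_pos.2 ht0).le,
      ← ENNReal.rpow_mul, ← ENNReal.rpow_mul, mul_one_div_cancel ht0.ne', ENNReal.rpow_one,
      hexp] at hrpow
  calc I.avg V ^ ε ≤ I.avg V ^ ε * (I.avg (fun x ↦ V x ^ ε) * D ^ (1 / κ * ε)) :=
        le_mul_of_one_le_right' hone'
    _ = (I.avg V * D ^ (1 / κ)) ^ ε * I.avg (fun x ↦ V x ^ ε) := by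
        rw [ENNReal.mul_rpow_of_nonneg _ _ hε.le, ← ENNReal.rpow_mul]
        ring
    _ ≤ C ^ ε * I.avg fun x ↦ V x ^ ε :=
        mul_le_mul_left (ENNReal.rpow_le_rpow (h.avg_mul_avg_le I) hε.le) _

lemma avg_rpow_le_of_lt (h : DyadicWeightPair ν V C s κ) {t : ℝ} (ht : 0 < t) (hts : t < s)
    (I : DyadicCube n) : I.avg (fun x ↦ ν x ^ t) ≤ C ^ (t / s) * I.avg ν ^ t := by
  have hs : 0 < s := ht.trans hts
  have hν := h.measurable_left
  have hd : 0 ≤ t / s := (div_pos ht hs).le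
  calc I.avg (fun x ↦ ν x ^ t) = I.avg fun x ↦ (ν x ^ s) ^ (t / s) := by
        simp only [← ENNReal.rpow_mul, mul_div_cancel₀ _ hs.ne']
    _ ≤ I.avg (fun x ↦ ν x ^ s) ^ (t / s) :=
        lintegral_rpow_le_rpow_lintegral (by fun_prop) hd ((div_le_one hs).2 hts.le)
    _ ≤ (C * I.avg ν ^ s) ^ (t / s) := ENNReal.rpow_le_rpow (h.avg_rpow_le I) hd
    _ = C ^ (t / s) * I.avg ν ^ t := by
        rw [ENNReal.mul_rpow_of_nonneg _ _ hd, ← ENNReal.rpow_mul, mul_div_cancel₀ _ hs.ne']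

end DyadicWeightPair

end WeightPairs

section Majorants

variable {n : ℕ} {S : Set (DyadicCube n)} {φ : (Fin n → ℝ) → ℝ≥0∞} {I : DyadicCube n}
  {x : Fin n → ℝ} {t δ : ℝ}

/-- The Coifman–Rochberg majorant of `φ ^ t`: the `t`-th power of the maximal function of `φ`
over the cubes of `S`. The maximum with `φ` itself makes up for the missing small cubes. -/
def coifmanRochberg (S : Set (DyadicCube n)) (φ : (Fin n → ℝ) → ℝ≥0∞) (t : ℝ)
    (x : Fin n → ℝ) : ℝ≥0∞ :=
  max (φ x) (dyadicSup S (fun J ↦ J.avg φ) x) ^ t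

lemma measurable_coifmanRochberg (hφ : Measurable φ) (S : Set (DyadicCube n)) (t : ℝ) :
    Measurable (coifmanRochberg S φ t) :=
  (hφ.max (measurable_dyadicSup _ _)).pow_const _

lemma rpow_le_coifmanRochberg (ht : 0 ≤ t) : φ x ^ t ≤ coifmanRochberg S φ t x :=
  ENNReal.rpow_le_rpow (le_max_left _ _) ht

lemma coifmanRochberg_rpow (a : ℝ) : coifmanRochberg S φ t x ^ a = coifmanRochberg S φ (t * a) x :=
  (ENNReal.rpow_mul _ _ _).symm

lemma max_rpow_le_add (a b : ℝ≥0∞) : max a b ^ t ≤ a ^ t + b ^ t := by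
  rcases max_choice a b with h | h <;> rw [h]
  exacts [le_self_add, le_add_self]

/-- The supremum of the coefficients `a J` over the cubes `J ∈ S` containing `I`. -/
def ancestorSup (S : Set (DyadicCube n)) (a : DyadicCube n → ℝ≥0∞) (I : DyadicCube n) : ℝ≥0∞ :=
  ⨆ J ∈ S ∩ Ici I, a J

lemma ancestorSup_le_dyadicSup {a : DyadicCube n → ℝ≥0∞} (hx : x ∈ I.toSet) :
    ancestorSup S a I ≤ dyadicSup S a x :=
  iSup₂_le fun _ hJ ↦ le_dyadicSup hJ.1 (hJ.2.2 hx)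

lemma dyadicSup_le_max {a : DyadicCube n → ℝ≥0∞} (hx : x ∈ I.toSet) :
    dyadicSup S a x ≤ max (dyadicSup (S ∩ Iic I) a x) (ancestorSup S a I) := by
  refine dyadicSup_le fun J hJ hxJ ↦ ?_
  rcases le_total I.scale J.scale with hle | hle
  · exact le_max_of_le_right (le_iSup₂_of_le J ⟨hJ, le_of_inter_nonempty ⟨x, hx, hxJ⟩ hle⟩ le_rfl)
  · exact le_max_of_le_left (le_dyadicSup ⟨hJ, le_of_inter_nonempty ⟨x, hxJ, hx⟩ hle⟩ hxJ)

/-- The factor by which the average of a Coifman–Rochberg majorant of exponent `δ` over a cube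
exceeds the `δ`-th power of the largest average over the ancestors of that cube. -/
def coifmanRochbergConst (δ : ℝ) : ℝ≥0∞ := 1 + 2 ^ δ * (geomConst δ + geomConst (1 - δ)) + 1

lemma coifmanRochbergConst_ne_top (hδ : 0 < δ) (hδ1 : δ < 1) : coifmanRochbergConst δ ≠ ⊤ := by
  have hgeom := ENNReal.add_ne_top.2
    ⟨(geomConst_lt_top hδ).ne, (geomConst_lt_top (sub_pos.2 hδ1)).ne⟩
  have htwo := ENNReal.rpow_ne_top_of_nonneg hδ.le ofNat_ne_top (x := 2)
  rw [coifmanRochbergConst]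
  finiteness

lemma avg_coifmanRochberg_le (hφ : Measurable φ) (hI : I ∈ S) (hδ : 0 < δ) (hδ1 : δ < 1) :
    I.avg (coifmanRochberg S φ δ) ≤
      coifmanRochbergConst δ * ancestorSup S (fun J ↦ J.avg φ) I ^ δ := by
  set a : DyadicCube n → ℝ≥0∞ := fun J ↦ J.avg φ
  set μ := ancestorSup S a I
  have hIμ : I.avg φ ≤ μ := le_iSup₂_of_le (f := fun J _ ↦ a J) I ⟨hI, self_mem_Ici⟩ le_rfl
  have hpt : ∀ᵐ x ∂I.unif,
      coifmanRochberg S φ δ x ≤ φ x ^ δ + (dyadicSup (S ∩ Iic I) a x ^ δ + μ ^ δ) := by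
    filter_upwards [I.ae_mem_unif] with x hx
    refine (max_rpow_le_add _ _).trans (add_le_add_right ?_ _)
    exact (ENNReal.rpow_le_rpow (dyadicSup_le_max hx) hδ.le).trans (max_rpow_le_add _ _)
  calc I.avg (coifmanRochberg S φ δ)
    _ ≤ I.avg (fun x ↦ φ x ^ δ) + (I.avg (fun x ↦ dyadicSup (S ∩ Iic I) a x ^ δ) + μ ^ δ) := by
        refine (lintegral_mono_ae hpt).trans_eq ?_
        rw [lintegral_add_left (hφ.pow_const δ),
          lintegral_add_left ((measurable_dyadicSup _ _).pow_const δ), lintegral_const,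
          measure_univ, mul_one]
    _ ≤ μ ^ δ + (2 ^ δ * (geomConst δ + geomConst (1 - δ)) * μ ^ δ + μ ^ δ) := by
        refine add_le_add ?_ (add_le_add_left ?_ _)
        · exact (lintegral_rpow_le_rpow_lintegral hφ.aemeasurable hδ.le hδ1.le).trans
            (ENNReal.rpow_le_rpow hIμ hδ.le)
        · exact (avg_dyadicSup_rpow_le inter_subset_right hδ).trans
            (mul_le_mul_right (ENNReal.rpow_le_rpow hIμ hδ.le) _)
    _ = coifmanRochbergConst δ * μ ^ δ := by
        rw [coifmanRochbergConst]
        ring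

namespace DyadicCube

lemma volume_mul_avg_indicator {A : Set (Fin n → ℝ)} (hA : MeasurableSet A) (hAI : A ⊆ I.toSet)
    (f : (Fin n → ℝ) → ℝ≥0∞) : volume I.toSet * I.avg (A.indicator f) = ∫⁻ x in A, f x := by
  rw [volume_mul_avg, lintegral_indicator hA, Measure.restrict_restrict hA,
    inter_eq_self_of_subset_left hAI]

lemma avg_indicator_rpow_mul_rpow_le {A : Set (Fin n → ℝ)} (hA : MeasurableSet A)
    (hAI : A ⊆ I.toSet) {f g : (Fin n → ℝ) → ℝ≥0∞} (hf : Measurable f) (hg : Measurable g)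
    {a ε θ : ℝ} (ha : 0 ≤ a) (hε : 0 ≤ ε) (hθ : 0 < θ) (hsum : a + ε + θ ≤ 1) :
    I.avg (A.indicator fun x ↦ f x ^ a * g x ^ ε) ≤
      I.avg f ^ a * I.avg g ^ ε * (volume A / volume I.toSet) ^ θ := by
  have hvol : I.avg (A.indicator 1) = volume A / volume I.toSet := by
    rw [ENNReal.eq_div_iff I.volume_toSet_ne_zero I.volume_toSet_ne_top,
      volume_mul_avg_indicator hA hAI]
    exact setLIntegral_one A
  rw [← hvol]
  refine le_of_eq_of_le (congrArg _ ?_) (lintegral_rpow_mul_rpow_mul_rpow_le hf.aemeasurable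
    hg.aemeasurable (measurable_one.indicator hA).aemeasurable ha hε hθ.le hsum)
  funext x
  by_cases hx : x ∈ A <;> simp [hx, hθ]

end DyadicCube

/-- A dyadic `A_∞` condition for the weight `W`, restricted to the cubes of `S`: the
`W`-proportion of a subset is at most a power of its Lebesgue proportion. -/
def DyadicAInftyOn (S : Set (DyadicCube n)) (W : (Fin n → ℝ) → ℝ≥0∞) (K : ℝ≥0∞) (θ : ℝ) : Prop :=
  ∀ I ∈ S, ∫⁻ x in I.toSet, W x ≠ ⊤ ∧ ∀ A, MeasurableSet A → A ⊆ I.toSet →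
    ∫⁻ x in A, W x ≤ K * (volume A / volume I.toSet) ^ θ * ∫⁻ x in I.toSet, W x

lemma DyadicAInftyOn.mono {W : (Fin n → ℝ) → ℝ≥0∞} {K K' : ℝ≥0∞} {θ : ℝ}
    (h : DyadicAInftyOn S W K θ) (hK : K ≤ K') : DyadicAInftyOn S W K' θ := fun I hI ↦
  ⟨(h I hI).1, fun A hA hAI ↦ ((h I hI).2 A hA hAI).trans
    (mul_le_mul_left (mul_le_mul_left hK _) _)⟩

lemma dyadicAInftyOn_coifmanRochberg_mul_rpow (hφ : Measurable φ)
    {V : (Fin n → ℝ) → ℝ≥0∞} (hV : Measurable V) {a ε θ : ℝ} {K : ℝ≥0∞}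
    (hδ : 0 < δ) (hδ1 : δ < 1) (ha : 0 ≤ a) (hε : 0 ≤ ε) (hθ : 0 < θ) (hsum : a + ε + θ ≤ 1)
    (hK : ∀ I ∈ S, I.avg V ^ ε ≤ K * I.avg fun x ↦ V x ^ ε) (hVtop : ∀ I ∈ S, I.avg V ≠ ⊤)
    (htop : ∀ I ∈ S, ancestorSup S (fun J ↦ J.avg φ) I ≠ ⊤) :
    DyadicAInftyOn S (fun x ↦ coifmanRochberg S φ (δ * a) x * V x ^ ε)
      (coifmanRochbergConst δ ^ a * K) θ := by
  intro I hI
  set μ := ancestorSup S (fun J ↦ J.avg φ) I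
  set W : (Fin n → ℝ) → ℝ≥0∞ := fun x ↦ coifmanRochberg S φ (δ * a) x * V x ^ ε with hW
  have hδa : 0 ≤ δ * a := mul_nonneg hδ.le ha
  have hupper {A : Set (Fin n → ℝ)} (hA : MeasurableSet A) (hAI : A ⊆ I.toSet) :
      I.avg (A.indicator W) ≤ coifmanRochbergConst δ ^ a * μ ^ (δ * a) * I.avg V ^ ε *
        (volume A / volume I.toSet) ^ θ := by
    simp only [hW, ← coifmanRochberg_rpow]
    refine (avg_indicator_rpow_mul_rpow_le hA hAI (measurable_coifmanRochberg hφ S δ) hV ha hε hθ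
      hsum).trans (mul_le_mul_left (mul_le_mul_left ?_ _) _)
    rw [ENNReal.rpow_mul, ← ENNReal.mul_rpow_of_nonneg _ _ ha]
    exact ENNReal.rpow_le_rpow (avg_coifmanRochberg_le hφ hI hδ hδ1) ha
  have hlower : μ ^ (δ * a) * I.avg (fun x ↦ V x ^ ε) ≤ I.avg W := by
    rw [avg, ← lintegral_const_mul _ (hV.pow_const ε)]
    refine lintegral_mono_ae (I.ae_mem_unif.mono fun x hx ↦ mul_le_mul_left ?_ _)
    exact ENNReal.rpow_le_rpow ((ancestorSup_le_dyadicSup hx).trans (le_max_right _ _)) hδa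
  constructor
  · rw [← volume_mul_avg_indicator I.measurableSet_toSet Subset.rfl]
    refine ENNReal.mul_ne_top I.volume_toSet_ne_top
      (ne_top_of_le_ne_top ?_ (hupper I.measurableSet_toSet Subset.rfl))
    have hconst := ENNReal.rpow_ne_top_of_nonneg ha (coifmanRochbergConst_ne_top hδ hδ1)
    have hμ := ENNReal.rpow_ne_top_of_nonneg hδa (htop I hI)
    have hVε := ENNReal.rpow_ne_top_of_nonneg hε (hVtop I hI)
    rw [ENNReal.div_self I.volume_toSet_ne_zero I.volume_toSet_ne_top, ENNReal.one_rpow, mul_one]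
    finiteness
  · intro A hA hAI
    rw [← volume_mul_avg_indicator hA hAI, ← volume_mul_avg, mul_left_comm]
    refine mul_le_mul_right ?_ _
    calc I.avg (A.indicator W)
      _ ≤ coifmanRochbergConst δ ^ a * μ ^ (δ * a) * (K * I.avg fun x ↦ V x ^ ε) *
            (volume A / volume I.toSet) ^ θ :=
          (hupper hA hAI).trans (mul_le_mul_left (mul_le_mul_right (hK I hI) _) _)
      _ = coifmanRochbergConst δ ^ a * K * (volume A / volume I.toSet) ^ θ *
            (μ ^ (δ * a) * I.avg fun x ↦ V x ^ ε) := by ring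
      _ ≤ coifmanRochbergConst δ ^ a * K * (volume A / volume I.toSet) ^ θ * I.avg W :=
          mul_le_mul_right hlower _

end Majorants

namespace DyadicWeightPair

variable {n : ℕ} {ν V φ : (Fin n → ℝ) → ℝ≥0∞} {C : ℝ≥0∞} {s κ t : ℝ} {S : Set (DyadicCube n)}

lemma exists_coifmanRochberg_le (h : DyadicWeightPair ν V C s κ) (ht : 0 < t) (hts : t < s) :
    ∃ K ≠ ⊤, ∀ φ : (Fin n → ℝ) → ℝ≥0∞, (∀ x, φ x ≤ ν x ^ t) → ∀ S : Set (DyadicCube n),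
      ∀ᵐ x, coifmanRochberg S φ (1 / t) x ≤ K * ν x := by
  have hC (a : ℝ) (ha : 0 ≤ a) : C ^ a ≠ ⊤ := ENNReal.rpow_ne_top_of_nonneg ha h.const_ne_top
  refine ⟨(1 + C ^ (t / s) * C ^ t) ^ (1 / t),
    ENNReal.rpow_ne_top_of_nonneg (one_div_pos.2 ht).le (ENNReal.add_ne_top.2 ⟨one_ne_top,
      ENNReal.mul_ne_top (hC _ (div_pos ht (ht.trans hts)).le) (hC _ ht.le)⟩), fun φ hφ S ↦ ?_⟩
  have hA : ∀ᵐ x, ∀ I : DyadicCube n, x ∈ I.toSet → I.avg ν ≤ C * ν x :=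
    ae_all_iff.2 fun I ↦ (ae_restrict_iff' I.measurableSet_toSet).1 (h.dyadicA1 I)
  filter_upwards [hA] with x hx
  have hinv : ν x = (ν x ^ t) ^ (1 / t) := by
    rw [← ENNReal.rpow_mul, mul_one_div_cancel ht.ne', ENNReal.rpow_one]
  rw [hinv, ← ENNReal.mul_rpow_of_nonneg _ _ (one_div_pos.2 ht).le, add_mul, one_mul]
  refine ENNReal.rpow_le_rpow (max_le ((hφ x).trans le_self_add) ?_) (one_div_pos.2 ht).le
  refine le_add_of_le_right (dyadicSup_le fun I _ hxI ↦ ?_)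
  calc I.avg φ ≤ C ^ (t / s) * I.avg ν ^ t :=
        (lintegral_mono hφ).trans (h.avg_rpow_le_of_lt ht hts I)
    _ ≤ C ^ (t / s) * (C * ν x) ^ t :=
        mul_le_mul_right (ENNReal.rpow_le_rpow (hx I hxI) ht.le) _
    _ = C ^ (t / s) * C ^ t * ν x ^ t := by rw [ENNReal.mul_rpow_of_nonneg _ _ ht.le, mul_assoc]

lemma exists_lintegral_coifmanRochberg_rpow_le (h : DyadicWeightPair ν V C s κ) {P p : ℝ}
    (ht : 0 < t) (hP : 1 < P) (hp : (P - 1) / s + 1 / κ + 1 ≤ p) (hpt : p < P / t) :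
    ∃ K ≠ ⊤, ∀ E, MeasurableSet E → ∀ (S : Set (DyadicCube n)) (B : ℤ), (∀ I ∈ S, I.scale ≤ B) →
      ∫⁻ x, coifmanRochberg S (E.indicator fun x ↦ ν x ^ t) (1 / t) x ^ P *
        (ν x ^ (1 - P) * V x) ≤ K * ∫⁻ x in E, ν x * V x := by
  obtain ⟨K, hK, hmax⟩ := h.exists_lintegral_dyadicSup_rpow_mul_le hP hp hpt
  refine ⟨1 + K, ENNReal.add_ne_top.2 ⟨one_ne_top, hK⟩, fun E hE S B hB ↦ ?_⟩
  have hν := h.measurable_left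
  have hV := h.measurable_right
  set φ := E.indicator fun x ↦ ν x ^ t with hφ
  have hφm : Measurable φ := (hν.pow_const t).indicator hE
  have hφP : ∫⁻ x, φ x ^ (P / t) * (ν x ^ (1 - P) * V x) = ∫⁻ x in E, ν x * V x := by
    rw [← lintegral_indicator hE]
    refine lintegral_congr_ae ?_
    filter_upwards [h.left_ne_zero] with x hx
    by_cases hxE : x ∈ E
    · simp only [hφ, indicator_of_mem hxE]
      rw [← ENNReal.rpow_mul, mul_div_cancel₀ _ ht.ne', ← mul_assoc,
        ← ENNReal.rpow_add _ _ hx (h.left_ne_top x), add_sub_cancel, ENNReal.rpow_one]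
    · simp only [hφ, indicator_of_notMem hxE]
      rw [ENNReal.zero_rpow_of_pos (div_pos (zero_lt_one.trans hP) ht), zero_mul]
  have hφσ : Measurable fun x ↦ φ x ^ (P / t) * (ν x ^ (1 - P) * V x) :=
    (hφm.pow_const _).mul ((hν.pow_const _).mul hV)
  calc ∫⁻ x, coifmanRochberg S φ (1 / t) x ^ P * (ν x ^ (1 - P) * V x)
    _ ≤ ∫⁻ x, (φ x ^ (P / t) * (ν x ^ (1 - P) * V x) +
          dyadicSup S (fun J ↦ J.avg φ) x ^ (P / t) * (ν x ^ (1 - P) * V x)) := by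
        refine lintegral_mono fun x ↦ ?_
        rw [← add_mul, coifmanRochberg_rpow, one_div_mul_eq_div]
        exact mul_le_mul_left (max_rpow_le_add _ _) _
    _ = (∫⁻ x, φ x ^ (P / t) * (ν x ^ (1 - P) * V x)) +
          ∫⁻ x, dyadicSup S (fun J ↦ J.avg φ) x ^ (P / t) * (ν x ^ (1 - P) * V x) :=
        lintegral_add_left hφσ _
    _ ≤ (1 + K) * ∫⁻ x in E, ν x * V x := by
        rw [add_mul, one_mul, ← hφP]
        exact add_le_add le_rfl (hmax φ hφm S B hB)

lemma ancestorSup_ne_top (h : DyadicWeightPair ν V C s κ) (ht : 0 < t) (hts : t < s)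
    (hφ : ∀ x, φ x ≤ ν x ^ t) (S : Set (DyadicCube n)) (I : DyadicCube n) :
    ancestorSup S (fun J ↦ J.avg φ) I ≠ ⊤ := by
  obtain ⟨K, hK, hle⟩ := h.exists_coifmanRochberg_le ht hts
  have hae : ∀ᵐ x ∂I.unif, coifmanRochberg S φ (1 / t) x ≤ K * ν x :=
    I.unif_absolutelyContinuous.ae_le (hle φ hφ S)
  obtain ⟨x, hx, hxI⟩ := (hae.and I.ae_mem_unif).exists
  intro htop
  have hmax : ancestorSup S (fun J ↦ J.avg φ) I ≤
      max (φ x) (dyadicSup S (fun J ↦ J.avg φ) x) :=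
    (ancestorSup_le_dyadicSup hxI).trans (le_max_right _ _)
  rw [htop, top_le_iff] at hmax
  refine ENNReal.mul_ne_top hK (h.left_ne_top x) (top_le_iff.1 (le_of_eq_of_le ?_ hx))
  rw [coifmanRochberg, hmax, ENNReal.top_rpow_of_pos (one_div_pos.2 ht)]

end DyadicWeightPair

lemma exists_majorant_exponents {s κ : ℝ} (hs : 1 < s) (hκ : 0 < κ) : ∃ t δ P p ε : ℝ,
    0 < t ∧ t < s ∧ 0 < δ ∧ δ < 1 ∧ 1 < P ∧ (P - 1) / s + 1 / κ + 1 ≤ p ∧ p < P / t ∧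
      0 < ε ∧ ε < 1 ∧ ε * P < 1 ∧ 0 < 1 - 1 / (δ * t) - ε := by
  obtain ⟨t, ht1, hts⟩ := exists_between hs
  obtain ⟨t', ht'1, ht't⟩ := exists_between ht1
  have ht : 0 < t := zero_lt_one.trans ht1
  have ht' : 0 < t' := zero_lt_one.trans ht'1
  have hgap : 0 < 1 / t - 1 / s := sub_pos.2 (one_div_lt_one_div_of_lt ht hts)
  set P := (2 + 1 / κ) / (1 / t - 1 / s) + 1 with hP
  have hP1 : 1 < P := lt_add_of_pos_left _ (by positivity)
  have hPgap : (P - 1) * (1 / t - 1 / s) = 2 + 1 / κ := by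
    rw [hP, add_sub_cancel_right, div_mul_cancel₀ _ hgap.ne']
  have hmargin : 0 < 1 - 1 / t' := sub_pos.2 ((div_lt_one ht').2 ht'1)
  have hP0 : 0 < P := zero_lt_one.trans hP1
  have hmin₁ := min_le_left (1 / P) (1 - 1 / t')
  have hmin₂ := min_le_right (1 / P) (1 - 1 / t')
  have hεP : min (1 / P) (1 - 1 / t') / 2 * P < 1 := by
    rw [← lt_div_iff₀ hP0]
    linarith [one_div_pos.2 hP0]
  refine ⟨t, t' / t, P, _, min (1 / P) (1 - 1 / t') / 2, ht, hts, by positivity,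
    (div_lt_one ht).2 ht't, hP1, le_rfl, ?_, by positivity, ?_, hεP, ?_⟩
  · have hsplit : P / t = (P - 1) * (1 / t - 1 / s) + (P - 1) / s + 1 / t := by ring
    rw [hsplit, hPgap]
    linarith [one_div_pos.2 ht]
  · linarith [(div_lt_one hP0).2 hP1]
  · rw [div_mul_cancel₀ _ ht.ne']
    linarith

theorem DyadicWeightPair.exists_majorant {n : ℕ} {ν V : (Fin n → ℝ) → ℝ≥0∞} {C : ℝ≥0∞} {s κ : ℝ}
    (h : DyadicWeightPair ν V C s κ) : ∃ (ε P θ : ℝ) (K : ℝ≥0∞),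
      0 < ε ∧ ε < 1 ∧ 1 < P ∧ ε * P < 1 ∧ 0 < θ ∧ K ≠ ⊤ ∧
      ∀ E, MeasurableSet E → ∀ (S : Set (DyadicCube n)) (B : ℤ), (∀ I ∈ S, I.scale ≤ B) →
        ∃ u : (Fin n → ℝ) → ℝ≥0∞, Measurable u ∧ (∀ x ∈ E, ν x ≤ u x) ∧
          (∀ᵐ x, u x ≤ K * ν x) ∧
          ∫⁻ x, u x ^ P * (ν x ^ (1 - P) * V x) ≤ K * ∫⁻ x in E, ν x * V x ∧
          DyadicAInftyOn S (fun x ↦ u x * V x ^ ε) K θ := by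
  obtain ⟨t, δ, P, p, ε, ht, hts, hδ, hδ1, hP, hp, hpt, hε, hε1, hεP, hθ⟩ :=
    exists_majorant_exponents h.one_lt h.pos
  obtain ⟨K₁, hK₁, hle⟩ := h.exists_coifmanRochberg_le ht hts
  obtain ⟨K₂, hK₂, hint⟩ := h.exists_lintegral_coifmanRochberg_rpow_le ht hP hp hpt
  set K₃ := coifmanRochbergConst δ ^ (1 / (δ * t)) * C ^ ε
  have hK₃ : K₃ ≠ ⊤ := ENNReal.mul_ne_top (ENNReal.rpow_ne_top_of_nonneg (by positivity)
    (coifmanRochbergConst_ne_top hδ hδ1)) (ENNReal.rpow_ne_top_of_nonneg hε.le h.const_ne_top)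
  refine ⟨ε, P, 1 - 1 / (δ * t) - ε, K₁ + K₂ + K₃, hε, hε1, hP, hεP, hθ, by finiteness,
    fun E hE S B hB ↦ ?_⟩
  set φ := E.indicator fun x ↦ ν x ^ t with hφ
  have hφm : Measurable φ := (h.measurable_left.pow_const t).indicator hE
  have hφν (x) : φ x ≤ ν x ^ t := indicator_le_self E _ x
  refine ⟨coifmanRochberg S φ (1 / t), measurable_coifmanRochberg hφm _ _, fun x hx ↦ ?_, ?_, ?_,
    ?_⟩
  · refine le_of_eq_of_le ?_ (rpow_le_coifmanRochberg (one_div_pos.2 ht).le)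
    rw [hφ, indicator_of_mem hx, ← ENNReal.rpow_mul, mul_one_div_cancel ht.ne', ENNReal.rpow_one]
  · filter_upwards [hle φ hφν S] with x hx
    exact hx.trans (mul_le_mul_left (le_self_add.trans le_self_add) _)
  · exact (hint E hE S B hB).trans
      (mul_le_mul_left (le_add_self.trans le_self_add) _)
  · have hδt : δ * (1 / (δ * t)) = 1 / t := by field_simp
    rw [← hδt]
    exact (dyadicAInftyOn_coifmanRochberg_mul_rpow hφm h.measurable_right hδ hδ1 (by positivity)
      hε.le hθ (by linarith) (fun I _ ↦ h.rpow_avg_right_le hε I)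
      (fun I _ ↦ h.avg_right_ne_top I) fun I _ ↦ h.ancestorSup_ne_top ht hts hφν S I).mono
      le_add_self

/-! ### A good-λ inequality for dyadic sums -/

section GoodLambda

lemma lintegral_rpow_le_of_goodLambda {X : Type*} [MeasurableSpace X] {μ : Measure X}
    {F G : X → ℝ≥0∞} {p : ℝ} {η : ℝ≥0∞} (hp : 0 < p) (hη : 2 ^ p * η ≤ 2⁻¹) (hF : Measurable F)
    (hG : Measurable G) (hint : ∫⁻ x, F x ^ p ∂μ ≠ ⊤)
    (h : ∀ k : ℤ, μ {x | 2 * 2 ^ k < F x} ≤ η * μ {x | 2 ^ k < F x} + μ {x | 2 ^ k < G x}) :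
    ∫⁻ x, F x ^ p ∂μ ≤ 2 ^ p * (2 * (2 ^ p * geomConst p)) * ∫⁻ x, G x ^ p ∂μ := by
  set T : (X → ℝ≥0∞) → ℝ≥0∞ := fun f ↦ ∑' k : ℤ, ((2 : ℝ≥0∞) ^ k) ^ p * μ {x | 2 ^ k < f x}
  have hTG : T G ≤ geomConst p * ∫⁻ x, G x ^ p ∂μ := tsum_le_lintegral_rpow μ hp hG
  have hTF : T F ≠ ⊤ := ne_top_of_le_ne_top
    (ENNReal.mul_ne_top (geomConst_lt_top hp).ne hint) (tsum_le_lintegral_rpow μ hp hF)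
  have hstep : T F ≤ 2⁻¹ * T F + 2 ^ p * T G :=
    calc T F = ∑' k : ℤ, ((2 : ℝ≥0∞) ^ (k + 1)) ^ p * μ {x | 2 ^ (k + 1) < F x} :=
          ((Equiv.addRight (1 : ℤ)).tsum_eq
            fun k ↦ ((2 : ℝ≥0∞) ^ k) ^ p * μ {x | 2 ^ k < F x}).symm
      _ ≤ ∑' k : ℤ, (2⁻¹ * (((2 : ℝ≥0∞) ^ k) ^ p * μ {x | 2 ^ k < F x}) +
            2 ^ p * (((2 : ℝ≥0∞) ^ k) ^ p * μ {x | 2 ^ k < G x})) := by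
          refine ENNReal.tsum_le_tsum fun k ↦ ?_
          rw [ENNReal.zpow_add two_ne_zero ofNat_ne_top, zpow_one, mul_comm (_ ^ k),
            ENNReal.mul_rpow_of_nonneg _ _ hp.le]
          calc 2 ^ p * (2 ^ k) ^ p * μ {x | 2 * 2 ^ k < F x}
            _ ≤ 2 ^ p * (2 ^ k) ^ p * (η * μ {x | 2 ^ k < F x} + μ {x | 2 ^ k < G x}) :=
                mul_le_mul_right (h k) _
            _ = 2 ^ p * η * ((2 ^ k) ^ p * μ {x | 2 ^ k < F x}) +
                  2 ^ p * ((2 ^ k) ^ p * μ {x | 2 ^ k < G x}) := by ring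
            _ ≤ _ := add_le_add_left (mul_le_mul_left hη _) _
      _ = 2⁻¹ * T F + 2 ^ p * T G := by
          rw [ENNReal.tsum_add, ENNReal.tsum_mul_left, ENNReal.tsum_mul_left]
  have hhalf : 2⁻¹ * T F ≤ 2 ^ p * T G := by
    refine ENNReal.le_of_add_le_add_left (a := 2⁻¹ * T F)
      (ENNReal.mul_ne_top (by simp) hTF) ?_
    rwa [← add_mul, ENNReal.inv_two_add_inv_two, one_mul]
  calc ∫⁻ x, F x ^ p ∂μ ≤ 2 ^ p * T F := lintegral_rpow_le_tsum μ hp hF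
    _ = 2 ^ p * (2 * (2⁻¹ * T F)) := by
        rw [ENNReal.mul_inv_cancel_left two_ne_zero ofNat_ne_top]
    _ ≤ 2 ^ p * (2 * (2 ^ p * (geomConst p * ∫⁻ x, G x ^ p ∂μ))) :=
        mul_le_mul_right (mul_le_mul_right (hhalf.trans (mul_le_mul_right hTG _)) _) _
    _ = 2 ^ p * (2 * (2 ^ p * geomConst p)) * ∫⁻ x, G x ^ p ∂μ := by ring

variable {n : ℕ} {S : Finset (DyadicCube n)} {a : DyadicCube n → ℝ≥0∞} {I : DyadicCube n}
  {x : Fin n → ℝ} {l : ℝ≥0∞}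

/-- The dyadic operator `∑_{I ∈ S} a_I 1_I`, the linear counterpart of `dyadicSup`. -/
def dyadicSum (S : Finset (DyadicCube n)) (a : DyadicCube n → ℝ≥0∞) (x : Fin n → ℝ) : ℝ≥0∞ :=
  ∑ I ∈ S, I.toSet.indicator (fun _ ↦ a I) x

lemma measurable_dyadicSum (S : Finset (DyadicCube n)) (a : DyadicCube n → ℝ≥0∞) :
    Measurable (dyadicSum S a) :=
  Finset.measurable_fun_sum S fun I _ ↦ measurable_const.indicator I.measurableSet_toSet

open Classical in
lemma dyadicSum_eq_sum_filter : dyadicSum S a x = ∑ I ∈ S with x ∈ I.toSet, a I := by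
  simp only [dyadicSum, Finset.sum_filter, indicator_apply]

open Classical in
/-- The sum of the coefficients `a J` over the cubes `J ∈ S` containing `I`. -/
def ancestorSum (S : Finset (DyadicCube n)) (a : DyadicCube n → ℝ≥0∞) (I : DyadicCube n) :
    ℝ≥0∞ :=
  ∑ J ∈ S with I ≤ J, a J

lemma ancestorSum_le_dyadicSum (hx : x ∈ I.toSet) : ancestorSum S a I ≤ dyadicSum S a x := by
  classical
  rw [dyadicSum_eq_sum_filter, ancestorSum]
  exact Finset.sum_le_sum_of_subset (Finset.monotone_filter_right S fun J _ hIJ ↦ hIJ.2 hx)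

lemma dyadicSup_ancestorSum : dyadicSup S (ancestorSum S a) x = dyadicSum S a x := by
  classical
  refine le_antisymm (dyadicSup_le fun I _ hx ↦ ancestorSum_le_dyadicSum hx) ?_
  rw [dyadicSum_eq_sum_filter]
  rcases (S.filter (x ∈ ·.toSet)).eq_empty_or_nonempty with hempty | hne
  · simp [hempty]
  obtain ⟨I, hI, hmin⟩ := Finset.exists_min_image _ scale hne
  rw [Finset.mem_filter] at hI
  refine le_trans (Finset.sum_le_sum_of_subset fun J hJ ↦ ?_) (le_dyadicSup hI.1 hI.2)
  have hIJ := hmin J hJ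
  rw [Finset.mem_filter] at hJ ⊢
  exact ⟨hJ.1, le_of_inter_nonempty ⟨x, hI.2, hJ.2⟩ hIJ⟩

open Classical in
lemma sum_strict_ancestors_le (hI : Maximal (fun J ↦ J ∈ S ∧ l < ancestorSum S a J) I) :
    ∑ J ∈ S with I < J, a J ≤ l := by
  rcases (S.filter (I < ·)).eq_empty_or_nonempty with hempty | hne
  · simp [hempty]
  obtain ⟨J₀, hJ₀, hmin⟩ := Finset.exists_min_image _ scale hne
  rw [Finset.mem_filter] at hJ₀
  have hle : ancestorSum S a J₀ ≤ l := by
    by_contra! hlt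
    exact hI.not_prop_of_gt hJ₀.2 ⟨hJ₀.1, hlt⟩
  refine le_trans (Finset.sum_le_sum_of_subset fun J hJ ↦ ?_) hle
  have hJ₀J := hmin J hJ
  obtain ⟨x, hx⟩ := I.toSet_nonempty
  rw [Finset.mem_filter] at hJ ⊢
  exact ⟨hJ.1, le_of_inter_nonempty ⟨x, hJ₀.2.le.2 hx, hJ.2.le.2 hx⟩ hJ₀J⟩

open Classical in
lemma dyadicSum_le_add_of_maximal (hI : Maximal (fun J ↦ J ∈ S ∧ l < ancestorSum S a J) I)
    (hx : x ∈ I.toSet) : dyadicSum S a x ≤ dyadicSum {J ∈ S | J ≤ I} a x + l := by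
  refine le_trans ?_ (add_le_add_right (sum_strict_ancestors_le hI) _)
  rw [dyadicSum_eq_sum_filter, dyadicSum_eq_sum_filter]
  refine (Finset.sum_le_sum_of_subset fun J hJ ↦ ?_).trans
    (le_self_add.trans (Finset.sum_union_inter (f := a)).le)
  rw [Finset.mem_filter] at hJ
  rw [Finset.mem_union, Finset.mem_filter, Finset.mem_filter, Finset.mem_filter]
  rcases le_or_gt J.scale I.scale with hle | hlt
  · exact Or.inl ⟨⟨hJ.1, le_of_inter_nonempty ⟨x, hJ.2, hx⟩ hle⟩, hJ.2⟩
  · exact Or.inr ⟨hJ.1, (le_of_inter_nonempty ⟨x, hx, hJ.2⟩ hlt.le).lt_of_not_ge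
      fun h ↦ hlt.not_ge h.1⟩

open Classical in
/-- The sums `∑_{J ⊆ I} a_J 1_J` are comparable, in `L^e` average over `I`, to the single
coefficient `a_I`. -/
def HasLocalSumBound (a : DyadicCube n → ℝ≥0∞) (L : ℝ≥0∞) (e : ℝ) : Prop :=
  ∀ (S : Finset (DyadicCube n)) (I : DyadicCube n),
    I.avg (fun x ↦ dyadicSum {J ∈ S | J ≤ I} a x ^ e) ≤ L * a I ^ e

variable {W : (Fin n → ℝ) → ℝ≥0∞} {L K γ : ℝ≥0∞} {e θ p : ℝ}

lemma unif_lt_dyadicSum_le (hL : HasLocalSumBound a L e) (he : 0 < e) (hl0 : l ≠ 0) (hlt : l ≠ ⊤)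
    (hI : Maximal (fun J ↦ J ∈ S ∧ l < ancestorSum S a J) I) (haI : a I ≤ γ * l) :
    I.unif {x | 2 * l < dyadicSum S a x} ≤ L * γ ^ e := by
  classical
  have hle0 : l ^ e ≠ 0 := (ENNReal.rpow_pos hl0.bot_lt hlt).ne'
  have hlet : l ^ e ≠ ⊤ := ENNReal.rpow_ne_top_of_nonneg he.le hlt
  rw [← ENNReal.mul_le_mul_iff_right hle0 hlet]
  calc l ^ e * I.unif {x | 2 * l < dyadicSum S a x}
    _ ≤ l ^ e * I.unif {x | l ^ e ≤ dyadicSum {J ∈ S | J ≤ I} a x ^ e} := by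
        refine mul_le_mul_right (measure_mono_ae ?_) _
        filter_upwards [I.ae_mem_unif] with x hx (hlx : 2 * l < dyadicSum S a x)
        have hsplit := hlx.trans_le (dyadicSum_le_add_of_maximal hI hx)
        rw [two_mul] at hsplit
        exact ENNReal.rpow_le_rpow (lt_of_add_lt_add_right hsplit).le he.le
    _ ≤ I.avg fun x ↦ dyadicSum {J ∈ S | J ≤ I} a x ^ e :=
        mul_meas_ge_le_lintegral ((measurable_dyadicSum _ a).pow_const e) _
    _ ≤ L * (γ * l) ^ e := (hL S I).trans (mul_le_mul_right (ENNReal.rpow_le_rpow haI he.le) _)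
    _ = l ^ e * (L * γ ^ e) := by
        rw [ENNReal.mul_rpow_of_nonneg _ _ he.le]
        ring

lemma goodLambda (hL : HasLocalSumBound a L e) (he : 0 < e)
    (hW : DyadicAInftyOn S W K θ) (hθ : 0 ≤ θ) (hl0 : l ≠ 0) (hlt : l ≠ ⊤) :
    volume.withDensity W {x | 2 * l < dyadicSum S a x ∧ dyadicSup S a x ≤ γ * l} ≤
      K * (L * γ ^ e) ^ θ * volume.withDensity W {x | l < dyadicSum S a x} := by
  set μ := volume.withDensity W
  set A := {x | 2 * l < dyadicSum S a x ∧ dyadicSup S a x ≤ γ * l}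
  have hA : MeasurableSet A := (measurableSet_lt measurable_const (measurable_dyadicSum S a)).inter
    (measurableSet_le (measurable_dyadicSup _ a) measurable_const)
  have hAsub : A ⊆ {x | l < dyadicSum S a x} := fun x hx ↦
    (le_add_self.trans (two_mul l).ge).trans_lt hx.1
  obtain ⟨B, hB⟩ := (S.image scale).exists_le
  suffices hI : ∀ I, Maximal (fun J ↦ J ∈ (S : Set (DyadicCube n)) ∧ l < ancestorSum S a J) I →
      μ.restrict A I.toSet ≤ (K * (L * γ ^ e) ^ θ) • μ I.toSet by
    have hcover := measure_lt_dyadicSup_le (fun I hI ↦ hB _ (Finset.mem_image_of_mem _ hI))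
      (σ := μ.restrict A) (τ := (K * (L * γ ^ e) ^ θ) • μ) hI
    simp only [dyadicSup_ancestorSum] at hcover
    rwa [Measure.restrict_apply' hA, inter_eq_self_of_subset_right hAsub] at hcover
  intro I hI
  rw [Measure.restrict_apply' hA]
  rcases (I.toSet ∩ A).eq_empty_or_nonempty with hempty | ⟨y, hyI, hyA⟩
  · simp [hempty]
  have hunif : volume (I.toSet ∩ A) / volume I.toSet ≤ L * γ ^ e := by
    refine le_trans ?_ (unif_lt_dyadicSum_le hL he hl0 hlt hI
      ((le_dyadicSup hI.prop.1 hyI).trans hyA.2))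
    rw [unif, Measure.smul_apply, Measure.restrict_apply' I.measurableSet_toSet, smul_eq_mul,
      ENNReal.div_eq_inv_mul]
    have hsub : I.toSet ∩ A ⊆ {x | 2 * l < dyadicSum S a x} ∩ I.toSet :=
      fun x hx ↦ ⟨hx.2.1, hx.1⟩
    exact mul_le_mul_right (measure_mono hsub) _
  have hIA := I.measurableSet_toSet.inter hA
  rw [withDensity_apply _ hIA, withDensity_apply _ I.measurableSet_toSet]
  exact ((hW I hI.prop.1).2 _ hIA inter_subset_left).trans
    (mul_le_mul_left (mul_le_mul_right (ENNReal.rpow_le_rpow hunif hθ) _) _)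

lemma exists_goodLambda_ratio (he : 0 < e) (hθ : 0 < θ) (M : ℝ≥0∞) (hM : M ≠ ⊤) (hL : L ≠ ⊤) :
    ∃ γ ≠ 0, γ ≠ ⊤ ∧ M * (L * γ ^ e) ^ θ ≤ 2⁻¹ := by
  set A := 2 * (M * L ^ θ) + 1
  have hA : A ≠ ⊤ := by finiteness
  have hA0 : A ≠ 0 := by simp [A]
  refine ⟨A ^ (-(1 / (e * θ))), (ENNReal.rpow_pos hA0.bot_lt hA).ne',
    ENNReal.rpow_ne_top_of_ne_zero hA0 hA, ?_⟩
  have hexp : -(1 / (e * θ)) * (e * θ) = -1 := by field_simp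
  rw [ENNReal.mul_rpow_of_nonneg _ _ hθ.le, ← ENNReal.rpow_mul, ← ENNReal.rpow_mul, hexp,
    ENNReal.rpow_neg_one, ← mul_assoc, ← div_eq_mul_inv, ENNReal.div_le_iff hA0 hA,
    ← ENNReal.div_eq_inv_mul, ENNReal.le_div_iff_mul_le (by simp) (by simp), mul_comm]
  exact le_self_add

lemma lintegral_dyadicSum_rpow_ne_top (hp : 0 < p) (ha : ∀ I ∈ S, a I ≠ ⊤)
    (hW : ∀ I ∈ S, ∫⁻ x in I.toSet, W x ≠ ⊤) :
    ∫⁻ x, dyadicSum S a x ^ p ∂volume.withDensity W ≠ ⊤ := by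
  have hU : MeasurableSet (⋃ I ∈ S, I.toSet) :=
    Finset.measurableSet_biUnion S fun I _ ↦ I.measurableSet_toSet
  have hbound (x) : dyadicSum S a x ^ p ≤
      (⋃ I ∈ S, I.toSet).indicator (fun _ ↦ (∑ I ∈ S, a I) ^ p) x := by
    by_cases hx : x ∈ ⋃ I ∈ S, I.toSet
    · rw [indicator_of_mem hx]
      exact ENNReal.rpow_le_rpow (Finset.sum_le_sum fun J _ ↦ indicator_le_self _ _ _) hp.le
    · have hzero : dyadicSum S a x = 0 := Finset.sum_eq_zero fun I hI ↦
        indicator_of_notMem (fun hxI ↦ hx (mem_biUnion hI hxI)) _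
      rw [hzero, ENNReal.zero_rpow_of_pos hp]
      exact bot_le
  refine ((lintegral_mono hbound).trans_lt ?_).ne
  rw [lintegral_indicator_const hU]
  refine ENNReal.mul_lt_top
    (ENNReal.rpow_lt_top_of_nonneg hp.le (ENNReal.sum_ne_top.2 ha)) ?_
  refine (measure_biUnion_finset_le _ _).trans_lt (ENNReal.sum_lt_top.2 fun I hI ↦ ?_)
  rw [withDensity_apply _ I.measurableSet_toSet]
  exact (hW I hI).lt_top

theorem exists_lintegral_dyadicSum_rpow_le (he : 0 < e) (hθ : 0 < θ) (hp : 0 < p) (hL : L ≠ ⊤)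
    (hK : K ≠ ⊤) :
    ∃ C ≠ ⊤, ∀ (a : DyadicCube n → ℝ≥0∞) (S : Finset (DyadicCube n)) (W : (Fin n → ℝ) → ℝ≥0∞),
      HasLocalSumBound a L e → (∀ I ∈ S, a I ≠ ⊤) → DyadicAInftyOn S W K θ →
        ∫⁻ x, dyadicSum S a x ^ p ∂volume.withDensity W ≤
          C * ∫⁻ x, dyadicSup S a x ^ p ∂volume.withDensity W := by
  obtain ⟨γ, hγ0, hγ, hη⟩ := exists_goodLambda_ratio he hθ (2 ^ p * K) (by finiteness) hL
  rw [mul_assoc] at hη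
  have hgeom := (geomConst_lt_top hp).ne
  refine ⟨2 ^ p * (2 * (2 ^ p * geomConst p)) * γ⁻¹ ^ p, by finiteness,
    fun a S W hloc ha hW ↦ ?_⟩
  have hsup := measurable_dyadicSup (S : Set (DyadicCube n)) a
  refine (lintegral_rpow_le_of_goodLambda (G := fun x ↦ γ⁻¹ * dyadicSup S a x) hp hη
    (measurable_dyadicSum S a) (hsup.const_mul _)
    (lintegral_dyadicSum_rpow_ne_top hp ha fun I hI ↦ (hW I hI).1) fun k ↦ ?_).trans_eq ?_
  · refine le_trans ?_ (add_le_add_left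
      (goodLambda hloc he hW hθ.le (two_zpow_ne_zero k) (two_zpow_ne_top k)) _)
    refine (measure_mono fun x hx ↦ ?_).trans (measure_union_le _ _)
    refine (le_or_gt (dyadicSup S a x) (γ * 2 ^ k)).imp (fun hle ↦ ⟨hx, hle⟩) fun hlt ↦ ?_
    rw [mem_ofPred_eq, ← ENNReal.div_eq_inv_mul]
    rwa [ENNReal.lt_div_iff_mul_lt (Or.inl hγ0) (Or.inl hγ), mul_comm]
  · simp only [ENNReal.mul_rpow_of_nonneg _ _ hp.le]
    rw [lintegral_const_mul _ (hsup.pow_const p), ← mul_assoc]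

end GoodLambda

/-! ### Weak type bounds -/

section WeakBound

variable {X : Type*} [MeasurableSpace X] {μ w η : Measure X} {F G V u ν : X → ℝ≥0∞} {N : ℝ≥0∞}

/-- `s · μ{sV < F} ≤ N` for `0 < s < ∞`: the weak type bound `‖F / V‖_{L^{1,∞}(μ)} ≤ N`, written
without division. -/
def HasWeakBound (μ : Measure X) (V F : X → ℝ≥0∞) (N : ℝ≥0∞) : Prop :=
  ∀ s ≠ 0, s ≠ ⊤ → s * μ {x | s * V x < F x} ≤ N

lemma HasWeakBound.mono_fun (h : HasWeakBound μ V F N) (hGF : ∀ x, G x ≤ F x) :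
    HasWeakBound μ V G N := fun s hs0 hs ↦
  (mul_le_mul_right (measure_mono fun x (hx : _ < G x) ↦ hx.trans_le (hGF x)) s).trans
    (h s hs0 hs)

lemma HasWeakBound.mono_const {N' : ℝ≥0∞} (h : HasWeakBound μ V F N) (hN : N ≤ N') :
    HasWeakBound μ V F N' := fun s hs0 hs ↦ (h s hs0 hs).trans hN

lemma HasWeakBound.const_mul {c : ℝ≥0∞} (h : HasWeakBound μ V F N) (hc0 : c ≠ 0) (hc : c ≠ ⊤) :
    HasWeakBound μ V (fun x ↦ c * F x) (c * N) := by
  intro s hs0 hs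
  have hset : {x | s * V x < c * F x} = {x | c⁻¹ * s * V x < F x} := by
    ext x
    rw [mem_ofPred_eq, mem_ofPred_eq, mul_assoc, ← ENNReal.div_eq_inv_mul,
      ENNReal.div_lt_iff (Or.inl hc0) (Or.inl hc), mul_comm (F x)]
  calc s * μ {x | s * V x < c * F x} = c * (c⁻¹ * s * μ {x | c⁻¹ * s * V x < F x}) := by
        rw [hset, mul_assoc c⁻¹, ENNReal.mul_inv_cancel_left hc0 hc]
    _ ≤ c * N := mul_le_mul_right (h _ (mul_ne_zero (ENNReal.inv_ne_zero.2 hc) hs0)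
        (ENNReal.mul_ne_top (ENNReal.inv_ne_top.2 hc0) hs)) _

lemma HasWeakBound.rpow_mul_measure_lt_le {δ : ℝ} {c : ℝ≥0∞} (h : HasWeakBound μ V F N)
    (hV0 : ∀ᵐ x ∂μ, V x ≠ 0) (hV : ∀ x, V x ≠ ⊤) (hδ : 0 < δ) (hc0 : c ≠ 0) (hc : c ≠ ⊤) :
    c ^ δ⁻¹ * μ {x | c < (F x / V x) ^ δ} ≤ N := by
  refine le_trans (mul_le_mul_right (measure_mono_ae ?_) _) (h (c ^ δ⁻¹)
    (ENNReal.rpow_pos hc0.bot_lt hc).ne' (ENNReal.rpow_ne_top_of_nonneg (inv_pos.2 hδ).le hc))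
  filter_upwards [hV0] with x hx (hlt : c < (F x / V x) ^ δ)
  rwa [← ENNReal.rpow_inv_lt_iff hδ, ENNReal.lt_div_iff_mul_lt (Or.inl hx) (Or.inl (hV x))] at hlt

lemma lintegral_rpow_withDensity_eq {δ : ℝ} (hF : Measurable F) (hu : Measurable u)
    (hV : Measurable V) (hV0 : ∀ᵐ x ∂μ, V x ≠ 0) (hVt : ∀ x, V x ≠ ⊤) (hδ : 0 ≤ δ) :
    ∫⁻ x, F x ^ δ ∂μ.withDensity (fun x ↦ u x * V x ^ (1 - δ)) =
      ∫⁻ x, (F x / V x) ^ δ ∂μ.withDensity (fun x ↦ u x * V x) := by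
  have huV : Measurable fun x ↦ u x * V x := hu.mul hV
  have huVδ : Measurable fun x ↦ u x * V x ^ (1 - δ) := hu.mul (hV.pow_const _)
  have hFV : Measurable fun x ↦ (F x / V x) ^ δ := (hF.div hV).pow_const δ
  rw [lintegral_withDensity_eq_lintegral_mul _ huVδ (hF.pow_const δ),
    lintegral_withDensity_eq_lintegral_mul _ huV hFV]
  refine lintegral_congr_ae ?_
  filter_upwards [hV0] with x hx
  have hVx : V x ^ (1 - δ) = V x * V x ^ (-δ) := by
    rw [sub_eq_add_neg, ENNReal.rpow_add _ _ hx (hVt x), ENNReal.rpow_one]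
  rw [Pi.mul_apply, Pi.mul_apply, ENNReal.div_rpow_of_nonneg _ _ hδ, div_eq_mul_inv,
    ← ENNReal.rpow_neg, hVx]
  ring

lemma rpow_mul_withDensity_le {E : Set X} {δ : ℝ} {t : ℝ≥0∞} (hE : MeasurableSet E)
    (hu : Measurable u) (hν : Measurable ν) (hV : Measurable V) (hF : Measurable F)
    (hδ0 : 0 ≤ δ) (hδ1 : δ ≤ 1) (hνu : ∀ x ∈ E, ν x ≤ u x) (htF : ∀ x ∈ E, t * V x ≤ F x) :
    t ^ δ * μ.withDensity (fun x ↦ ν x * V x) E ≤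
      ∫⁻ x, F x ^ δ ∂μ.withDensity (fun x ↦ u x * V x ^ (1 - δ)) := by
  have hνV : Measurable fun x ↦ ν x * V x := hν.mul hV
  have huV : Measurable fun x ↦ u x * V x ^ (1 - δ) := hu.mul (hV.pow_const _)
  rw [withDensity_apply _ hE, ← lintegral_const_mul _ hνV,
    lintegral_withDensity_eq_lintegral_mul _ huV (hF.pow_const δ)]
  refine (setLIntegral_mono' hE fun x hx ↦ ?_).trans (setLIntegral_le_lintegral E _)
  have hsplit : V x = V x ^ δ * V x ^ (1 - δ) := by
    rw [← ENNReal.rpow_add_of_nonneg _ _ hδ0 (sub_nonneg.2 hδ1), add_sub_cancel,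
      ENNReal.rpow_one]
  calc t ^ δ * (ν x * V x) = (t * V x) ^ δ * (ν x * V x ^ (1 - δ)) := by
        rw [ENNReal.mul_rpow_of_nonneg _ _ hδ0]
        conv_lhs => rw [hsplit]
        ring
    _ ≤ F x ^ δ * (u x * V x ^ (1 - δ)) :=
        mul_le_mul' (ENNReal.rpow_le_rpow (htF x hx) hδ0) (mul_le_mul_left (hνu x hx) _)
    _ = _ := mul_comm _ _

lemma lintegral_mul_le_rpow_mul_rpow {P : ℝ} (hP : 1 < P) (hu : Measurable u)
    (hν : Measurable ν) (hV : Measurable V) (hν0 : ∀ᵐ x ∂μ, ν x ≠ 0) (hνt : ∀ x, ν x ≠ ⊤) :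
    ∫⁻ x, u x * V x ∂μ ≤ (∫⁻ x, u x ^ P * (ν x ^ (1 - P) * V x) ∂μ) ^ P⁻¹ *
      (∫⁻ x, ν x * V x ∂μ) ^ (1 - P⁻¹) := by
  have hP0 : 0 < P := zero_lt_one.trans hP
  have ha : 0 ≤ 1 - P⁻¹ := sub_nonneg.2 (inv_le_one_of_one_le₀ hP.le)
  refine le_trans (lintegral_mono_ae ?_) (ENNReal.lintegral_mul_norm_pow_le
    ((hu.pow_const P).mul ((hν.pow_const _).mul hV)).aemeasurable (hν.mul hV).aemeasurable
    (inv_nonneg.2 hP0.le) ha (add_sub_cancel _ _))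
  filter_upwards [hν0] with x hx
  have hexp : (1 - P) * P⁻¹ = -(1 - P⁻¹) := by field_simp; ring
  have hsplit : V x = V x ^ P⁻¹ * V x ^ (1 - P⁻¹) := by
    rw [← ENNReal.rpow_add_of_nonneg _ _ (inv_nonneg.2 hP0.le) ha, add_sub_cancel,
      ENNReal.rpow_one]
  refine le_of_eq ?_
  simp only [Pi.mul_apply]
  rw [ENNReal.mul_rpow_of_nonneg _ _ (inv_nonneg.2 hP0.le),
    ENNReal.mul_rpow_of_nonneg _ _ (inv_nonneg.2 hP0.le), ENNReal.mul_rpow_of_nonneg _ _ ha,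
    ← ENNReal.rpow_mul, ← ENNReal.rpow_mul, mul_inv_cancel₀ hP0.ne', ENNReal.rpow_one, hexp]
  calc u x * V x = u x * (V x ^ P⁻¹ * V x ^ (1 - P⁻¹)) *
        (ν x ^ (1 - P⁻¹) * ν x ^ (-(1 - P⁻¹))) := by
        rw [← hsplit, rpow_mul_rpow_neg hx (hνt x), mul_one]
    _ = _ := by ring

lemma withDensity_mul_le_rpow_mul_rpow {P : ℝ} {M : ℝ≥0∞} (hP : 1 < P) (hu : Measurable u)
    (hν : Measurable ν) (hV : Measurable V) (hν0 : ∀ᵐ x ∂μ, ν x ≠ 0) (hνt : ∀ x, ν x ≠ ⊤)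
    (hM : ∫⁻ x, u x ^ P * (ν x ^ (1 - P) * V x) ∂μ ≤ M) {A : Set X} (hA : MeasurableSet A) :
    μ.withDensity (fun x ↦ u x * V x) A ≤
      M ^ P⁻¹ * μ.withDensity (fun x ↦ ν x * V x) A ^ (1 - P⁻¹) := by
  rw [withDensity_apply _ hA, withDensity_apply _ hA]
  refine (lintegral_mul_le_rpow_mul_rpow hP hu hν hV (ae_restrict_of_ae hν0) hνt).trans
    (mul_le_mul_left (ENNReal.rpow_le_rpow ?_ (inv_nonneg.2 (zero_le_one.trans hP.le))) _)
  exact (setLIntegral_le_lintegral A _).trans hM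

lemma withDensity_mul_le_mul {K : ℝ≥0∞} (hν : Measurable ν) (hV : Measurable V)
    (huν : ∀ᵐ x ∂μ, u x ≤ K * ν x) {A : Set X} (hA : MeasurableSet A) :
    μ.withDensity (fun x ↦ u x * V x) A ≤ K * μ.withDensity (fun x ↦ ν x * V x) A := by
  have hνV : Measurable fun x ↦ ν x * V x := hν.mul hV
  rw [withDensity_apply _ hA, withDensity_apply _ hA, ← lintegral_const_mul _ hνV]
  refine lintegral_mono_ae (ae_restrict_of_ae ?_)
  filter_upwards [huν] with x hx
  rw [← mul_assoc]
  exact mul_le_mul_left hx _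

lemma lintegral_le_of_measure_lt_le {g : X → ℝ≥0∞} {a r : ℝ} {K m : ℝ≥0∞} (hg : Measurable g)
    (ha0 : 0 ≤ a) (ha1 : a ≤ 1) (hlevel : ∀ k : ℤ, w {x | 2 ^ k < g x} ≤ (2 ^ k) ^ (-r) * m)
    (hη : ∀ A, MeasurableSet A → η A ≤ K * w A)
    (hηa : ∀ A, MeasurableSet A → η A ≤ K * m ^ (1 - a) * w A ^ a) :
    ∫⁻ x, g x ∂η ≤ 2 * (K * m * (geomConst (1 - r * a) + geomConst (r - 1))) := by
  have hA (k : ℤ) : MeasurableSet {x | (2 : ℝ≥0∞) ^ k < g x} :=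
    measurableSet_lt measurable_const hg
  calc ∫⁻ x, g x ∂η ≤ 2 * ∑' k : ℤ, ((2 : ℝ≥0∞) ^ k) ^ (1 : ℝ) * η {x | 2 ^ k < g x} := by
        simpa only [ENNReal.rpow_one] using lintegral_rpow_le_tsum η one_pos hg
    _ ≤ 2 * (K * m * (geomConst (1 - r * a) + geomConst (r - 1))) :=
        mul_le_mul_right (tsum_le_geomConst_add (fun k _ ↦ ?_) fun k _ ↦ ?_) _
  · calc ((2 : ℝ≥0∞) ^ k) ^ (1 : ℝ) * η {x | 2 ^ k < g x}
      _ ≤ ((2 : ℝ≥0∞) ^ k) ^ (1 : ℝ) * (K * m ^ (1 - a) * ((2 ^ k) ^ (-r) * m) ^ a) :=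
          mul_le_mul_right ((hηa _ (hA k)).trans
            (mul_le_mul_right (ENNReal.rpow_le_rpow (hlevel k) ha0) _)) _
      _ = K * (m ^ (1 - a) * m ^ a) * ((2 ^ k) ^ (1 : ℝ) * (2 ^ k) ^ (-r * a)) := by
          rw [ENNReal.mul_rpow_of_nonneg _ _ ha0, ← ENNReal.rpow_mul]
          ring
      _ = K * m * (2 ^ k) ^ (1 - r * a) := by
          rw [← ENNReal.rpow_add _ _ (two_zpow_ne_zero k) (two_zpow_ne_top k),
            ← ENNReal.rpow_add_of_nonneg _ _ (sub_nonneg.2 ha1) ha0, sub_add_cancel,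
            ENNReal.rpow_one, neg_mul, sub_eq_add_neg]
  · calc ((2 : ℝ≥0∞) ^ k) ^ (1 : ℝ) * η {x | 2 ^ k < g x}
      _ ≤ ((2 : ℝ≥0∞) ^ k) ^ (1 : ℝ) * (K * ((2 ^ k) ^ (-r) * m)) :=
          mul_le_mul_right ((hη _ (hA k)).trans (mul_le_mul_right (hlevel k) _)) _
      _ = K * m * ((2 ^ k) ^ (1 : ℝ) * (2 ^ k) ^ (-r)) := by ring
      _ = K * m * (2 ^ k) ^ (-(r - 1)) := by
          rw [← ENNReal.rpow_add _ _ (two_zpow_ne_zero k) (two_zpow_ne_top k), neg_sub,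
            sub_eq_add_neg]

lemma HasWeakBound.lintegral_div_rpow_le {δ a : ℝ} {K m : ℝ≥0∞} (h : HasWeakBound w V F N)
    (hF : Measurable F) (hV : Measurable V) (hV0 : ∀ᵐ x ∂w, V x ≠ 0) (hVt : ∀ x, V x ≠ ⊤)
    (hδ : 0 < δ) (ha0 : 0 ≤ a) (ha1 : a ≤ 1) (hN0 : N ≠ 0) (hN : N ≠ ⊤) (hm0 : m ≠ 0)
    (hm : m ≠ ⊤) (hη : ∀ A, MeasurableSet A → η A ≤ K * w A)
    (hηa : ∀ A, MeasurableSet A → η A ≤ K * m ^ (1 - a) * w A ^ a) :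
    ∫⁻ x, (F x / V x) ^ δ ∂η ≤
      (N / m) ^ δ * (2 * (K * m * (geomConst (1 - δ⁻¹ * a) + geomConst (δ⁻¹ - 1)))) := by
  have hNm0 : N / m ≠ 0 := ENNReal.div_ne_zero.2 ⟨hN0, hm⟩
  have hNm : N / m ≠ ⊤ := ENNReal.div_ne_top hN hm0
  set l := (N / m) ^ δ with hl
  have hl0 : l ≠ 0 := (ENNReal.rpow_pos hNm0.bot_lt hNm).ne'
  have hlt : l ≠ ⊤ := ENNReal.rpow_ne_top_of_nonneg hδ.le hNm
  have hg : Measurable fun x ↦ (F x / V x) ^ δ / l := ((hF.div hV).pow_const δ).div_const l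
  have hlevel (k : ℤ) : w {x | 2 ^ k < (F x / V x) ^ δ / l} ≤ (2 ^ k) ^ (-δ⁻¹) * m := by
    have hk0 := two_zpow_ne_zero k
    have hkt := two_zpow_ne_top k
    set c : ℝ≥0∞ := 2 ^ k
    have hcl0 : c * l ≠ 0 := mul_ne_zero hk0 hl0
    have hclt : c * l ≠ ⊤ := ENNReal.mul_ne_top hkt hlt
    have hweak := h.rpow_mul_measure_lt_le hV0 hVt hδ hcl0 hclt
    have hNeq : N = (c * l) ^ δ⁻¹ * (c ^ (-δ⁻¹) * m) := by
      rw [ENNReal.mul_rpow_of_nonneg _ _ (inv_pos.2 hδ).le, hl, ← ENNReal.rpow_mul,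
        mul_inv_cancel₀ hδ.ne', ENNReal.rpow_one]
      calc N = c ^ δ⁻¹ * c ^ (-δ⁻¹) * (N / m * m) := by
            rw [rpow_mul_rpow_neg hk0 hkt, ENNReal.div_mul_cancel hm0 hm, one_mul]
        _ = _ := by ring
    simp only [ENNReal.lt_div_iff_mul_lt (Or.inl hl0) (Or.inl hlt)]
    rw [hNeq] at hweak
    exact (ENNReal.mul_le_mul_iff_right (ENNReal.rpow_pos hcl0.bot_lt hclt).ne'
      (ENNReal.rpow_ne_top_of_nonneg (inv_pos.2 hδ).le hclt)).1 hweak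
  calc ∫⁻ x, (F x / V x) ^ δ ∂η = l * ∫⁻ x, (F x / V x) ^ δ / l ∂η := by
        rw [← lintegral_const_mul _ hg]
        simp only [ENNReal.mul_div_cancel hl0 hlt]
    _ ≤ _ := mul_le_mul_right (lintegral_le_of_measure_lt_le hg ha0 ha1 hlevel hη hηa) l

end WeakBound

section Extrapolation

variable {n : ℕ} {ν V : (Fin n → ℝ) → ℝ≥0∞} {C L : ℝ≥0∞} {s κ e q : ℝ}

lemma mul_le_rpow_inv_mul_of_rpow_mul_le {K t m N : ℝ≥0∞} {δ : ℝ} (hδ : 0 < δ) (hm0 : m ≠ 0)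
    (hm : m ≠ ⊤) (h : t ^ δ * m ≤ K * (N / m) ^ δ * m) : t * m ≤ K ^ δ⁻¹ * N := by
  have hle : t ^ δ ≤ K * (N / m) ^ δ := (ENNReal.mul_le_mul_iff_left hm0 hm).1 h
  calc t * m = (t ^ δ) ^ δ⁻¹ * m := by rw [ENNReal.rpow_rpow_inv hδ.ne']
    _ ≤ (K * (N / m) ^ δ) ^ δ⁻¹ * m :=
        mul_le_mul_left (ENNReal.rpow_le_rpow hle (inv_pos.2 hδ).le) _
    _ = K ^ δ⁻¹ * N := by
        rw [ENNReal.mul_rpow_of_nonneg _ _ (inv_pos.2 hδ).le, ENNReal.rpow_rpow_inv hδ.ne',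
          mul_assoc, ENNReal.div_mul_cancel hm0 hm]

namespace DyadicWeightPair

lemma withDensity_mul_ne_zero (h : DyadicWeightPair ν V C s κ) (I : DyadicCube n) :
    volume.withDensity (fun x ↦ ν x * V x) I.toSet ≠ 0 := by
  rw [withDensity_toSet]
  refine mul_ne_zero I.volume_toSet_ne_zero
    (avg_ne_zero (h.measurable_left.mul h.measurable_right) ?_ I)
  filter_upwards [h.left_ne_zero, h.right_ne_zero] with x hν hV using mul_ne_zero hν hV

lemma ne_top_of_hasWeakBound (h : DyadicWeightPair ν V C s κ) {a : DyadicCube n → ℝ≥0∞}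
    {N : ℝ≥0∞} (hq : 0 < q) (hN : N ≠ ⊤)
    (hweak : HasWeakBound (volume.withDensity fun x ↦ ν x * V x) V
      (fun x ↦ dyadicSup univ a x ^ q) N) (I : DyadicCube n) : a I ≠ ⊤ := by
  intro htop
  obtain ⟨j, hj⟩ := ENNReal.exists_nat_mul_gt (h.withDensity_mul_ne_zero I) hN
  have hj0 : (j : ℝ≥0∞) ≠ 0 := left_ne_zero_of_mul hj.ne_bot
  refine hj.not_ge (le_trans (mul_le_mul_right (measure_mono fun x hx ↦ ?_) _)
    (hweak j hj0 (natCast_ne_top j)))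
  have hsup : dyadicSup univ a x = ⊤ := top_unique (htop ▸ le_dyadicSup (mem_univ I) hx)
  change _ < dyadicSup univ a x ^ q
  rw [hsup, ENNReal.top_rpow_of_pos hq]
  exact ENNReal.mul_lt_top (natCast_lt_top j) (h.right_ne_top x).lt_top

lemma rpow_mul_withDensity_le_lintegral (h : DyadicWeightPair ν V C s κ)
    {a : DyadicCube n → ℝ≥0∞} {S : Finset (DyadicCube n)} {E : Set (Fin n → ℝ)}
    {u : (Fin n → ℝ) → ℝ≥0∞} {δ : ℝ} {K t : ℝ≥0∞} (hδ : 0 < δ) (hδ1 : δ ≤ 1) (hq : 0 < q)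
    (hE : MeasurableSet E) (hu : Measurable u) (hνu : ∀ x ∈ E, ν x ≤ u x)
    (htE : ∀ x ∈ E, t * V x ≤ dyadicSum S a x ^ q)
    (hsum : ∫⁻ x, dyadicSum S a x ^ (q * δ) ∂volume.withDensity (fun x ↦ u x * V x ^ (1 - δ)) ≤
      K * ∫⁻ x, dyadicSup S a x ^ (q * δ) ∂volume.withDensity fun x ↦ u x * V x ^ (1 - δ)) :
    t ^ δ * volume.withDensity (fun x ↦ ν x * V x) E ≤
      K * ∫⁻ x, (dyadicSup univ a x ^ q / V x) ^ δ ∂volume.withDensity fun x ↦ u x * V x := by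
  rw [← lintegral_rpow_withDensity_eq ((measurable_dyadicSup univ a).pow_const q) hu
    h.measurable_right h.right_ne_zero h.right_ne_top hδ.le]
  refine (rpow_mul_withDensity_le hE hu h.measurable_left h.measurable_right
    ((measurable_dyadicSum S a).pow_const q) hδ.le hδ1 hνu htE).trans ?_
  simp only [← ENNReal.rpow_mul]
  exact hsum.trans (mul_le_mul_right (lintegral_mono fun x ↦ ENNReal.rpow_le_rpow
    (dyadicSup_le fun I _ ↦ le_dyadicSup (mem_univ I)) (mul_pos hq hδ).le) _)

lemma lintegral_div_rpow_le (h : DyadicWeightPair ν V C s κ) {F u : (Fin n → ℝ) → ℝ≥0∞}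
    {E : Set (Fin n → ℝ)} {δ P : ℝ} {K N : ℝ≥0∞} (hF : Measurable F) (hδ : 0 < δ) (hP : 1 < P)
    (hE : MeasurableSet E) (hE0 : volume.withDensity (fun x ↦ ν x * V x) E ≠ 0)
    (hEt : volume.withDensity (fun x ↦ ν x * V x) E ≠ ⊤) (hu : Measurable u)
    (huν : ∀ᵐ x, u x ≤ K * ν x)
    (hint : ∫⁻ x, u x ^ P * (ν x ^ (1 - P) * V x) ≤ K * ∫⁻ x in E, ν x * V x)
    (hweak : HasWeakBound (volume.withDensity fun x ↦ ν x * V x) V F N) (hN0 : N ≠ 0)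
    (hN : N ≠ ⊤) :
    ∫⁻ x, (F x / V x) ^ δ ∂volume.withDensity (fun x ↦ u x * V x) ≤
      (N / volume.withDensity (fun x ↦ ν x * V x) E) ^ δ *
        (2 * ((K + K ^ P⁻¹) * volume.withDensity (fun x ↦ ν x * V x) E *
          (geomConst (1 - δ⁻¹ * (1 - P⁻¹)) + geomConst (δ⁻¹ - 1)))) := by
  have hP0 : 0 ≤ P⁻¹ := inv_nonneg.2 (zero_le_one.trans hP.le)
  rw [← withDensity_apply _ hE] at hint
  refine hweak.lintegral_div_rpow_le hF h.measurable_right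
    ((withDensity_absolutelyContinuous _ _).ae_le h.right_ne_zero) h.right_ne_top hδ
    (sub_nonneg.2 (inv_le_one_of_one_le₀ hP.le)) (sub_le_self _ hP0) hN0 hN hE0 hEt
    (fun A hA ↦ ?_) fun A hA ↦ ?_
  · exact (withDensity_mul_le_mul h.measurable_left h.measurable_right huν hA).trans
      (mul_le_mul_left le_self_add _)
  · refine (withDensity_mul_le_rpow_mul_rpow hP hu h.measurable_left h.measurable_right
      h.left_ne_zero h.left_ne_top hint hA).trans (mul_le_mul_left ?_ _)
    rw [ENNReal.mul_rpow_of_nonneg _ _ hP0, sub_sub_self]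
    exact mul_le_mul_left le_add_self _

theorem exists_mul_withDensity_le (h : DyadicWeightPair ν V C s κ) (he : 0 < e) (hq : 0 < q)
    (hL : L ≠ ⊤) :
    ∃ K ≠ ⊤, ∀ a : DyadicCube n → ℝ≥0∞, HasLocalSumBound a L e → ∀ N ≠ 0, N ≠ ⊤ →
      HasWeakBound (volume.withDensity fun x ↦ ν x * V x) V (fun x ↦ dyadicSup univ a x ^ q) N →
      ∀ S E, MeasurableSet E → volume.withDensity (fun x ↦ ν x * V x) E ≠ ⊤ →
        ∀ t : ℝ≥0∞, (∀ x ∈ E, t * V x ≤ dyadicSum S a x ^ q) →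
          t * volume.withDensity (fun x ↦ ν x * V x) E ≤ K * N := by
  obtain ⟨ε, P, θ, K, hε, hε1, hP, hεP, hθ, hK, hmajorant⟩ := h.exists_majorant
  obtain ⟨δ, rfl⟩ : ∃ δ, ε = 1 - δ := ⟨1 - ε, by ring⟩
  have hδ : 0 < δ := by linarith
  have hP0 : 0 < P := zero_lt_one.trans hP
  have hexp : 0 < 1 - δ⁻¹ * (1 - P⁻¹) := by
    have : 1 - δ < P⁻¹ := by rwa [← one_div, lt_div_iff₀ hP0]
    rw [sub_pos, inv_mul_lt_iff₀ hδ]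
    linarith
  obtain ⟨K₁, hK₁, hsum⟩ :=
    exists_lintegral_dyadicSum_rpow_le (n := n) he hθ (mul_pos hq hδ) hL hK
  have hgeom₁ := (geomConst_lt_top hexp).ne
  have hgeom₂ := (geomConst_lt_top (sub_pos.2 ((one_lt_inv₀ hδ).2 (by linarith)))).ne
  set w := volume.withDensity fun x ↦ ν x * V x
  refine ⟨(K₁ * (2 * ((K + K ^ P⁻¹) *
    (geomConst (1 - δ⁻¹ * (1 - P⁻¹)) + geomConst (δ⁻¹ - 1))))) ^ δ⁻¹, by finiteness,
    fun a ha N hN0 hN hweak S E hE hwE t htE ↦ ?_⟩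
  rcases eq_or_ne (w E) 0 with hwE0 | hwE0
  · simp [hwE0]
  obtain ⟨B, hB⟩ := (S.image scale).exists_le
  obtain ⟨u, hu, hνu, huν, hint, hW⟩ :=
    hmajorant E hE S B fun I hI ↦ hB _ (Finset.mem_image_of_mem scale hI)
  refine mul_le_rpow_inv_mul_of_rpow_mul_le hδ hwE0 hwE ?_
  have hsup : Measurable fun x ↦ dyadicSup univ a x ^ q := (measurable_dyadicSup univ a).pow_const q
  calc t ^ δ * w E ≤ K₁ * ∫⁻ x, (dyadicSup univ a x ^ q / V x) ^ δ
        ∂volume.withDensity (fun x ↦ u x * V x) :=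
        h.rpow_mul_withDensity_le_lintegral hδ (by linarith) hq hE hu hνu htE
          (hsum a S _ ha (fun I _ ↦ h.ne_top_of_hasWeakBound hq hN hweak I) hW)
    _ ≤ K₁ * _ := mul_le_mul_right
        (h.lintegral_div_rpow_le hsup hδ hP hE hwE0 hwE hu huν hint hweak hN0 hN) _
    _ = _ := by ring

end DyadicWeightPair

lemma mul_measure_lt_tsum_le {a : DyadicCube n → ℝ≥0∞} {w : Measure (Fin n → ℝ)} [SigmaFinite w]
    {N t : ℝ≥0∞} (hq : 0 < q) (hV : Measurable V)
    (h : ∀ S E, MeasurableSet E → w E ≠ ⊤ → (∀ x ∈ E, t * V x ≤ dyadicSum S a x ^ q) →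
      t * w E ≤ N) :
    t * w {x | t * V x < (∑' I : DyadicCube n, I.toSet.indicator (fun _ ↦ a I) x) ^ q} ≤ N := by
  have hunion : {x | t * V x < (∑' I : DyadicCube n, I.toSet.indicator (fun _ ↦ a I) x) ^ q} =
      ⋃ S, {x | t * V x < dyadicSum S a x ^ q} := by
    ext x
    simp only [mem_iUnion, mem_ofPred_eq, ENNReal.tsum_eq_iSup_sum, dyadicSum,
      ← ENNReal.rpow_inv_lt_iff hq, lt_iSup_iff]
  have hmono : Monotone fun S ↦ {x | t * V x < dyadicSum S a x ^ q} := fun S T hST x hx ↦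
    lt_of_lt_of_le hx (ENNReal.rpow_le_rpow (Finset.sum_le_sum_of_subset hST) hq.le)
  rw [hunion, hmono.directed_le.measure_iUnion, ENNReal.mul_iSup]
  refine iSup_le fun S ↦ ENNReal.mul_le_of_forall_lt fun t' ht' r hr ↦ ?_
  obtain ⟨E, hE, hES, hrE, hEtop⟩ := Measure.exists_subset_measure_lt_top
    (measurableSet_lt (hV.const_mul t) ((measurable_dyadicSum S a).pow_const q)) hr
  exact (mul_le_mul' ht'.le hrE.le).trans (h S E hE hEtop.ne fun x hx ↦ (hES hx).le)

theorem DyadicWeightPair.exists_hasWeakBound_tsum (h : DyadicWeightPair ν V C s κ) (he : 0 < e)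
    (hq : 0 < q) (hL : L ≠ ⊤) :
    ∃ K ≠ ⊤, ∀ a : DyadicCube n → ℝ≥0∞, HasLocalSumBound a L e → ∀ N,
      HasWeakBound (volume.withDensity fun x ↦ ν x * V x) V (fun x ↦ dyadicSup univ a x ^ q) N →
      HasWeakBound (volume.withDensity fun x ↦ ν x * V x) V
        (fun x ↦ (∑' I : DyadicCube n, I.toSet.indicator (fun _ ↦ a I) x) ^ q) (K * N) := by
  obtain ⟨K, hK, hbound⟩ := h.exists_mul_withDensity_le he hq hL
  have : SigmaFinite (volume.withDensity fun x ↦ ν x * V x) :=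
    SigmaFinite.withDensity_of_ne_top
      (.of_forall fun x ↦ ENNReal.mul_ne_top (h.left_ne_top x) (h.right_ne_top x))
  refine ⟨K + 1, by finiteness, fun a ha N hN t _ _ ↦
    mul_measure_lt_tsum_le hq h.measurable_right fun S E hE hE' htE ↦ ?_⟩
  refine ENNReal.le_mul_of_forall_lt (.inl (by positivity)) (.inl (by finiteness))
    fun K' hK' N' hN' ↦ ?_
  rcases eq_or_ne N' ⊤ with rfl | hN'top
  · simp [(pos_of_gt hK').ne']
  exact (hbound a ha N' (pos_of_gt hN').ne' hN'top (hN.mono_const hN'.le) S E hE hE' t htE).trans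
    (mul_le_mul_left (le_self_add.trans hK'.le) N')

end Extrapolation

/-! ### Dyadic discretisation of the fractional integral -/

section FractionalCoefficients

variable {n m : ℕ} {I J : DyadicCube n} {S : Finset (DyadicCube n)} {α e : ℝ}

namespace DyadicCube

/-- The closed cube with the center of `I` and three times its side length. -/
def triple (I : DyadicCube n) : Set (Fin n → ℝ) :=
  Metric.closedBall I.center (3 * (2 ^ I.scale / 2))

lemma measurableSet_triple (I : DyadicCube n) : MeasurableSet I.triple :=
  Metric.isClosed_closedBall.measurableSet

lemma volume_triple (I : DyadicCube n) : volume I.triple = (3 * (2 : ℝ≥0∞) ^ I.scale) ^ n := by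
  rw [triple, Real.volume_pi_closedBall _ (by positivity), Fintype.card_fin,
    ENNReal.ofReal_pow (by positivity), mul_left_comm, mul_div_cancel₀ _ two_ne_zero,
    ENNReal.ofReal_mul zero_le_three, ofReal_two_zpow, ofReal_ofNat]

lemma toSet_subset_triple (I : DyadicCube n) : I.toSet ⊆ I.triple :=
  I.toSet_subset_closedBall.trans
    (Metric.closedBall_subset_closedBall (le_mul_of_one_le_left (by positivity) (by norm_num)))

lemma center_mem_toSet (I : DyadicCube n) : I.center ∈ I.toSet := by
  intro i
  have hpos : (0 : ℝ) < 2 ^ I.scale := by positivity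
  rw [center, Int.floor_eq_iff, le_div_iff₀ hpos, div_lt_iff₀ hpos]
  constructor <;> linarith

lemma triple_subset_triple (h : J ≤ I) : J.triple ⊆ I.triple := by
  rcases h.1.eq_or_lt with hscale | hscale
  · rw [h.antisymm (le_of_inter_nonempty ⟨_, h.2 J.center_mem_toSet, J.center_mem_toSet⟩
      hscale.ge)]
  have hcenter : dist J.center I.center ≤ 2 ^ I.scale / 2 :=
    Metric.mem_closedBall.1 (I.toSet_subset_closedBall (h.2 J.center_mem_toSet))
  have hside : (2 : ℝ) ^ J.scale * 2 ≤ 2 ^ I.scale := by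
    rw [← zpow_add_one₀ two_ne_zero]
    exact zpow_le_zpow_right₀ one_le_two hscale
  have hpos : (0 : ℝ) < 2 ^ I.scale := by positivity
  exact Metric.closedBall_subset_closedBall' (by linarith)

lemma pairwiseDisjoint_of_scale_eq {j : ℤ} {S : Set (DyadicCube n)} (hS : ∀ J ∈ S, J.scale = j) :
    S.PairwiseDisjoint toSet := by
  intro J hJ J' hJ' hne
  rw [Function.onFun, disjoint_iff_inter_eq_empty, ← not_nonempty_iff_eq_empty]
  intro hmeet
  have hscale := (hS J hJ).trans (hS J' hJ').symm
  exact hne ((le_of_inter_nonempty hmeet hscale.le).antisymm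
    (le_of_inter_nonempty (inter_comm _ _ ▸ hmeet) hscale.ge))

open Classical in
-- The cubes counted are disjoint, of side `2 ^ j`, and contained in a cube of side `4 * 2 ^ j`.
lemma card_filter_mem_triple_le {j : ℤ} (hS : ∀ J ∈ S, J.scale = j) (y : Fin n → ℝ) :
    (({J ∈ S | y ∈ J.triple} : Finset (DyadicCube n)).card : ℝ≥0∞) ≤ 4 ^ n := by
  set R : Finset (DyadicCube n) := {J ∈ S | y ∈ J.triple}
  have hR (J) (hJ : J ∈ R) : J.scale = j := hS J (Finset.mem_filter.1 hJ).1
  have hsub : ⋃ J ∈ R, J.toSet ⊆ Metric.closedBall y (2 * 2 ^ j) := by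
    refine iUnion₂_subset fun J hJ ↦ J.toSet_subset_closedBall.trans ?_
    have hy : dist y J.center ≤ 3 * (2 ^ J.scale / 2) := (Finset.mem_filter.1 hJ).2
    rw [dist_comm, hR J hJ] at hy
    rw [hR J hJ]
    exact Metric.closedBall_subset_closedBall' (by linarith)
  have hunion : volume (⋃ J ∈ R, J.toSet) = R.card * (2 ^ j) ^ n := by
    rw [measure_biUnion_finset (pairwiseDisjoint_of_scale_eq hR)
      fun J _ ↦ J.measurableSet_toSet, Finset.sum_congr rfl fun J hJ ↦ by
        rw [J.volume_toSet, hR J hJ], Finset.sum_const, nsmul_eq_mul]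
  have hball : volume (Metric.closedBall y (2 * 2 ^ j)) = 4 ^ n * (2 ^ j) ^ n := by
    rw [Real.volume_pi_closedBall _ (by positivity), Fintype.card_fin,
      ENNReal.ofReal_pow (by positivity), ← mul_assoc, ENNReal.ofReal_mul (by norm_num),
      ofReal_two_zpow, mul_pow]
    norm_num
  have hj0 : ((2 : ℝ≥0∞) ^ j) ^ n ≠ 0 := pow_ne_zero _ (two_zpow_ne_zero j)
  refine (ENNReal.mul_le_mul_iff_left hj0 (ENNReal.pow_ne_top (two_zpow_ne_top j))).1 ?_
  rw [← hunion, ← hball]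
  exact measure_mono hsub

lemma sum_setLIntegral_triple_le {j : ℤ} (hS : ∀ J ∈ S, J.scale = j) (hI : ∀ J ∈ S, J ≤ I)
    {g : (Fin n → ℝ) → ℝ≥0∞} (hg : Measurable g) :
    ∑ J ∈ S, ∫⁻ y in J.triple, g y ≤ 4 ^ n * ∫⁻ y in I.triple, g y := by
  classical
  calc ∑ J ∈ S, ∫⁻ y in J.triple, g y
      = ∑ J ∈ S, ∫⁻ y in I.triple, J.triple.indicator g y := by
        refine Finset.sum_congr rfl fun J hJ ↦ ?_
        rw [setLIntegral_indicator J.measurableSet_triple,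
          inter_eq_left.2 (triple_subset_triple (hI J hJ))]
    _ = ∫⁻ y in I.triple, ∑ J ∈ S, J.triple.indicator g y :=
        (lintegral_finsetSum _ fun J _ ↦ hg.indicator J.measurableSet_triple).symm
    _ ≤ ∫⁻ y in I.triple, 4 ^ n * g y := by
        refine lintegral_mono fun y ↦ ?_
        simp only [indicator_apply]
        rw [← Finset.sum_filter, Finset.sum_const, nsmul_eq_mul]
        exact mul_le_mul_left (card_filter_mem_triple_le hS y) _
    _ = 4 ^ n * ∫⁻ y in I.triple, g y := lintegral_const_mul _ hg

end DyadicCube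

/-- The size on `I` of the part of the `m`-linear fractional integral of `g` in which all
`|x - y_i|` are at most comparable to the side length of `I`. -/
def fractionalCoeff (α : ℝ) (g : Fin m → (Fin n → ℝ) → ℝ≥0∞) (I : DyadicCube n) : ℝ≥0∞ :=
  ((2 : ℝ≥0∞) ^ I.scale) ^ (α - m * n) * ∏ i, ∫⁻ y in I.triple, g i y

lemma setLIntegral_dyadicSum_rpow_le (he : 0 < e) (he1 : e ≤ 1) (a : DyadicCube n → ℝ≥0∞)
    (A : Set (Fin n → ℝ)) :
    ∫⁻ x in A, dyadicSum S a x ^ e ≤ ∑ J ∈ S, volume J.toSet * a J ^ e := by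
  calc ∫⁻ x in A, dyadicSum S a x ^ e
      ≤ ∫⁻ x, ∑ J ∈ S, J.toSet.indicator (fun _ ↦ a J) x ^ e :=
        (setLIntegral_le_lintegral A _).trans (lintegral_mono fun x ↦
          Finset.le_sum_of_subadditive (· ^ e) (ENNReal.zero_rpow_of_pos he).le
            (fun _ _ ↦ ENNReal.rpow_add_le_add_rpow _ _ he.le he1) S _)
    _ = ∑ J ∈ S, ∫⁻ x, J.toSet.indicator (fun _ ↦ a J ^ e) x := by
        rw [lintegral_finsetSum _ fun J _ ↦
          (measurable_const.indicator J.measurableSet_toSet).pow_const e]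
        refine Finset.sum_congr rfl fun J _ ↦ lintegral_congr fun x ↦ ?_
        exact (congrFun (indicator_comp_of_zero (g := (· ^ e))
          (ENNReal.zero_rpow_of_pos he)) x).symm
    _ = ∑ J ∈ S, volume J.toSet * a J ^ e := by
        simp only [lintegral_indicator_const, measurableSet_toSet, mul_comm]

lemma sum_prod_rpow_le {ι κ : Type*} (S : Finset ι) (s : Finset κ) (f : κ → ι → ℝ≥0∞) {p : ℝ}
    (hp : 0 ≤ p) (hs : s.card * p = 1) :
    ∑ J ∈ S, ∏ i ∈ s, f i J ^ p ≤ ∏ i ∈ s, (∑ J ∈ S, f i J) ^ p := by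
  let _ : MeasurableSpace ι := ⊤
  have := ENNReal.lintegral_prod_norm_pow_le (μ := ∑ J ∈ S, Measure.dirac J) s (f := f)
    (p := fun _ ↦ p) (fun i _ ↦ measurable_from_top.aemeasurable) (by simpa using hs)
    fun _ _ ↦ hp
  simpa [lintegral_finsetSum_measure] using this

lemma volume_mul_fractionalCoeff_rpow (hm : m ≠ 0) (g : Fin m → (Fin n → ℝ) → ℝ≥0∞)
    (J : DyadicCube n) :
    volume J.toSet * fractionalCoeff α g J ^ (1 / m : ℝ) =
      (2 ^ J.scale) ^ (α / m) * ∏ i, (∫⁻ y in J.triple, g i y) ^ (1 / m : ℝ) := by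
  have he : (0 : ℝ) ≤ 1 / m := by positivity
  rw [fractionalCoeff, J.volume_toSet, ENNReal.mul_rpow_of_nonneg _ _ he, ← ENNReal.rpow_mul,
    ← mul_assoc, ← ENNReal.rpow_natCast,
    ← ENNReal.rpow_add _ _ (two_zpow_ne_zero _) (two_zpow_ne_top _),
    ENNReal.prod_rpow_of_nonneg he]
  congr 2
  field_simp
  ring

lemma sum_volume_mul_fractionalCoeff_rpow_le (hm : m ≠ 0) {g : Fin m → (Fin n → ℝ) → ℝ≥0∞}
    (hg : ∀ i, Measurable (g i)) {j : ℤ} (hS : ∀ J ∈ S, J.scale = j) (hI : ∀ J ∈ S, J ≤ I) :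
    ∑ J ∈ S, volume J.toSet * fractionalCoeff α g J ^ (1 / m : ℝ) ≤
      (2 ^ j) ^ (α / m) * (4 ^ n * ∏ i, (∫⁻ y in I.triple, g i y) ^ (1 / m : ℝ)) := by
  have he : (0 : ℝ) ≤ 1 / m := by positivity
  calc ∑ J ∈ S, volume J.toSet * fractionalCoeff α g J ^ (1 / m : ℝ)
      = (2 ^ j) ^ (α / m) * ∑ J ∈ S, ∏ i, (∫⁻ y in J.triple, g i y) ^ (1 / m : ℝ) := by
        rw [Finset.mul_sum]
        exact Finset.sum_congr rfl fun J hJ ↦ by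
          rw [volume_mul_fractionalCoeff_rpow hm, hS J hJ]
    _ ≤ (2 ^ j) ^ (α / m) * ∏ i, (4 ^ n * ∫⁻ y in I.triple, g i y) ^ (1 / m : ℝ) :=
        mul_le_mul_right ((sum_prod_rpow_le _ _ _ he (by simp [hm])).trans
          (Finset.prod_le_prod' fun i _ ↦
            ENNReal.rpow_le_rpow (sum_setLIntegral_triple_le hS hI (hg i)) he)) _
    _ = _ := by
        simp only [ENNReal.mul_rpow_of_nonneg _ _ he, Finset.prod_mul_distrib, Finset.prod_const,
          Finset.card_univ, Fintype.card_fin]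
        rw [← ENNReal.rpow_natCast, ← ENNReal.rpow_mul, one_div_mul_cancel (Nat.cast_ne_zero.2 hm),
          ENNReal.rpow_one]

theorem hasLocalSumBound_fractionalCoeff (hm : m ≠ 0) {g : Fin m → (Fin n → ℝ) → ℝ≥0∞}
    (hg : ∀ i, Measurable (g i)) :
    HasLocalSumBound (fractionalCoeff α g) (4 ^ n * geomConst (α / m)) (1 / m) := by
  classical
  intro S I
  have hm1 : (1 : ℝ) ≤ m := Nat.one_le_cast.2 (Nat.one_le_iff_ne_zero.2 hm)
  set R : Finset (DyadicCube n) := {J ∈ S | J ≤ I}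
  have hR (J) (hJ : J ∈ R) : J ≤ I := (Finset.mem_filter.1 hJ).2
  set G := ∏ i, (∫⁻ y in I.triple, g i y) ^ (1 / m : ℝ)
  refine (ENNReal.mul_le_mul_iff_right I.volume_toSet_ne_zero I.volume_toSet_ne_top).1 ?_
  rw [volume_mul_avg]
  calc ∫⁻ x in I.toSet, dyadicSum R (fractionalCoeff α g) x ^ (1 / m : ℝ)
      ≤ ∑ J ∈ R, volume J.toSet * fractionalCoeff α g J ^ (1 / m : ℝ) :=
        setLIntegral_dyadicSum_rpow_le (by positivity) ((div_le_one (by positivity)).2 hm1) _ _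
    _ = ∑ j ∈ R.image scale, ∑ J ∈ R with J.scale = j,
          volume J.toSet * fractionalCoeff α g J ^ (1 / m : ℝ) :=
        (Finset.sum_fiberwise_of_maps_to (fun J ↦ Finset.mem_image_of_mem _) _).symm
    _ ≤ ∑ j ∈ R.image scale, (if j ≤ I.scale then ((2 : ℝ≥0∞) ^ j) ^ (α / m) else 0) *
          (4 ^ n * G) := by
        refine Finset.sum_le_sum fun j hj ↦ ?_
        obtain ⟨J, hJ, rfl⟩ := Finset.mem_image.1 hj
        rw [if_pos (hR J hJ).1]
        exact sum_volume_mul_fractionalCoeff_rpow_le hm hg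
          (fun J' hJ' ↦ (Finset.mem_filter.1 hJ').2) fun J' hJ' ↦ hR J' (Finset.mem_filter.1 hJ').1
    _ ≤ geomConst (α / m) * (2 ^ I.scale) ^ (α / m) * (4 ^ n * G) := by
        rw [← Finset.sum_mul, ← tsum_ite_le_two_zpow_rpow]
        exact mul_le_mul_left (ENNReal.sum_le_tsum _) _
    _ = 4 ^ n * geomConst (α / m) * ((2 ^ I.scale) ^ (α / m) * G) := by ring
    _ = _ := by
        rw [← volume_mul_fractionalCoeff_rpow hm]
        ring

end FractionalCoefficients

section FractionalIntegral

variable {n m : ℕ} {α : ℝ}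

lemma lintegral_fin_prod_eq_prod {m : ℕ} {E : Fin m → Type*} [∀ i, MeasurableSpace (E i)]
    (μ : ∀ i, Measure (E i)) [∀ i, SigmaFinite (μ i)] (g : ∀ i, E i → ℝ≥0∞)
    (hg : ∀ i, Measurable (g i)) :
    ∫⁻ y, ∏ i, g i (y i) ∂Measure.pi μ = ∏ i, ∫⁻ z, g i z ∂μ i := by
  induction m with
  | zero => simp
  | succ m ih =>
    rw [← (measurePreserving_piFinSuccAbove μ 0).symm.lintegral_comp_emb
      (MeasurableEquiv.measurableEmbedding _)]
    simp only [Fin.prod_univ_succ, MeasurableEquiv.piFinSuccAbove_symm_apply, Fin.insertNthEquiv,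
      Equiv.coe_fn_mk, Fin.insertNth_zero, Fin.cons_zero, Fin.cons_succ]
    rw [← ih (fun i : Fin m ↦ μ i.succ) (fun i : Fin m ↦ g i.succ) fun i ↦ hg _]
    exact lintegral_prod_mul (μ := μ 0) (ν := Measure.pi fun i : Fin m ↦ μ i.succ)
      (hg 0).aemeasurable (Finset.measurable_prod _ fun (i : Fin m) _ ↦
        (hg i.succ).comp (measurable_pi_apply i)).aemeasurable

/-- The absolute values `|f_i|`, read in the sup-normed space `Fin n → ℝ` of dyadic cubes. -/
def coordAbs (f : Fin m → ESp n → ℝ) (i : Fin m) (z : Fin n → ℝ) : ℝ≥0∞ :=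
  ‖f i (WithLp.toLp 2 z)‖ₑ

lemma measurable_coordAbs {f : Fin m → ESp n → ℝ} (hf : ∀ i, Measurable (f i)) (i : Fin m) :
    Measurable (coordAbs f i) :=
  ((hf i).comp (MeasurableEquiv.toLp 2 (Fin n → ℝ)).measurable).enorm

lemma setLIntegral_preimage_ofLp (F : ESp n → ℝ≥0∞) (A : Set (Fin n → ℝ)) :
    ∫⁻ x in WithLp.ofLp ⁻¹' A, F x = ∫⁻ z in A, F (WithLp.toLp 2 z) := by
  rw [← (PiLp.volume_preserving_toLp (Fin n)).setLIntegral_comp_preimage_emb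
    (MeasurableEquiv.toLp 2 (Fin n → ℝ)).measurableEmbedding]
  rfl

lemma volume_preimage_ofLp (A : Set (Fin n → ℝ)) :
    volume (WithLp.ofLp ⁻¹' A : Set (ESp n)) = volume A := by
  simpa using setLIntegral_preimage_ofLp (fun _ ↦ 1) A

lemma isCube_preimage_closedBall (c : Fin n → ℝ) {r : ℝ} (hr : 0 < r) :
    IsCube (WithLp.ofLp ⁻¹' Metric.closedBall c r : Set (ESp n)) := by
  refine ⟨fun i ↦ c i - r, 2 * r, by positivity, ?_⟩
  ext x
  simp only [mem_preimage, Metric.mem_closedBall, dist_pi_le_iff hr.le, Real.dist_eq, abs_le,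
    mem_ofPred_eq]
  exact forall_congr' fun i ↦ ⟨fun h ↦ ⟨by linarith, by linarith⟩,
    fun h ↦ ⟨by linarith, by linarith⟩⟩

lemma fractionalCoeff_le_multiMα (hn : n ≠ 0) (hm : m ≠ 0) (f : Fin m → ESp n → ℝ)
    {I : DyadicCube n} {x : ESp n} (hx : x.ofLp ∈ I.toSet) :
    fractionalCoeff α (coordAbs f) I ≤ 3 ^ (m * n - α) * multiMα α f x := by
  set Q : Set (ESp n) := WithLp.ofLp ⁻¹' I.triple
  have hM : ∏ i, (volume Q ^ (1 - α / ((m : ℝ) * (n : ℝ))))⁻¹ *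
      ∫⁻ y in Q, ENNReal.ofReal |f i y| ≤ multiMα α f x :=
    le_iSup₂_of_le Q (isCube_preimage_closedBall _ (by positivity))
      (le_iSup_of_le (I.toSet_subset_triple hx) le_rfl)
  refine le_trans (le_of_eq ?_) (mul_le_mul_right hM _)
  have hvol : ((volume Q ^ (1 - α / ((m : ℝ) * (n : ℝ))))⁻¹) ^ m =
      (3 * 2 ^ I.scale) ^ (α - m * n) := by
    rw [volume_preimage_ofLp, volume_triple, ← ENNReal.rpow_neg, ← ENNReal.rpow_natCast _ n,
      ← ENNReal.rpow_natCast _ m, ← ENNReal.rpow_mul, ← ENNReal.rpow_mul]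
    congr 1
    field_simp
    ring
  simp only [← Real.enorm_eq_ofReal_abs, Q, setLIntegral_preimage_ofLp, Finset.prod_mul_distrib,
    Finset.prod_const, Finset.card_univ, Fintype.card_fin, fractionalCoeff]
  rw [hvol, ENNReal.mul_rpow_of_ne_top ofNat_ne_top (two_zpow_ne_top _), ← mul_assoc, ← mul_assoc,
    ← ENNReal.rpow_add _ _ (by norm_num) ofNat_ne_top, sub_add_sub_cancel, sub_self,
    ENNReal.rpow_zero, one_mul]
  rfl

lemma dyadicSup_fractionalCoeff_le (hn : n ≠ 0) (hm : m ≠ 0) (f : Fin m → ESp n → ℝ)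
    (x : ESp n) :
    dyadicSup univ (fractionalCoeff α (coordAbs f)) x.ofLp ≤
      3 ^ (m * n - α) * multiMα α f x :=
  dyadicSup_le fun _ _ hx ↦ fractionalCoeff_le_multiMα hn hm f hx

lemma ofLp_mem_triple_containing {j : ℤ} {x y : ESp n} (h : dist x y ≤ 2 ^ j) :
    y.ofLp ∈ (containing j x.ofLp).triple := by
  have hyx : dist y.ofLp x.ofLp ≤ 2 ^ j := by
    rw [dist_comm, dist_pi_le_iff (by positivity)]
    intro i
    simpa [dist_eq_norm] using (PiLp.norm_apply_le (x - y) i).trans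
      ((dist_eq_norm x y).symm.trans_le h)
  have hx : dist x.ofLp (containing j x.ofLp).center ≤ 2 ^ j / 2 :=
    Metric.mem_closedBall.1 (toSet_subset_closedBall _ (mem_containing j x.ofLp))
  exact (dist_triangle _ _ _).trans ((add_le_add hyx hx).trans_eq (by
    rw [containing_scale]; ring))

/-- The `m`-linear fractional integral with absolute values inside the integral. Unlike the Bochner
integral `multiIα`, it makes sense (with values in `[0, ∞]`) for all measurable `f`. -/
def multiIαAbs (α : ℝ) (f : Fin m → ESp n → ℝ) (x : ESp n) : ℝ≥0∞ :=
  ∫⁻ y : Fin m → ESp n, ‖(∏ i, f i (y i)) / (∑ i, dist x (y i)) ^ ((m : ℝ) * (n : ℝ) - α)‖ₑ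

lemma ofReal_abs_multiIα_le (α : ℝ) (f : Fin m → ESp n → ℝ) (x : ESp n) :
    ENNReal.ofReal |multiIα α f x| ≤ multiIαAbs α f x :=
  (Real.enorm_eq_ofReal_abs _).symm.trans_le (enorm_integral_le_lintegral_enorm _)

-- Only the scale with `2 ^ (j - 1) < ∑ i, dist x (y i) ≤ 2 ^ j` is used on the right.
lemma enorm_prod_div_rpow_le {β : ℝ} (hβ : 0 < β) (f : Fin m → ESp n → ℝ) (x : ESp n)
    (y : Fin m → ESp n) :
    ‖(∏ i, f i (y i)) / (∑ i, dist x (y i)) ^ β‖ₑ ≤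
      2 ^ β * ∑' j : ℤ, ((2 : ℝ≥0∞) ^ j) ^ (-β) *
        ∏ i, (WithLp.ofLp ⁻¹' (containing j x.ofLp).triple).indicator (fun z ↦ ‖f i z‖ₑ) (y i) := by
  set s := ∑ i, dist x (y i)
  have hs0 : 0 ≤ s := Finset.sum_nonneg fun i _ ↦ dist_nonneg
  rcases hs0.eq_or_lt with hzero | hpos
  · simp [← hzero, Real.zero_rpow hβ.ne']
  obtain ⟨k, hk, hk'⟩ := exists_mem_Ioc_zpow hpos one_lt_two
  have hmem (i) : y i ∈ WithLp.ofLp ⁻¹' (containing (k + 1) x.ofLp).triple :=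
    ofLp_mem_triple_containing ((Finset.single_le_sum (f := fun i ↦ dist x (y i))
      (fun i _ ↦ dist_nonneg) (Finset.mem_univ i)).trans hk')
  refine le_trans ?_ (mul_le_mul_right (ENNReal.le_tsum (k + 1)) _)
  simp only [indicator_of_mem (hmem _)]
  have hkernel : ‖(s ^ β)⁻¹‖ₑ ≤ 2 ^ β * ((2 : ℝ≥0∞) ^ (k + 1)) ^ (-β) := by
    calc ‖(s ^ β)⁻¹‖ₑ = (ENNReal.ofReal s ^ β)⁻¹ := by
          rw [Real.enorm_of_nonneg (by positivity), ENNReal.ofReal_inv_of_pos (by positivity),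
            ENNReal.ofReal_rpow_of_pos hpos]
      _ ≤ ((2 ^ k) ^ β)⁻¹ := by
          rw [← ofReal_two_zpow]
          gcongr
      _ = 2 ^ β * ((2 : ℝ≥0∞) ^ (k + 1)) ^ (-β) := by
          rw [ENNReal.zpow_add two_ne_zero ofNat_ne_top, zpow_one,
            ENNReal.mul_rpow_of_ne_top (two_zpow_ne_top k) ofNat_ne_top, mul_left_comm,
            rpow_mul_rpow_neg two_ne_zero ofNat_ne_top, mul_one, ENNReal.rpow_neg]
  have hprod : ‖∏ i, f i (y i)‖ₑ = ∏ i, ‖f i (y i)‖ₑ := by simp [enorm, nnnorm_prod]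
  rw [div_eq_mul_inv, enorm_mul, hprod, mul_comm, ← mul_assoc]
  exact mul_le_mul_left hkernel _

theorem multiIαAbs_le_tsum (hα : α < m * n) {f : Fin m → ESp n → ℝ} (hf : ∀ i, Measurable (f i))
    (x : ESp n) :
    multiIαAbs α f x ≤ 2 ^ (m * n - α) * ∑' I : DyadicCube n,
      I.toSet.indicator (fun _ ↦ fractionalCoeff α (coordAbs f) I) x.ofLp := by
  set T : ℤ → Set (ESp n) := fun j ↦ WithLp.ofLp ⁻¹' (containing j x.ofLp).triple
  have hT (j) : MeasurableSet (T j) :=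
    (MeasurableEquiv.toLp 2 (Fin n → ℝ)).symm.measurable (measurableSet_triple _)
  have hfT (j) (i) : Measurable ((T j).indicator fun z ↦ ‖f i z‖ₑ) := (hf i).enorm.indicator (hT j)
  have hprod (j) : Measurable fun y : Fin m → ESp n ↦
      ∏ i, (T j).indicator (fun z ↦ ‖f i z‖ₑ) (y i) :=
    Finset.measurable_prod _ fun i _ ↦ (hfT j i).comp (measurable_pi_apply i)
  calc multiIαAbs α f x
      ≤ ∫⁻ y : Fin m → ESp n, 2 ^ (m * n - α) * ∑' j : ℤ, ((2 : ℝ≥0∞) ^ j) ^ (-(m * n - α)) *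
          ∏ i, (T j).indicator (fun z ↦ ‖f i z‖ₑ) (y i) :=
        lintegral_mono (enorm_prod_div_rpow_le (sub_pos.2 hα) f x)
    _ = 2 ^ (m * n - α) * ∑' j : ℤ, ((2 : ℝ≥0∞) ^ j) ^ (-(m * n - α)) *
          ∏ i, ∫⁻ z in T j, ‖f i z‖ₑ := by
        rw [lintegral_const_mul _ (by fun_prop),
          lintegral_tsum fun j ↦ ((hprod j).const_mul _).aemeasurable]
        congr! 3 with j
        rw [lintegral_const_mul _ (hprod j), volume_pi, lintegral_fin_prod_eq_prod _ _ (hfT j)]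
        simp only [lintegral_indicator (hT j)]
    _ = 2 ^ (m * n - α) * ∑' j : ℤ, (containing j x.ofLp).toSet.indicator
          (fun _ ↦ fractionalCoeff α (coordAbs f) (containing j x.ofLp)) x.ofLp := by
        simp only [indicator_of_mem (mem_containing _ _), T, setLIntegral_preimage_ofLp, neg_sub]
        rfl
    _ ≤ _ := mul_le_mul_right (ENNReal.tsum_comp_le_tsum_of_injective
        (fun _ _ h ↦ congrArg scale h) fun I : DyadicCube n ↦
          I.toSet.indicator (fun _ ↦ fractionalCoeff α (coordAbs f) I) x.ofLp) _

end FractionalIntegral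

/-! ### Transfer of the weights to the dyadic setting -/

section Weights

variable {n m : ℕ} {I : DyadicCube n} {C : ℝ≥0∞} {q : ℝ} {v w : ESp n → ℝ}

lemma ae_restrict_toLp {P : ESp n → Prop} {A : Set (Fin n → ℝ)}
    (h : ∀ᵐ x ∂volume.restrict (WithLp.ofLp ⁻¹' A), P x) :
    ∀ᵐ z ∂volume.restrict A, P (WithLp.toLp 2 z) :=
  ((PiLp.volume_preserving_toLp (Fin n)).restrict_preimage_emb
    (MeasurableEquiv.toLp 2 (Fin n → ℝ)).measurableEmbedding _).quasiMeasurePreserving.ae h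

lemma ae_toLp {P : ESp n → Prop} (h : ∀ᵐ x, P x) : ∀ᵐ z : Fin n → ℝ, P (WithLp.toLp 2 z) :=
  (PiLp.volume_preserving_toLp (Fin n)).quasiMeasurePreserving.ae h

/-- The closure of a dyadic cube, as a cube of Euclidean space. -/
def DyadicCube.euclidean (I : DyadicCube n) : Set (ESp n) :=
  WithLp.ofLp ⁻¹' Metric.closedBall I.center (2 ^ I.scale / 2)

namespace DyadicCube

lemma isCube_euclidean (I : DyadicCube n) : IsCube I.euclidean :=
  isCube_preimage_closedBall _ (by positivity)

lemma avg_toLp (I : DyadicCube n) (F : ESp n → ℝ≥0∞) :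
    I.avg (fun z ↦ F (WithLp.toLp 2 z)) = (volume I.euclidean)⁻¹ * ∫⁻ x in I.euclidean, F x := by
  rw [avg_eq, euclidean, setLIntegral_preimage_ofLp, volume_preimage_ofLp,
    setLIntegral_congr I.toSet_ae_eq_closedBall, measure_congr I.toSet_ae_eq_closedBall]

lemma ae_restrict_toSet_toLp {P : ESp n → Prop} (h : ∀ᵐ x ∂volume.restrict I.euclidean, P x) :
    ∀ᵐ z ∂volume.restrict I.toSet, P (WithLp.toLp 2 z) := by
  rw [Measure.restrict_congr_set I.toSet_ae_eq_closedBall]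
  exact ae_restrict_toLp h

end DyadicCube

/-- The weight `w`, read in the sup-normed space `Fin n → ℝ` of dyadic cubes. -/
def coordWeight (w : ESp n → ℝ) (z : Fin n → ℝ) : ℝ≥0∞ := ENNReal.ofReal (w (WithLp.toLp 2 z))

lemma measurable_coordWeight (hw : Measurable w) : Measurable (coordWeight w) :=
  (hw.comp (MeasurableEquiv.toLp 2 (Fin n → ℝ)).measurable).ennreal_ofReal

lemma coordWeight_ne_top (w : ESp n → ℝ) (z : Fin n → ℝ) : coordWeight w z ≠ ⊤ := ofReal_ne_top

lemma ae_coordWeight_ne_zero (hw : ∀ᵐ x, 0 < w x) : ∀ᵐ z, coordWeight w z ≠ 0 :=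
  (ae_toLp hw).mono fun _ hz ↦ (ENNReal.ofReal_pos.2 hz).ne'

lemma A1Const.dyadicA1 (h : A1Const w C) : DyadicA1 (coordWeight w) C := by
  intro I
  filter_upwards [I.ae_restrict_toSet_toLp
    (ae_essInf_le (f := fun x ↦ ENNReal.ofReal (w x)))] with z hz
  calc I.avg (coordWeight w)
      = (volume I.euclidean)⁻¹ * wMeas w I.euclidean := I.avg_toLp fun x ↦ ENNReal.ofReal (w x)
    _ ≤ C * essInf (fun x ↦ ENNReal.ofReal (w x)) (volume.restrict I.euclidean) :=
        h _ I.isCube_euclidean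
    _ ≤ C * coordWeight w z := mul_le_mul_right hz C

lemma DyadicA1.avg_mul_avg_inv_le {f : (Fin n → ℝ) → ℝ≥0∞} (h : DyadicA1 f C)
    (I : DyadicCube n) : I.avg f * I.avg (fun x ↦ (f x)⁻¹) ≤ C :=
  calc I.avg f * I.avg (fun x ↦ (f x)⁻¹)
      ≤ I.avg fun x ↦ I.avg f * (f x)⁻¹ := lintegral_const_mul_le _ _
    _ ≤ I.avg fun _ ↦ C := lintegral_mono_ae <| ae_unif_iff.2 <| (h I).mono fun _ hx ↦
        ENNReal.div_le_of_le_mul hx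
    _ = C := by simp

lemma IsAinfty.exists_avg_mul_avg_le (h : IsAinfty w) :
    ∃ κ : ℝ, 0 < κ ∧ ∃ C : ℝ≥0∞, C ≠ ⊤ ∧ ∀ I : DyadicCube n,
      I.avg (coordWeight w) * I.avg (fun z ↦ coordWeight w z ^ (-κ)) ^ (1 / κ) ≤ C := by
  rcases h with ⟨C, hC, hA1⟩ | ⟨p, hp, C, hC, hAp⟩
  · refine ⟨1, one_pos, C, hC.ne, fun I ↦ ?_⟩
    simpa only [div_one, ENNReal.rpow_one, ENNReal.rpow_neg_one] using
      hA1.dyadicA1.avg_mul_avg_inv_le I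
  · have hp1 : 0 < p - 1 := sub_pos.2 hp
    have hexp : 1 - p / (p - 1) = -(p - 1)⁻¹ := by
      field_simp
      ring
    refine ⟨(p - 1)⁻¹, inv_pos.2 hp1, C, hC.ne, fun I ↦ ?_⟩
    have hI := hAp _ I.isCube_euclidean
    rw [wMeas, ← I.avg_toLp, ← I.avg_toLp, hexp] at hI
    rwa [one_div, inv_inv]

lemma A11.exists_dyadicA1 (hm : m ≠ 0) {w : Fin m → ESp n → ℝ} (hw : ∀ i x, 0 ≤ w i x)
    (h : A11 w) :
    ∃ C : ℝ≥0∞, C ≠ ⊤ ∧ DyadicA1 (coordWeight fun x ↦ ∏ i, w i x ^ (m : ℝ)⁻¹) C := by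
  obtain ⟨C, hC, hA⟩ := h
  have hm0 : (0 : ℝ) < m := Nat.cast_pos.2 (Nat.pos_of_ne_zero hm)
  refine ⟨C ^ (m : ℝ)⁻¹, ENNReal.rpow_ne_top_of_nonneg (by positivity) hC.ne, fun I ↦ ?_⟩
  have hinf (i) := I.ae_restrict_toSet_toLp
    (ae_essInf_le (f := fun x ↦ ENNReal.ofReal (w i x)) (μ := volume.restrict I.euclidean))
  filter_upwards [ae_all_iff.2 hinf] with z hz
  set ν := coordWeight fun x ↦ ∏ i, w i x ^ (m : ℝ)⁻¹
  have hν : ν z = (∏ i, coordWeight (w i) z) ^ (m : ℝ)⁻¹ := by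
    simp only [ν, coordWeight]
    rw [← ENNReal.ofReal_prod_of_nonneg fun i _ ↦ hw i _, Real.finsetProd_rpow _ _ fun i _ ↦ hw i _,
      ENNReal.ofReal_rpow_of_nonneg (Finset.prod_nonneg fun i _ ↦ hw i _) (by positivity)]
  have havg : I.avg ν ^ (m : ℝ) * (∏ i, coordWeight (w i) z)⁻¹ ≤ C :=
    calc I.avg ν ^ (m : ℝ) * (∏ i, coordWeight (w i) z)⁻¹
        = I.avg ν ^ (m : ℝ) * ∏ i, (coordWeight (w i) z)⁻¹ := by
          rw [ENNReal.prod_inv_distrib fun i _ j _ _ ↦ .inr (coordWeight_ne_top _ _)]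
      _ ≤ I.avg ν ^ (m : ℝ) * ∏ i, (essInf (fun x ↦ ENNReal.ofReal (w i x))
            (volume.restrict I.euclidean))⁻¹ :=
          mul_le_mul_right (Finset.prod_le_prod' fun i _ ↦ ENNReal.inv_le_inv.2 (hz i)) _
      _ ≤ C := by
          have hI := hA _ I.isCube_euclidean
          rwa [← I.avg_toLp] at hI
  rw [← div_eq_mul_inv, ENNReal.div_le_iff_le_mul (.inr hC.ne)
    (.inl (ENNReal.prod_ne_top fun i _ ↦ coordWeight_ne_top _ _))] at havg
  rwa [hν, ← ENNReal.mul_rpow_of_nonneg _ _ (by positivity), ENNReal.le_rpow_inv_iff hm0]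

lemma exists_dyadicWeightPair (hm : m ≠ 0) {u : Fin m → ESp n → ℝ} (hu : ∀ i, IsWeight (u i))
    (hv : IsWeight v) (hA : A11 fun i x ↦ u i x ^ ((m : ℝ) * q))
    (hAinf : IsAinfty fun x ↦ v x ^ q) :
    ∃ C s κ, DyadicWeightPair (coordWeight fun x ↦ ∏ i, u i x ^ q) (coordWeight fun x ↦ v x ^ q)
      C s κ := by
  have hpow (x) : ∏ i, (u i x ^ ((m : ℝ) * q)) ^ (m : ℝ)⁻¹ = ∏ i, u i x ^ q :=
    Finset.prod_congr rfl fun i _ ↦ by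
      rw [← Real.rpow_mul ((hu i).2.1 x), mul_right_comm,
        mul_inv_cancel₀ (Nat.cast_ne_zero.2 hm), one_mul]
  obtain ⟨κ, hκ, C₁, hC₁, hV⟩ := hAinf.exists_avg_mul_avg_le
  obtain ⟨C₂, hC₂, hν⟩ := hA.exists_dyadicA1 hm fun i x ↦ Real.rpow_nonneg ((hu i).2.1 x) _
  simp only [hpow] at hν
  have hνmeas : Measurable (coordWeight fun x ↦ ∏ i, u i x ^ q) :=
    measurable_coordWeight (Finset.measurable_prod _ fun i _ ↦ (hu i).1.pow_const q)
  have hνpos : ∀ᵐ x, 0 < ∏ i, u i x ^ q := by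
    filter_upwards [ae_all_iff.2 fun i ↦ (hu i).2.2.1] with x hx
    exact Finset.prod_pos fun i _ ↦ Real.rpow_pos_of_pos (hx i) q
  obtain ⟨s, hs, C₃, hC₃, hrev⟩ := hν.exists_avg_rpow_le hC₂ hνmeas
  exact
  ⟨C₁ + C₂ + C₃, s, κ,
  { measurable_left := hνmeas
    measurable_right := measurable_coordWeight (hv.1.pow_const q)
    left_ne_top := coordWeight_ne_top _
    right_ne_top := coordWeight_ne_top _
    left_ne_zero := ae_coordWeight_ne_zero hνpos
    right_ne_zero := ae_coordWeight_ne_zero (hv.2.2.1.mono fun x hx ↦ Real.rpow_pos_of_pos hx q)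
    dyadicA1 := fun I ↦ (hν I).mono fun z hz ↦
      hz.trans (mul_le_mul_left (le_add_self.trans le_self_add) _)
    one_lt := hs
    avg_rpow_le := fun I ↦ (hrev I).trans (mul_le_mul_left le_add_self _)
    pos := hκ
    avg_mul_avg_le := fun I ↦ (hV I).trans (le_self_add.trans le_self_add)
    const_ne_top := by finiteness }⟩

end Weights

section MixedWeakNorm

variable {n m : ℕ} {α q : ℝ} {v p : ESp n → ℝ}

lemma wMeas_lt_div_eq (hq : 0 < q) (hv0 : ∀ x, 0 ≤ v x) (hv : ∀ᵐ x, 0 < v x) (hp : ∀ x, 0 ≤ p x)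
    (G : ESp n → ℝ≥0∞) (t : ℝ≥0∞) :
    wMeas (fun x ↦ p x * v x ^ q) {x | t < G x / ENNReal.ofReal (v x)} =
      (volume.withDensity fun z ↦ coordWeight p z * coordWeight (fun x ↦ v x ^ q) z)
        {z | t ^ q * coordWeight (fun x ↦ v x ^ q) z < G (WithLp.toLp 2 z) ^ q} := by
  rw [wMeas, withDensity_apply']
  refine (setLIntegral_preimage_ofLp _
    {z | t < G (WithLp.toLp 2 z) / ENNReal.ofReal (v (WithLp.toLp 2 z))}).trans ?_
  simp only [ENNReal.ofReal_mul (hp _)]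
  refine setLIntegral_congr ?_
  filter_upwards [ae_toLp hv] with z hz
  refine propext (?_ : t < _ / _ ↔ t ^ q * _ < _)
  rw [coordWeight, ← ENNReal.ofReal_rpow_of_nonneg (hv0 _) hq.le,
    ← ENNReal.mul_rpow_of_nonneg _ _ hq.le, ENNReal.rpow_lt_rpow_iff hq,
    ENNReal.lt_div_iff_mul_lt (.inl (ENNReal.ofReal_pos.2 hz).ne') (.inl ofReal_ne_top)]

lemma wnorm_div_le_iff_hasWeakBound (hq : 0 < q) (hv0 : ∀ x, 0 ≤ v x) (hv : ∀ᵐ x, 0 < v x)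
    (hp : ∀ x, 0 ≤ p x) (G : ESp n → ℝ≥0∞) (N : ℝ≥0∞) :
    wnorm (fun x ↦ G x / ENNReal.ofReal (v x)) q (fun x ↦ p x * v x ^ q) ≤ N ↔
      HasWeakBound (volume.withDensity fun z ↦ coordWeight p z * coordWeight (fun x ↦ v x ^ q) z)
        (coordWeight fun x ↦ v x ^ q) (fun z ↦ G (WithLp.toLp 2 z) ^ q) (N ^ q) := by
  have hrpow (a b : ℝ≥0∞) : a * b ^ (1 / q) ≤ N ↔ a ^ q * b ≤ N ^ q := by
    rw [← ENNReal.rpow_le_rpow_iff hq, ENNReal.mul_rpow_of_nonneg _ _ hq.le, ← ENNReal.rpow_mul,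
      one_div_mul_cancel hq.ne', ENNReal.rpow_one]
  simp only [wnorm, iSup₂_le_iff, hrpow, wMeas_lt_div_eq hq hv0 hv hp]
  constructor
  · intro h s hs0 hs
    have hroot : s ^ q⁻¹ ≠ ⊤ := ENNReal.rpow_ne_top_of_nonneg (by positivity) hs
    have hroot0 : s ^ q⁻¹ ≠ 0 := (ENNReal.rpow_pos (pos_iff_ne_zero.2 hs0) hs).ne'
    have hbound := h _ (ENNReal.toReal_pos hroot0 hroot)
    rwa [ENNReal.ofReal_toReal hroot, ENNReal.rpow_inv_rpow hq.ne'] at hbound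
  · exact fun h t ht ↦ h _ (ENNReal.rpow_pos (ENNReal.ofReal_pos.2 ht) ofReal_ne_top).ne'
      (ENNReal.rpow_ne_top_of_nonneg hq.le ofReal_ne_top)

lemma wnorm_mono {g h : ESp n → ℝ≥0∞} (hgh : ∀ x, g x ≤ h x) (hq : 0 ≤ q) (w : ESp n → ℝ) :
    wnorm g q w ≤ wnorm h q w :=
  iSup₂_mono fun _ _ ↦ mul_le_mul_right (ENNReal.rpow_le_rpow (lintegral_mono_set
    fun x (hx : _ < g x) ↦ hx.trans_le (hgh x)) (by positivity)) _

theorem extrapolation_Ialpha_le_Malpha_general (hα0 : 0 < α) (hα : α < (m : ℝ) * (n : ℝ))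
    (hq : 0 < q) {u : Fin m → ESp n → ℝ} (hu : ∀ i, IsWeight (u i)) (hv : IsWeight v)
    (hA : A11 fun i x ↦ u i x ^ ((m : ℝ) * q)) (hAinf : IsAinfty fun x ↦ v x ^ q) :
    ∃ C : ℝ≥0∞, C < ⊤ ∧ ∀ f : Fin m → ESp n → ℝ, (∀ i, Measurable (f i)) →
      wnorm (fun x ↦ multiIαAbs α f x / ENNReal.ofReal (v x)) q
          (fun x ↦ (∏ i, u i x ^ q) * v x ^ q)
        ≤ C * wnorm (fun x ↦ multiMα α f x / ENNReal.ofReal (v x)) q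
            (fun x ↦ (∏ i, u i x ^ q) * v x ^ q) := by
  have hmn : (m : ℝ) * n ≠ 0 := (hα0.trans hα).ne'
  obtain ⟨hm, hn⟩ : m ≠ 0 ∧ n ≠ 0 := by simpa using hmn
  obtain ⟨C, s, κ, hpair⟩ := exists_dyadicWeightPair hm hu hv hA hAinf
  obtain ⟨K, hK, hweak⟩ := hpair.exists_hasWeakBound_tsum (e := 1 / m)
    (L := 4 ^ n * geomConst (α / m)) (by positivity) hq
    (ENNReal.mul_ne_top (by finiteness) (geomConst_lt_top (by positivity)).ne)
  set c₂ : ℝ≥0∞ := (2 ^ (m * n - α)) ^ q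
  set c₃ : ℝ≥0∞ := (3 ^ (m * n - α)) ^ q
  have hc₂ : c₂ ≠ ⊤ := by finiteness
  have hc₃ : c₃ ≠ ⊤ := by finiteness
  have hp (x) : 0 ≤ ∏ i, u i x ^ q := Finset.prod_nonneg fun i _ ↦ Real.rpow_nonneg ((hu i).2.1 x) q
  refine ⟨(c₂ * (K * c₃)) ^ q⁻¹, by finiteness, fun f hf ↦ ?_⟩
  set N := wnorm (fun x ↦ multiMα α f x / ENNReal.ofReal (v x)) q
    fun x ↦ (∏ i, u i x ^ q) * v x ^ q
  have hM := (wnorm_div_le_iff_hasWeakBound hq hv.2.1 hv.2.2.1 hp (multiMα α f) N).1 le_rfl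
  have hsup := (hM.const_mul (c := c₃) (by positivity) hc₃).mono_fun
    (G := fun z ↦ dyadicSup univ (fractionalCoeff α (coordAbs f)) z ^ q) fun z ↦ by
      rw [← ENNReal.mul_rpow_of_nonneg _ _ hq.le]
      exact ENNReal.rpow_le_rpow (dyadicSup_fractionalCoeff_le hn hm f (WithLp.toLp 2 z)) hq.le
  have hsum := hweak _ (hasLocalSumBound_fractionalCoeff hm (measurable_coordAbs hf)) _ hsup
  rw [wnorm_div_le_iff_hasWeakBound hq hv.2.1 hv.2.2.1 hp,
    ENNReal.mul_rpow_of_nonneg _ _ hq.le, ENNReal.rpow_inv_rpow hq.ne', mul_assoc, mul_assoc]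
  refine (hsum.const_mul (c := c₂) (by positivity) hc₂).mono_fun fun z ↦ ?_
  rw [← ENNReal.mul_rpow_of_nonneg _ _ hq.le]
  exact ENNReal.rpow_le_rpow (multiIαAbs_le_tsum hα hf (WithLp.toLp 2 z)) hq.le

end MixedWeakNorm

/-- **Extrapolation: `𝓘_α` controlled by `𝓜_α` in the mixed weak norm.**  Let
`0 < α < mn`, `q = n/(mn-α)`, `u⃗^{mq} ∈ A_{(1,…,1)}`, `v^q ∈ A_∞`, `ν = ∏ uᵢ^q`.
Then there is `C` such that for all `f⃗` bounded with compact support,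
`‖𝓘_α(f⃗)/v‖_{L^{q,∞}(ν v^q)} ≤ C ‖𝓜_α(f⃗)/v‖_{L^{q,∞}(ν v^q)}`. -/
theorem extrapolation_Ialpha_le_Malpha {n m : ℕ} (hn : 0 < n) (hm : 0 < m)
    (α q : ℝ) (hα0 : 0 < α) (hα : α < (m : ℝ) * (n : ℝ))
    (hq : q = (n : ℝ) / ((m : ℝ) * (n : ℝ) - α))
    (u : Fin m → ESp n → ℝ) (v : ESp n → ℝ)
    (hu : ∀ i, IsWeight (u i)) (hv : IsWeight v)
    (hA : A11 (fun i x => u i x ^ ((m : ℝ) * q)))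
    (hAinf : IsAinfty (fun x => v x ^ q)) :
    ∃ C : ℝ≥0∞, C < ⊤ ∧
      ∀ f : Fin m → ESp n → ℝ, (∀ i, Measurable (f i)) →
        (∀ i, ∃ B : ℝ, ∀ x, |f i x| ≤ B) → (∀ i, HasCompactSupport (f i)) →
        wnorm (fun x => ENNReal.ofReal |multiIα α f x| / ENNReal.ofReal (v x)) q
            (fun x => (∏ i, u i x ^ q) * v x ^ q)
          ≤ C * wnorm (fun x => multiMα α f x / ENNReal.ofReal (v x)) q
              (fun x => (∏ i, u i x ^ q) * v x ^ q) := by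
  have hq0 : 0 < q := hq ▸ div_pos (Nat.cast_pos.2 hn) (sub_pos.2 hα)
  obtain ⟨C, hC, hle⟩ := extrapolation_Ialpha_le_Malpha_general hα0 hα hq0 hu hv hA hAinf
  exact ⟨C, hC, fun f hf _ _ ↦ (wnorm_mono
    (fun x ↦ ENNReal.div_le_div_right (ofReal_abs_multiIα_le α f x) _) hq0.le _).trans (hle f hf)⟩

end
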